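/- arXiv:2012.15319 — 3 statements merged into one kernel-verified Lean document; each statement's English description precedes it below -/
import Mathlib

section
/- Let q be an odd prime power and ℓ an odd prime not dividing q. Let f₁,…,f_{ℓ−1} ∈ 𝔽_q[x] be pairwise coprime squarefree polynomials of degrees d₁,…,d_{ℓ−1}, set d = d₁+⋯+d_{ℓ−1}, and assume d ≥ 1, that ∑_{i=1}^{ℓ−1} i·d_i ≡ 0 (mod ℓ), and that the product ∏_{i=1}^{ℓ−1} f_i^i is not equal to a unit times a power of a single irreducible polynomial. For each i let F_i(u,v) = v^{d_i}·f_i(u/v) ∈ 𝔽_q[u,v] be the degree-d_i homogenization of f_i. Then for every ε > 0 there exist a real constant B > 0 and a natural number N such that for every integer n > N, the number of (ℓ−1)-tuples (D₁,…,D_{ℓ−1}) of pairwise coprime squarefree polynomials in 𝔽_q[t] with ∑_{i} deg D_i ≤ n for which there exist u, v ∈ 𝔽_q[t] with D_i = F_i(u,v) for every i, is at least B · q^{(2n/d) − ε}. -/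
open Polynomial

/-!
Write `f = ∏ f i`, of degree `d`, and let `F` be its homogenization. The pairs used are
`(u, v) = (1 + Q X ^ M + Q a, Q b)` with `deg a, deg b < M`, where `Q` is a `p`-th power divisible
by every prime of degree at most `8 d`: then `F(u, v)` is a unit modulo the small primes, and
multiplication by `Q` commutes with differentiation.

A positive proportion of these pairs makes `F(u, v)` squarefree. Squares of primes of degree at most
`M / 2` are excluded by a union bound. If `P ^ 2` divides `F(u, v)` for a prime `P` of larger
degree, then `P` also divides `F(u', v')`. This polynomial depends only on the derivatives of `a`
and `b` and, when nonzero, has boundedly many such prime factors; once the derivative of `a` is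
fixed, each of them divides `F(u, v)` for at most `d` values of `a`.

Few pairs have the same value `h = F(u, v)`. By Markov's inequality the primes of degree at most
`M / (8 d)` account for at most `deg u` of the degree `d deg u` of `h`, for most pairs. For `d ≥ 3`
the remaining primes, boundedly many, have total degree at least `2 deg u`, so the residues of
`u / v` modulo them determine `(u, v)`; each residue is one of at most `d` roots of `f`. When two of
the `f i` are linear, `(u, v)` is the solution of a linear system. The congruence modulo `ℓ` leaves
only these two cases.
-/

namespace SuperellipticCount

open scoped Classical

/-! ### Polynomials of bounded degree over a finite field -/

lemma card_image_le_natDegree_of_map_eval_eq_zero {A B : Type*} [CommRing A] [CommRing B]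
    [IsDomain B] (φ : A →+* B) {h : A[X]} (hlead : φ h.leadingCoeff ≠ 0) {T : Finset A}
    (hT : ∀ x ∈ T, φ (h.eval x) = 0) : (T.image φ).card ≤ h.natDegree := by
  have hmap : h.map φ ≠ 0 := fun h0 => hlead <| by
    simpa using congrArg (fun r => r.coeff h.natDegree) h0
  refine (card_le_degree_of_subset_roots (p := h.map φ) fun y hy => ?_).trans natDegree_map_le
  obtain ⟨x, hx, rfl⟩ := Finset.mem_image.1 hy
  rw [mem_roots hmap, IsRoot.def, eval_map_apply, hT x hx]

section FiniteField

variable {K : Type*} [Field K] [Finite K] {M : ℕ}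

lemma finite_setOf_degree_lt (K : Type*) [Field K] [Finite K] (M : ℕ) :
    {a : K[X] | a.degree < M}.Finite := by
  have : Finite (degreeLT K M) := Finite.of_equiv _ (degreeLTEquiv K M).symm.toEquiv
  exact (Set.toFinite (degreeLT K M : Set K[X])).subset fun a ha => mem_degreeLT.2 ha

/-- The set of polynomials of degree less than `M`, as a finset. -/
noncomputable def polysDegreeLT (K : Type*) [Field K] [Finite K] (M : ℕ) : Finset K[X] :=
  (finite_setOf_degree_lt K M).toFinset

@[simp]
lemma mem_polysDegreeLT {a : K[X]} : a ∈ polysDegreeLT K M ↔ a.degree < M := by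
  simp [polysDegreeLT]

lemma mem_polysDegreeLT_iff_natDegree_lt {a : K[X]} (ha : a ≠ 0) :
    a ∈ polysDegreeLT K M ↔ a.natDegree < M := by
  rw [mem_polysDegreeLT, natDegree_lt_iff_degree_lt ha]

lemma card_polysDegreeLT (K : Type*) [Field K] [Finite K] (M : ℕ) :
    (polysDegreeLT K M).card = Nat.card K ^ M := by
  have hset : (polysDegreeLT K M : Set K[X]) = degreeLT K M := by
    ext a; simp [mem_degreeLT]
  rw [← Set.ncard_coe_finset, hset, ← Nat.card_coe_set_eq]
  exact (Nat.card_congr (degreeLTEquiv K M).toEquiv).trans (by simp [Nat.card_fun])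

lemma sub_mem_polysDegreeLT {a b : K[X]} (ha : a ∈ polysDegreeLT K M)
    (hb : b ∈ polysDegreeLT K M) : a - b ∈ polysDegreeLT K M := by
  rw [mem_polysDegreeLT] at *
  exact (degree_sub_le _ _).trans_lt (max_lt ha hb)

lemma add_mem_polysDegreeLT {a b : K[X]} (ha : a ∈ polysDegreeLT K M)
    (hb : b ∈ polysDegreeLT K M) : a + b ∈ polysDegreeLT K M := by
  rw [mem_polysDegreeLT] at *
  exact (degree_add_le _ _).trans_lt (max_lt ha hb)

lemma card_le_of_forall_dvd_sub {g : K[X]} (hg : g ≠ 0) {T : Finset K[X]}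
    (hT : T ⊆ polysDegreeLT K M) (h : ∀ a ∈ T, ∀ b ∈ T, g ∣ a - b) :
    T.card ≤ Nat.card K ^ (M - g.natDegree) := by
  obtain rfl | ⟨b, hb⟩ := T.eq_empty_or_nonempty
  · simp
  have hsub : T ⊆ (polysDegreeLT K (M - g.natDegree)).image fun z => b + g * z := by
    intro a ha
    obtain ⟨z, hz⟩ := h a ha b hb
    refine Finset.mem_image.2 ⟨z, ?_, by rw [← hz]; ring⟩
    have hdeg := mem_polysDegreeLT.1 (sub_mem_polysDegreeLT (hT ha) (hT hb))
    rcases eq_or_ne z 0 with rfl | hz0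
    · simp
    · rw [hz, ← natDegree_lt_iff_degree_lt (mul_ne_zero hg hz0), natDegree_mul hg hz0] at hdeg
      exact (mem_polysDegreeLT_iff_natDegree_lt hz0).2 (by omega)
  calc T.card ≤ _ := Finset.card_le_card hsub
    _ ≤ (polysDegreeLT K (M - g.natDegree)).card := Finset.card_image_le
    _ = Nat.card K ^ (M - g.natDegree) := card_polysDegreeLT K _

lemma expand_mem_polysDegreeLT {p N : ℕ} (hp : 0 < p) {z : K[X]} :
    expand K p z ∈ polysDegreeLT K (p * N) ↔ z ∈ polysDegreeLT K N := by
  rcases eq_or_ne z 0 with rfl | hz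
  · simp only [map_zero, mem_polysDegreeLT, degree_zero, WithBot.bot_lt_natCast]
  · rw [mem_polysDegreeLT_iff_natDegree_lt hz,
      mem_polysDegreeLT_iff_natDegree_lt ((expand_ne_zero hp).2 hz), natDegree_expand, mul_comm,
      Nat.mul_lt_mul_left hp]

section Derivative

variable {p : ℕ} [CharP K p] [Fact p.Prime]

lemma card_filter_derivative_eq {N : ℕ} {a₀ : K[X]} (ha₀ : a₀ ∈ polysDegreeLT K (p * N)) :
    {a ∈ polysDegreeLT K (p * N) | derivative a = derivative a₀}.card = Nat.card K ^ N := by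
  have hp : p.Prime := Fact.out
  rw [← card_polysDegreeLT K N, eq_comm]
  refine Finset.card_bij (fun z _ => a₀ + expand K p z) (fun z hz => ?_) (fun y _ z _ hyz => ?_)
    (fun a ha => ?_)
  · exact Finset.mem_filter.2 ⟨add_mem_polysDegreeLT ha₀ ((expand_mem_polysDegreeLT hp.pos).2 hz),
      by rw [derivative_add, derivative_expand, CharP.cast_eq_zero, zero_mul, mul_zero, add_zero]⟩
  · exact expand_injective hp.pos (add_left_cancel hyz)
  · obtain ⟨ha, hda⟩ := Finset.mem_filter.1 ha
    have hz : expand K p (contract p (a - a₀)) = a - a₀ :=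
      expand_contract p (by rw [derivative_sub, hda, sub_self]) hp.ne_zero
    refine ⟨contract p (a - a₀), ?_, by rw [hz]; ring⟩
    rw [← expand_mem_polysDegreeLT hp.pos, hz]
    exact sub_mem_polysDegreeLT ha ha₀

lemma card_filter_derivative_le (N : ℕ) (c : K[X]) :
    {a ∈ polysDegreeLT K (p * N) | derivative a = c}.card ≤ Nat.card K ^ N := by
  obtain h | ⟨a₀, ha₀⟩ :=
    {a ∈ polysDegreeLT K (p * N) | derivative a = c}.eq_empty_or_nonempty
  · simp [h]
  · obtain ⟨hmem, rfl⟩ := Finset.mem_filter.1 ha₀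
    exact (card_filter_derivative_eq hmem).le

lemma card_image_derivative_mul_le (N : ℕ) :
    ((polysDegreeLT K (p * N)).image derivative).card * Nat.card K ^ N ≤
      Nat.card K ^ (p * N) := by
  rw [← card_polysDegreeLT K (p * N), mul_comm]
  refine Finset.mul_card_image_le_card _ _ fun c hc => ?_
  obtain ⟨a₀, ha₀, rfl⟩ := Finset.mem_image.1 hc
  exact (card_filter_derivative_eq ha₀).ge

end Derivative

end FiniteField

/-! ### Monic irreducible polynomials -/

section MonicIrreducible

variable {K : Type*} [Field K]

lemma isCoprime_of_monic_of_irreducible {P R : K[X]} (hP : P.Monic) (hR : R.Monic)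
    (hPirr : Irreducible P) (hRirr : Irreducible R) (hne : P ≠ R) : IsCoprime P R := by
  rw [hPirr.coprime_iff_not_dvd]
  exact fun hdvd =>
    hne (eq_of_monic_of_associated hP hR (hPirr.associated_of_dvd hRirr hdvd))

lemma prod_dvd_of_monic_of_irreducible {h : K[X]} {T : Finset K[X]}
    (hT : ∀ P ∈ T, P.Monic ∧ Irreducible P ∧ P ∣ h) : ∏ P ∈ T, P ∣ h :=
  Finset.prod_dvd_of_coprime
    (fun P hP R hR hne => isCoprime_of_monic_of_irreducible (hT P hP).1 (hT R hR).1
      (hT P hP).2.1 (hT R hR).2.1 hne)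
    fun P hP => (hT P hP).2.2

lemma sum_natDegree_le_of_monic_of_irreducible {h : K[X]} (h0 : h ≠ 0) {T : Finset K[X]}
    (hT : ∀ P ∈ T, P.Monic ∧ Irreducible P ∧ P ∣ h) : ∑ P ∈ T, P.natDegree ≤ h.natDegree := by
  rw [← natDegree_prod_of_monic _ _ fun P hP => (hT P hP).1]
  exact natDegree_le_of_dvd (prod_dvd_of_monic_of_irreducible hT) h0

lemma mem_primeFactors_iff_monic {h P : K[X]} (h0 : h ≠ 0) :
    P ∈ UniqueFactorizationMonoid.primeFactors h ↔ P.Monic ∧ Irreducible P ∧ P ∣ h := by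
  rw [UniqueFactorizationMonoid.mem_primeFactors, Polynomial.mem_normalizedFactors_iff h0]
  tauto

lemma sum_natDegree_primeFactors_of_squarefree {h : K[X]} (hsq : Squarefree h) :
    ∑ P ∈ UniqueFactorizationMonoid.primeFactors h, P.natDegree = h.natDegree := by
  rw [← natDegree_eq_of_degree_eq (degree_eq_degree_of_associated
      (UniqueFactorizationMonoid.radical_associated hsq.isRadical hsq.ne_zero)),
    UniqueFactorizationMonoid.radical, ← natDegree_prod_of_monic _ _ fun P hP =>
      ((mem_primeFactors_iff_monic hsq.ne_zero).1 hP).1]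
  rfl

variable [Finite K]

/-- The set of monic irreducible polynomials of degree `k`, as a finset. -/
noncomputable def monicIrreducibles (K : Type*) [Field K] [Finite K] (k : ℕ) : Finset K[X] :=
  {P ∈ polysDegreeLT K (k + 1) | P.Monic ∧ Irreducible P ∧ P.natDegree = k}

lemma mem_monicIrreducibles {k : ℕ} {P : K[X]} :
    P ∈ monicIrreducibles K k ↔ P.Monic ∧ Irreducible P ∧ P.natDegree = k := by
  simp only [monicIrreducibles, Finset.mem_filter, and_iff_right_iff_imp]
  rintro ⟨hmonic, -, hdeg⟩
  rw [mem_polysDegreeLT_iff_natDegree_lt hmonic.ne_zero]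
  omega

lemma mul_card_monicIrreducibles_le {k : ℕ} (hk : 0 < k) :
    k * (monicIrreducibles K k).card ≤ Nat.card K ^ k := by
  have hqk : 1 < Nat.card K ^ k := Nat.one_lt_pow hk.ne' Finite.one_lt_card
  have hdeg := sum_natDegree_le_of_monic_of_irreducible
    (FiniteField.X_pow_card_sub_X_ne_zero K hqk) (T := monicIrreducibles K k) fun P hP => by
      obtain ⟨hmonic, hirr, rfl⟩ := mem_monicIrreducibles.1 hP
      exact ⟨hmonic, hirr, hirr.natDegree_dvd_iff_dvd_X_pow_card_pow_sub_X.1 dvd_rfl⟩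
  rw [FiniteField.X_pow_card_sub_X_natDegree_eq K hqk,
    Finset.sum_congr rfl fun P hP => (mem_monicIrreducibles.1 hP).2.2] at hdeg
  simpa [mul_comm] using hdeg

lemma card_monicIrreducibles_le {k : ℕ} (hk : 0 < k) :
    (monicIrreducibles K k).card ≤ Nat.card K ^ k :=
  (Nat.le_mul_of_pos_left _ hk).trans (mul_card_monicIrreducibles_le hk)

lemma sum_Ioc_pow_sub_add_le {q T a b : ℕ} (hq : 2 ≤ q) (hab : a ≤ b) (hb : b ≤ T) :
    ∑ k ∈ Finset.Ioc a b, q ^ (T - k) + q ^ (T - b) ≤ q ^ (T - a) := by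
  induction b, hab using Nat.le_induction with
  | base => simp
  | succ b hab ih =>
    have hpow : q ^ (T - b) = q * q ^ (T - (b + 1)) := by rw [← pow_succ']; congr 1; omega
    have hstep := Nat.mul_le_mul_right (q ^ (T - (b + 1))) hq
    rw [Finset.sum_Ioc_succ_top hab]
    have := ih (by omega)
    omega

lemma card_exists_monicIrreducible_le_sum {α : Type*} (A : Finset α) (E : K[X] → α → Prop)
    {T a b c : ℕ} (hb : 2 * b ≤ T)
    (hE : ∀ P : K[X], P.Monic → Irreducible P → a < P.natDegree → P.natDegree ≤ b →
      {x ∈ A | E P x}.card ≤ c * Nat.card K ^ (T - 2 * P.natDegree)) :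
    {x ∈ A | ∃ P : K[X], P.Monic ∧ Irreducible P ∧ a < P.natDegree ∧ P.natDegree ≤ b ∧
      E P x}.card ≤ c * ∑ k ∈ Finset.Ioc a b, Nat.card K ^ (T - k) := by
  have hcover : {x ∈ A | ∃ P : K[X], P.Monic ∧ Irreducible P ∧ a < P.natDegree ∧
      P.natDegree ≤ b ∧ E P x} ⊆ (Finset.Ioc a b).biUnion fun k =>
        (monicIrreducibles K k).biUnion fun P => {x ∈ A | E P x} := by
    intro x hx
    obtain ⟨hxA, P, hmonic, hirr, hPa, hPb, hPx⟩ := Finset.mem_filter.1 hx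
    simp only [Finset.mem_biUnion, Finset.mem_Ioc, Finset.mem_filter]
    exact ⟨_, ⟨hPa, hPb⟩, P, mem_monicIrreducibles.2 ⟨hmonic, hirr, rfl⟩, hxA, hPx⟩
  rw [Finset.mul_sum]
  refine (Finset.card_le_card hcover).trans
    (Finset.card_biUnion_le.trans (Finset.sum_le_sum fun k hk => ?_))
  obtain ⟨hak, hkb⟩ := Finset.mem_Ioc.1 hk
  calc _ ≤ (monicIrreducibles K k).card * (c * Nat.card K ^ (T - 2 * k)) := by
        refine Finset.card_biUnion_le_card_mul _ _ _ fun P hP => ?_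
        obtain ⟨hmonic, hirr, rfl⟩ := mem_monicIrreducibles.1 hP
        exact hE P hmonic hirr hak hkb
    _ ≤ Nat.card K ^ k * (c * Nat.card K ^ (T - 2 * k)) := by
        gcongr; exact card_monicIrreducibles_le (by omega)
    _ = c * Nat.card K ^ (T - k) := by
        rw [mul_left_comm, ← pow_add]; congr 2; omega

/- Union bound for an event whose probability at a prime of degree `k` is at most `c q⁻²ᵏ`. -/
lemma card_exists_monicIrreducible_mul_le {α : Type*} (A : Finset α) (E : K[X] → α → Prop)
    {T a b c : ℕ} (hb : 2 * b ≤ T)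
    (hE : ∀ P : K[X], P.Monic → Irreducible P → a < P.natDegree → P.natDegree ≤ b →
      {x ∈ A | E P x}.card ≤ c * Nat.card K ^ (T - 2 * P.natDegree)) :
    {x ∈ A | ∃ P : K[X], P.Monic ∧ Irreducible P ∧ a < P.natDegree ∧ P.natDegree ≤ b ∧
      E P x}.card * Nat.card K ^ a ≤ c * Nat.card K ^ T := by
  have hsum := card_exists_monicIrreducible_le_sum A E hb hE
  rcases le_total b a with hba | hab
  · rw [Finset.Ioc_eq_empty_of_le hba, Finset.sum_empty, mul_zero, Nat.le_zero] at hsum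
    simp only [hsum, zero_mul, zero_le]
  · calc _ ≤ c * Nat.card K ^ (T - a) * Nat.card K ^ a := by
          gcongr
          exact hsum.trans (Nat.mul_le_mul_left c
            (le_of_add_le_left (sum_Ioc_pow_sub_add_le Finite.one_lt_card hab (by omega))))
      _ = c * Nat.card K ^ T := by
          rw [mul_assoc, ← pow_add, Nat.sub_add_cancel (by omega)]

end MonicIrreducible

/-! ### Values of homogenized polynomials -/

section Homogenization

variable {K : Type*} [Field K]

/-- The homogenization `F(U, v)` of `f`, as a polynomial in its first variable `U`. -/
noncomputable def homForm {A : Type*} [CommRing A] [Algebra K A] (f : K[X]) (v : A) : A[X] :=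
  (f.map (algebraMap K A)).scaleRoots v

/-- The value `F(u, v)` of the homogenization `F` of `f`. -/
noncomputable def homEval {A : Type*} [CommRing A] [Algebra K A] (f : K[X]) (u v : A) : A :=
  (homForm f v).eval u

section CommRing

variable {A : Type*} [CommRing A] [Algebra K A] {f : K[X]} {P : A}

lemma not_dvd_aeval_derivative (hf : f.Separable) (hP : ¬ IsUnit P) {g : A}
    (h : P ∣ aeval g f) : ¬ P ∣ aeval g (derivative f) := by
  intro h'
  obtain ⟨a, b, hab⟩ := hf
  have hbezout := congrArg (aeval g) hab
  simp only [map_add, map_mul, map_one] at hbezout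
  exact hP (isUnit_of_dvd_one (hbezout ▸ dvd_add (h.mul_left _) (h'.mul_left _)))

lemma dvd_derivation_of_sq_dvd (δ : Derivation K A A) {x : A} (h : P ^ 2 ∣ x) : P ∣ δ x := by
  obtain ⟨y, rfl⟩ := h
  refine ⟨P * δ y + 2 * y * δ P, ?_⟩
  simp only [Derivation.leibniz, Derivation.leibniz_pow, smul_eq_mul, nsmul_eq_mul]
  push_cast
  ring

end CommRing

section Domain

variable {A : Type*} [CommRing A] [IsDomain A] [Algebra K A] {f : K[X]} {P u v w : A}

lemma natDegree_homForm (f : K[X]) (v : A) : (homForm f v).natDegree = f.natDegree := by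
  rw [homForm, natDegree_scaleRoots, natDegree_map]

lemma leadingCoeff_homForm (f : K[X]) (v : A) :
    (homForm f v).leadingCoeff = algebraMap K A f.leadingCoeff := by
  rw [homForm, leadingCoeff_scaleRoots, leadingCoeff_map]

lemma isUnit_leadingCoeff_homForm (hf : f ≠ 0) (v : A) : IsUnit (homForm f v).leadingCoeff := by
  rw [leadingCoeff_homForm]
  exact (leadingCoeff_ne_zero.2 hf).isUnit.map _

lemma homForm_ne_zero (hf : f ≠ 0) (v : A) : homForm f v ≠ 0 :=
  leadingCoeff_ne_zero.1 (isUnit_leadingCoeff_homForm hf v).ne_zero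

lemma homEval_eq_sum (f : K[X]) (u v : A) :
    homEval f u v = ∑ j ∈ Finset.range (f.natDegree + 1),
      algebraMap K A (f.coeff j) * u ^ j * v ^ (f.natDegree - j) := by
  rw [homEval, eval_eq_sum_range, natDegree_homForm]
  refine Finset.sum_congr rfl fun j _ => ?_
  rw [homForm, coeff_scaleRoots, coeff_map, natDegree_map, mul_right_comm]

lemma homEval_prod {ι : Type*} (s : Finset ι) (f : ι → K[X]) (u v : A) :
    homEval (∏ i ∈ s, f i) u v = ∏ i ∈ s, homEval (f i) u v := by
  induction s using Finset.induction_on with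
  | empty => simp [homEval_eq_sum]
  | insert a s ha ih =>
    rw [Finset.prod_insert ha, Finset.prod_insert ha, ← ih, homEval, homForm, Polynomial.map_mul,
      mul_scaleRoots_of_noZeroDivisors, eval_mul]
    rfl

lemma homEval_mul_right (f : K[X]) (g v : A) :
    homEval f (g * v) v = v ^ f.natDegree * aeval g f := by
  rw [homEval, homForm, mul_comm g v, scaleRoots_eval_mul, natDegree_map, eval_map_algebraMap]

lemma dvd_homEval_sub_lead (f : K[X]) (u v : A) :
    v ∣ homEval f u v - algebraMap K A f.leadingCoeff * u ^ f.natDegree := by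
  rw [homEval_eq_sum, Finset.sum_range_succ, coeff_natDegree, Nat.sub_self, pow_zero, mul_one,
    add_sub_cancel_right]
  refine Finset.dvd_sum fun j hj => Dvd.dvd.mul_left (dvd_pow_self v ?_) _
  have := Finset.mem_range.1 hj
  omega

lemma dvd_of_dvd_homEval (hf : f ≠ 0) (hP : Prime P) (hv : P ∣ v) (h : P ∣ homEval f u v) :
    P ∣ u := by
  have hlead := (dvd_sub_right h).1 (hv.trans (dvd_homEval_sub_lead f u v))
  rw [IsUnit.dvd_mul_left ((leadingCoeff_ne_zero.2 hf).isUnit.map _)] at hlead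
  exact hP.dvd_of_dvd_pow hlead

/- Dehomogenization: `v` is invertible modulo `P`, and `g` represents `u / v`. -/
lemma exists_dvd_sub_mul_and_dvd_aeval (hv : IsCoprime P v) (h : P ∣ homEval f u v) :
    ∃ g, P ∣ u - g * v ∧ P ∣ aeval g f := by
  obtain ⟨a, w, hw⟩ := id hv
  have hu : P ∣ u - u * w * v := ⟨u * a, by linear_combination -u * hw⟩
  have hval := (dvd_sub_right h).1 (hu.trans (sub_dvd_eval_sub u _ (homForm f v)))
  rw [← homEval, homEval_mul_right] at hval
  exact ⟨u * w, hu, hv.pow_right.dvd_of_dvd_mul_left hval⟩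

lemma sq_dvd_sub_of_sq_dvd_aeval (hf : f.Separable) (hP : Prime P) {g k : A}
    (hg : P ^ 2 ∣ aeval g f) (hk : P ^ 2 ∣ aeval k f) (h : P ∣ g - k) : P ^ 2 ∣ g - k := by
  obtain ⟨z, hz⟩ := h
  obtain ⟨r, hr⟩ := binomExpansion (f.map (algebraMap K A)) k (g - k)
  rw [add_sub_cancel, derivative_map, eval_map_algebraMap, eval_map_algebraMap,
    eval_map_algebraMap, hz] at hr
  have hlin : P * P ∣ P * (aeval k (derivative f) * z) := by
    have := (dvd_sub hg hk).sub (Dvd.intro_left (r * z ^ 2) rfl : P ^ 2 ∣ r * z ^ 2 * P ^ 2)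
    convert this using 1
    · ring
    · rw [hr]; ring
  have hzP : P ∣ z := (hP.dvd_or_dvd ((mul_dvd_mul_iff_left hP.ne_zero).1 hlin)).resolve_left
    (not_dvd_aeval_derivative hf hP.not_isUnit ((dvd_pow_self P two_ne_zero).trans hk))
  rw [hz, pow_two]
  exact mul_dvd_mul_left P hzP

lemma sq_dvd_sub_of_sq_dvd_homEval (hf : f.Separable) (hP : Prime P) (hv : IsCoprime P v)
    (hu : P ^ 2 ∣ homEval f u v) (hw : P ^ 2 ∣ homEval f w v) (h : P ∣ u - w) :
    P ^ 2 ∣ u - w := by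
  obtain ⟨g, hg, hfg⟩ := exists_dvd_sub_mul_and_dvd_aeval hv.pow_left hu
  obtain ⟨k, hk, hfk⟩ := exists_dvd_sub_mul_and_dvd_aeval hv.pow_left hw
  have hdiff : P ^ 2 ∣ (u - w) - (g - k) * v := by
    convert dvd_sub hg hk using 1; ring
  have hgk : P ∣ g - k := hv.dvd_of_dvd_mul_right
    ((dvd_sub_right h).1 ((dvd_pow_self P two_ne_zero).trans hdiff))
  simpa using dvd_add hdiff ((sq_dvd_sub_of_sq_dvd_aeval hf hP hfg hfk hgk).mul_right v)

lemma dvd_homEval_derivation (hf : f.Separable) (hP : Prime P) (hv : IsCoprime P v)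
    (h : P ^ 2 ∣ homEval f u v) (δ : Derivation K A A) : P ∣ homEval f (δ u) (δ v) := by
  obtain ⟨g, hg, hfg⟩ := exists_dvd_sub_mul_and_dvd_aeval hv.pow_left h
  have hPfg : P ∣ aeval g f := (dvd_pow_self P two_ne_zero).trans hfg
  have hδg : P ∣ δ g := by
    have := dvd_derivation_of_sq_dvd δ hfg
    rw [Derivation.map_aeval, smul_eq_mul] at this
    exact (hP.dvd_or_dvd this).resolve_left (not_dvd_aeval_derivative hf hP.not_isUnit hPfg)
  have hδu : P ∣ δ u - g * δ v := by
    have := dvd_derivation_of_sq_dvd δ hg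
    rw [map_sub, Derivation.leibniz, smul_eq_mul, smul_eq_mul] at this
    convert dvd_add this (hδg.mul_left v) using 1; ring
  have hval := hδu.trans (sub_dvd_eval_sub (δ u) _ (homForm f (δ v)))
  rw [← homEval, ← homEval, homEval_mul_right] at hval
  exact (dvd_sub_left (hPfg.mul_left _)).1 hval

end Domain

section Degree

variable {f u v : K[X]}

lemma natDegree_homEval_le {m : ℕ} (f : K[X]) (hu : u.natDegree ≤ m) (hv : v.natDegree ≤ m) :
    (homEval f u v).natDegree ≤ f.natDegree * m := by
  rw [homEval_eq_sum]
  refine natDegree_sum_le_of_forall_le _ _ fun j hj => ?_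
  have hj := Finset.mem_range.1 hj
  rw [mul_assoc, algebraMap_eq]
  calc _ ≤ (u ^ j * v ^ (f.natDegree - j)).natDegree := natDegree_C_mul_le _ _
    _ ≤ j * m + (f.natDegree - j) * m :=
        natDegree_mul_le_of_le (natDegree_pow_le_of_le _ hu) (natDegree_pow_le_of_le _ hv)
    _ = f.natDegree * m := by rw [← add_mul]; congr 1; omega

lemma natDegree_homEval (f : K[X]) (hv : v.natDegree < u.natDegree) :
    (homEval f u v).natDegree = f.natDegree * u.natDegree := by
  rcases Nat.eq_zero_or_pos f.natDegree with hd | hd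
  · simpa [hd] using natDegree_homEval_le f le_rfl hv.le
  have hlead : (C f.leadingCoeff * u ^ f.natDegree).natDegree = f.natDegree * u.natDegree := by
    rw [natDegree_C_mul (leadingCoeff_ne_zero.2 (ne_zero_of_natDegree_gt hd)), natDegree_pow]
  rw [homEval_eq_sum, Finset.sum_range_succ, coeff_natDegree, Nat.sub_self, pow_zero, mul_one,
    algebraMap_eq, natDegree_add_eq_right_of_natDegree_lt, hlead]
  rw [hlead]
  refine (natDegree_sum_le_of_forall_le (n := f.natDegree * u.natDegree - 1) _ _
    fun j hj => ?_).trans_lt (Nat.sub_one_lt (Nat.mul_pos hd (Nat.zero_lt_of_lt hv)).ne')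
  obtain ⟨k, hk⟩ := Nat.exists_eq_add_of_lt (Finset.mem_range.1 hj)
  rw [mul_assoc]
  calc _ ≤ (u ^ j * v ^ (f.natDegree - j)).natDegree := natDegree_C_mul_le _ _
    _ ≤ j * u.natDegree + (f.natDegree - j) * (u.natDegree - 1) :=
        natDegree_mul_le_of_le (natDegree_pow_le_of_le _ le_rfl)
          (natDegree_pow_le_of_le _ (Nat.le_sub_one_of_lt hv))
    _ ≤ f.natDegree * u.natDegree - 1 := by
        obtain ⟨m, hm⟩ := Nat.exists_eq_add_of_lt hv
        rw [hk, hm, Nat.add_sub_cancel, show j + k + 1 - j = k + 1 by omega]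
        refine Nat.le_sub_one_of_lt ?_
        nlinarith

lemma isCoprime_of_squarefree_homEval (hd : 2 ≤ f.natDegree)
    (hsq : Squarefree (homEval f u v)) : IsCoprime u v := by
  refine isCoprime_of_irreducible_dvd ?_ fun P hP hu hv => hP.not_isUnit (hsq P ?_)
  · rintro ⟨rfl, rfl⟩
    refine hsq.ne_zero ?_
    simpa [show f.natDegree ≠ 0 by omega] using homEval_mul_right f (0 : K[X]) 0
  · rw [← pow_two]
    refine (pow_dvd_pow P hd).trans ?_
    rw [homEval_eq_sum]
    refine Finset.dvd_sum fun j hj => ?_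
    rw [mul_assoc]
    refine Dvd.dvd.mul_left ?_ _
    convert mul_dvd_mul (pow_dvd_pow_of_dvd hu j) (pow_dvd_pow_of_dvd hv (f.natDegree - j)) using 1
    rw [← pow_add, Nat.add_sub_cancel' (Finset.mem_range_succ_iff.1 hj)]

end Degree

end Homogenization

/-! ### Counting in the affine family `(U + Q a, Q b)` -/

lemma card_filter_product_le {α β : Type*} {A : Finset α} {B : Finset β} {E : α × β → Prop}
    {n : ℕ} (h : ∀ b ∈ B, {a ∈ A | E (a, b)}.card ≤ n) :
    {x ∈ A ×ˢ B | E x}.card ≤ n * B.card := by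
  have hcover : {x ∈ A ×ˢ B | E x} ⊆
      B.biUnion fun b => {a ∈ A | E (a, b)}.image fun a => (a, b) := by
    rintro ⟨a, b⟩ hx
    simp_all
  rw [mul_comm]
  exact (Finset.card_le_card hcover).trans (Finset.card_biUnion_le_card_mul _ _ _ fun b hb =>
    Finset.card_image_le.trans (h b hb))

section AffineFamily

variable {K : Type*} [Field K] {f U Q v P : K[X]}

lemma card_le_mul_natDegree_of_dvd_homEval (hf : f ≠ 0) (hP : Irreducible P)
    (hPQ : IsCoprime P Q) {T : Finset K[X]} (hT : ∀ a ∈ T, P ∣ homEval f (U + Q * a) v) {n : ℕ}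
    (hn : ∀ T' ⊆ T, (∀ a ∈ T', ∀ b ∈ T', P ∣ a - b) → T'.card ≤ n) :
    T.card ≤ n * f.natDegree := by
  have : Fact (Irreducible P) := ⟨hP⟩
  have hclasses := card_image_le_natDegree_of_map_eval_eq_zero (AdjoinRoot.mk P)
    (h := homForm f v) ((isUnit_leadingCoeff_homForm hf v).map _).ne_zero
    (T := T.image fun a => U + Q * a) (by simpa [homEval] using hT)
  rw [natDegree_homForm, Finset.image_image] at hclasses
  refine (Finset.card_le_mul_card_image T n fun y _ => ?_).trans (Nat.mul_le_mul_left n hclasses)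
  refine hn _ (Finset.filter_subset _ _) fun a ha b hb => hPQ.dvd_of_dvd_mul_left ?_
  have hab := (Finset.mem_filter.1 ha).2.trans (Finset.mem_filter.1 hb).2.symm
  convert AdjoinRoot.mk_eq_mk.1 hab using 1
  ring

lemma sq_dvd_of_derivative_eq_zero (hP : P.Separable) {a : K[X]} (h : P ∣ a)
    (ha : derivative a = 0) : P ^ 2 ∣ a := by
  obtain ⟨s, rfl⟩ := h
  have hs : P ∣ derivative P * s := ⟨-derivative s, by rw [derivative_mul] at ha; grind⟩
  rw [pow_two]
  exact mul_dvd_mul_left _ (IsCoprime.dvd_of_dvd_mul_left hP hs)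

variable [Finite K]

lemma card_dvd_homEval_le (hf : f ≠ 0) (hP : Irreducible P) (hPQ : IsCoprime P Q) (U v : K[X])
    (M : ℕ) : {a ∈ polysDegreeLT K M | P ∣ homEval f (U + Q * a) v}.card ≤
      Nat.card K ^ (M - P.natDegree) * f.natDegree :=
  card_le_mul_natDegree_of_dvd_homEval hf hP hPQ (fun _ ha => (Finset.mem_filter.1 ha).2)
    fun _ hT' => card_le_of_forall_dvd_sub hP.ne_zero (hT'.trans (Finset.filter_subset _ _))

lemma card_sq_dvd_homEval_le (hf : Squarefree f) (hP : Irreducible P) (hPQ : IsCoprime P Q)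
    (hPv : IsCoprime P v) (U : K[X]) (M : ℕ) :
    {a ∈ polysDegreeLT K M | P ^ 2 ∣ homEval f (U + Q * a) v}.card ≤
      Nat.card K ^ (M - 2 * P.natDegree) * f.natDegree := by
  rw [← natDegree_pow P 2]
  refine card_le_mul_natDegree_of_dvd_homEval (U := U) (v := v) hf.ne_zero hP hPQ
    (fun a ha => (dvd_pow_self P two_ne_zero).trans (Finset.mem_filter.1 ha).2)
    fun T' hT' hP' => card_le_of_forall_dvd_sub (pow_ne_zero _ hP.ne_zero)
      (hT'.trans (Finset.filter_subset _ _)) fun a ha b hb => ?_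
  have hsub : U + Q * a - (U + Q * b) = Q * (a - b) := by ring
  have hsq := sq_dvd_sub_of_sq_dvd_homEval (PerfectField.separable_iff_squarefree.2 hf) hP.prime
    hPv (Finset.mem_filter.1 (hT' ha)).2 (Finset.mem_filter.1 (hT' hb)).2
    (hsub ▸ (hP' a ha b hb).mul_left Q)
  exact hPQ.pow_left.dvd_of_dvd_mul_left (hsub ▸ hsq)

/- Two such polynomials congruent modulo `P` differ by a polynomial with zero derivative, which is
then divisible by `P ^ 2` and hence vanishes for degree reasons. -/
lemma card_dvd_homEval_le_of_derivative_eq (hf : f ≠ 0) (hP : Irreducible P)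
    (hPQ : IsCoprime P Q) {M : ℕ} (hM : M < 2 * P.natDegree) {T : Finset K[X]}
    (hTM : T ⊆ polysDegreeLT K M) (hTP : ∀ a ∈ T, P ∣ homEval f (U + Q * a) v)
    (hTd : ∀ a ∈ T, ∀ b ∈ T, derivative a = derivative b) : T.card ≤ f.natDegree := by
  rw [← one_mul f.natDegree]
  refine card_le_mul_natDegree_of_dvd_homEval hf hP hPQ hTP fun T' hT' hP' => ?_
  refine (card_le_of_forall_dvd_sub (pow_ne_zero 2 hP.ne_zero) (hT'.trans hTM)
    fun a ha b hb => sq_dvd_of_derivative_eq_zero (PerfectField.separable_of_irreducible hP)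
      (hP' a ha b hb) ?_).trans_eq ?_
  · rw [derivative_sub, hTd a (hT' ha) b (hT' hb), sub_self]
  · rw [natDegree_pow, Nat.sub_eq_zero_of_le hM.le, pow_zero]

lemma card_exists_large_dvd_homEval_le (hf : f ≠ 0) {W : K[X]} (hW : W ≠ 0) {M : ℕ} (hM : 0 < M)
    (hWdeg : W.natDegree ≤ f.natDegree * (2 * M)) {T : Finset K[X]}
    (hTM : T ⊆ polysDegreeLT K M) (hTd : ∀ a ∈ T, ∀ b ∈ T, derivative a = derivative b)
    (U Q v : K[X]) :
    {a ∈ T | ∃ P : K[X], P.Monic ∧ Irreducible P ∧ M < 2 * P.natDegree ∧ IsCoprime P Q ∧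
      P ∣ W ∧ P ∣ homEval f (U + Q * a) v}.card ≤ 4 * f.natDegree * f.natDegree := by
  set primes := {P ∈ UniqueFactorizationMonoid.primeFactors W |
    M < 2 * P.natDegree ∧ IsCoprime P Q} with hprimes
  have hprime : ∀ P ∈ primes, (P.Monic ∧ Irreducible P ∧ P ∣ W) ∧ M < 2 * P.natDegree ∧
      IsCoprime P Q := by
    simp only [hprimes, Finset.mem_filter, mem_primeFactors_iff_monic hW, imp_self, implies_true]
  have hcard : primes.card ≤ 4 * f.natDegree := by
    refine Nat.le_of_mul_le_mul_right ?_ hM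
    have hle : primes.card * M ≤ ∑ P ∈ primes, 2 * P.natDegree :=
      Finset.card_nsmul_le_sum _ _ _ fun P hP => (hprime P hP).2.1.le
    have hsum := sum_natDegree_le_of_monic_of_irreducible hW fun P hP => (hprime P hP).1
    rw [← Finset.mul_sum] at hle
    linarith
  have hcover : {a ∈ T | ∃ P : K[X], P.Monic ∧ Irreducible P ∧ M < 2 * P.natDegree ∧
      IsCoprime P Q ∧ P ∣ W ∧ P ∣ homEval f (U + Q * a) v} ⊆
        primes.biUnion fun P => {a ∈ T | P ∣ homEval f (U + Q * a) v} := by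
    intro a ha
    obtain ⟨haT, P, hmonic, hirr, hPM, hPQ, hPW, hPa⟩ := Finset.mem_filter.1 ha
    exact Finset.mem_biUnion.2 ⟨P, Finset.mem_filter.2
      ⟨(mem_primeFactors_iff_monic hW).2 ⟨hmonic, hirr, hPW⟩, hPM, hPQ⟩,
      Finset.mem_filter.2 ⟨haT, hPa⟩⟩
  refine (Finset.card_le_card hcover).trans ((Finset.card_biUnion_le_card_mul _ _ f.natDegree
    fun P hP => ?_).trans (Nat.mul_le_mul_right _ hcard))
  obtain ⟨⟨-, hirr, -⟩, hPM, hPQ⟩ := hprime P hP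
  exact card_dvd_homEval_le_of_derivative_eq hf hirr hPQ hPM
    ((Finset.filter_subset _ _).trans hTM) (fun a ha => (Finset.mem_filter.1 ha).2)
    fun a ha b hb => hTd a (Finset.mem_filter.1 ha).1 b (Finset.mem_filter.1 hb).1

end AffineFamily

/-! ### Bad pairs -/

section BadPairs

variable {K : Type*} [Field K] {f U Q : K[X]}

/-- The pair `(U + Q a, Q b)` attached to `x = (a, b)`. -/
noncomputable def affinePair (U Q : K[X]) (x : K[X] × K[X]) : K[X] × K[X] :=
  (U + Q * x.1, Q * x.2)

/-- A prime of degree greater than `k` divides both `u` and `v`, where `y = (u, v)`. -/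
def HasCommonPrime (k : ℕ) (y : K[X] × K[X]) : Prop :=
  ∃ P : K[X], P.Monic ∧ Irreducible P ∧ k < P.natDegree ∧ P ∣ y.1 ∧ P ∣ y.2

/-- The square of a prime of degree in `(k, M / 2]` not dividing `v` divides `F(u, v)`,
where `y = (u, v)`. -/
def HasMediumSquare (f : K[X]) (k M : ℕ) (y : K[X] × K[X]) : Prop :=
  ∃ P : K[X], P.Monic ∧ Irreducible P ∧ k < P.natDegree ∧ P.natDegree ≤ M / 2 ∧
    IsCoprime P y.2 ∧ P ^ 2 ∣ homEval f y.1 y.2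

/-- `F(u', v') = 0`, where `y = (u, v)`. -/
def IsDegenerate (f : K[X]) (y : K[X] × K[X]) : Prop :=
  homEval f (derivative y.1) (derivative y.2) = 0

/-- A prime of degree greater than `M / 2` not dividing `v` divides both `F(u, v)` and `F(u', v')`,
the latter being nonzero, where `y = (u, v)`. This is what the square of a prime dividing `F(u, v)`
leads to upon differentiating. -/
def HasLargeCriticalPrime (f : K[X]) (M : ℕ) (y : K[X] × K[X]) : Prop :=
  ¬ IsDegenerate f y ∧
    ∃ P : K[X], P.Monic ∧ Irreducible P ∧ M < 2 * P.natDegree ∧ IsCoprime P y.2 ∧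
      P ∣ homEval f (derivative y.1) (derivative y.2) ∧ P ∣ homEval f y.1 y.2

lemma derivative_add_mul_of_derivative_eq_zero (hQ : derivative Q = 0) (U a : K[X]) :
    derivative (U + Q * a) = derivative U + Q * derivative a := by
  rw [derivative_add, derivative_mul, hQ, zero_mul, zero_add]

variable [Finite K]

/-- The set of pairs of polynomials of degree less than `M`, as a finset. -/
noncomputable def pairsDegreeLT (K : Type*) [Field K] [Finite K] (M : ℕ) :
    Finset (K[X] × K[X]) :=
  polysDegreeLT K M ×ˢ polysDegreeLT K M

lemma mem_pairsDegreeLT {M : ℕ} {x : K[X] × K[X]} :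
    x ∈ pairsDegreeLT K M ↔ x.1.degree < M ∧ x.2.degree < M := by
  simp [pairsDegreeLT, Finset.mem_product]

lemma card_pairsDegreeLT (K : Type*) [Field K] [Finite K] (M : ℕ) :
    (pairsDegreeLT K M).card = Nat.card K ^ (2 * M) := by
  rw [pairsDegreeLT, Finset.card_product, card_polysDegreeLT, two_mul, pow_add]

lemma card_filter_pairsDegreeLT_le {M n : ℕ} {E : K[X] × K[X] → Prop}
    (h : ∀ b ∈ polysDegreeLT K M, {a ∈ polysDegreeLT K M | E (a, b)}.card ≤ n) :
    {x ∈ pairsDegreeLT K M | E x}.card ≤ n * Nat.card K ^ M := by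
  rw [← card_polysDegreeLT K M]
  exact card_filter_product_le h

lemma card_snd_eq_zero_mul_le (K : Type*) [Field K] [Finite K] (M : ℕ) :
    {x ∈ pairsDegreeLT K M | x.2 = 0}.card * Nat.card K ^ M ≤ Nat.card K ^ (2 * M) := by
  have hcover : {x ∈ pairsDegreeLT K M | x.2 = 0} ⊆ polysDegreeLT K M ×ˢ {0} := by
    rintro ⟨a, b⟩ hx
    simp_all [mem_pairsDegreeLT]
  rw [two_mul, pow_add]
  refine Nat.mul_le_mul_right _ ((Finset.card_le_card hcover).trans_eq ?_)
  rw [Finset.card_product, card_polysDegreeLT, Finset.card_singleton, mul_one]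

lemma card_dvd_affinePair_le (U Q : K[X]) (M : ℕ) {P : K[X]} (hP : P ≠ 0) :
    {x ∈ pairsDegreeLT K M | IsCoprime P Q ∧ P ∣ U + Q * x.1 ∧ P ∣ x.2}.card ≤
      Nat.card K ^ (2 * M - 2 * P.natDegree) := by
  by_cases hPQ : IsCoprime P Q
  · have hcover : {x ∈ pairsDegreeLT K M | IsCoprime P Q ∧ P ∣ U + Q * x.1 ∧ P ∣ x.2} ⊆
        {a ∈ polysDegreeLT K M | P ∣ U + Q * a} ×ˢ {b ∈ polysDegreeLT K M | P ∣ b} := by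
      intro x hx
      simp_all [mem_pairsDegreeLT, Finset.mem_product]
    rw [← Nat.mul_sub, two_mul, pow_add]
    refine (Finset.card_le_card hcover).trans ((Finset.card_product _ _).trans_le
      (Nat.mul_le_mul ?_ ?_)) <;>
    refine card_le_of_forall_dvd_sub hP (Finset.filter_subset _ _) fun a ha b hb => ?_
    · refine hPQ.dvd_of_dvd_mul_left ?_
      convert dvd_sub (Finset.mem_filter.1 ha).2 (Finset.mem_filter.1 hb).2 using 1
      ring
    · exact dvd_sub (Finset.mem_filter.1 ha).2 (Finset.mem_filter.1 hb).2
  · simp [hPQ]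

lemma card_hasCommonPrime_mul_le (hUQ : IsCoprime U Q) (M k : ℕ) :
    {x ∈ pairsDegreeLT K M | x.2 ≠ 0 ∧ HasCommonPrime k (affinePair U Q x)}.card *
      Nat.card K ^ k ≤ Nat.card K ^ (2 * M) := by
  rw [← one_mul (Nat.card K ^ (2 * M))]
  refine le_trans (Nat.mul_le_mul_right _ (Finset.card_le_card fun x hx => ?_))
    (card_exists_monicIrreducible_mul_le (pairsDegreeLT K M)
      (fun P x => IsCoprime P Q ∧ P ∣ U + Q * x.1 ∧ P ∣ x.2) (b := M) le_rfl
      fun P _ hP _ _ => by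
        rw [one_mul]; convert card_dvd_affinePair_le U Q M hP.ne_zero)
  obtain ⟨hxM, hx0, P, hmonic, hirr, hkP, hPu, hPv⟩ := Finset.mem_filter.1 hx
  have hPQ : IsCoprime P Q := hirr.coprime_iff_not_dvd.2 fun hPQ =>
    hirr.not_isUnit (hUQ.isUnit_of_dvd' ((dvd_add_left (hPQ.mul_right _)).1 hPu) hPQ)
  have hPx : P ∣ x.2 := hPQ.dvd_of_dvd_mul_left hPv
  have hPM : P.natDegree ≤ M := (natDegree_le_of_dvd hPx hx0).trans
    ((natDegree_lt_iff_degree_lt hx0).2 (mem_pairsDegreeLT.1 hxM).2).le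
  exact Finset.mem_filter.2 ⟨hxM, P, hmonic, hirr, hkP, hPM, hPQ, hPu, hPx⟩

lemma card_hasMediumSquare_mul_le (hf : Squarefree f) (U Q : K[X]) (M k : ℕ) :
    {x ∈ pairsDegreeLT K M | HasMediumSquare f k M (affinePair U Q x)}.card * Nat.card K ^ k ≤
      f.natDegree * Nat.card K ^ (2 * M) := by
  refine card_exists_monicIrreducible_mul_le _ _ (by omega) fun P _ hP _ hPM => ?_
  calc _ ≤ Nat.card K ^ (M - 2 * P.natDegree) * f.natDegree * Nat.card K ^ M := by
        refine card_filter_pairsDegreeLT_le fun b _ => ?_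
        by_cases hPv : IsCoprime P (Q * b)
        · simpa only [affinePair, hPv, true_and] using
            card_sq_dvd_homEval_le hf hP hPv.of_mul_right_left hPv U M
        · simp [affinePair, hPv]
    _ = f.natDegree * Nat.card K ^ (2 * M - 2 * P.natDegree) := by
        rw [mul_right_comm, ← pow_add, mul_comm]
        congr 2
        omega

section Derivative

variable {p N : ℕ} [CharP K p] [Fact p.Prime]

lemma card_fst_hasLargeCriticalPrime_le {M : ℕ} (hf : f ≠ 0) (hQ : derivative Q = 0) (hM : 0 < M)
    (hU : U.natDegree ≤ 2 * M) (hQM : Q.natDegree ≤ M) {b : K[X]}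
    (hb : b ∈ polysDegreeLT K M) :
    {a ∈ polysDegreeLT K M | HasLargeCriticalPrime f M (affinePair U Q (a, b))}.card ≤
      4 * f.natDegree * f.natDegree * ((polysDegreeLT K M).image derivative).card := by
  have hdeg : ∀ {a : K[X]}, a ∈ polysDegreeLT K M → (Q * a).natDegree ≤ 2 * M := fun {a} ha => by
    rw [two_mul]
    exact natDegree_mul_le_of_le hQM
      (natDegree_le_of_degree_le (mem_polysDegreeLT.1 ha).le)
  have hdeg_derivative : ∀ {u : K[X]}, u.natDegree ≤ 2 * M → (derivative u).natDegree ≤ 2 * M :=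
    fun hu => (natDegree_derivative_le _).trans ((Nat.sub_le _ _).trans hu)
  refine (Finset.card_le_mul_card_image (f := derivative) _ _ fun c hc => ?_).trans
    (Nat.mul_le_mul_left _ (Finset.card_le_card (Finset.image_subset_image
      (Finset.filter_subset _ _))))
  obtain ⟨a₀, ha₀, rfl⟩ := Finset.mem_image.1 hc
  obtain ⟨ha₀M, hW, -⟩ := Finset.mem_filter.1 ha₀
  set W := homEval f (derivative (U + Q * a₀)) (derivative (Q * b))
  have hWdeg : W.natDegree ≤ f.natDegree * (2 * M) := natDegree_homEval_le f
    (hdeg_derivative (natDegree_add_le_of_degree_le hU (hdeg ha₀M))) (hdeg_derivative (hdeg hb))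
  refine le_trans (Finset.card_le_card fun a ha => ?_) (card_exists_large_dvd_homEval_le hf hW hM
    hWdeg (T := {a ∈ polysDegreeLT K M | derivative a = derivative a₀})
    (Finset.filter_subset _ _) (fun a ha b hb =>
      (Finset.mem_filter.1 ha).2.trans (Finset.mem_filter.1 hb).2.symm) U Q (Q * b))
  obtain ⟨ha, hda⟩ := Finset.mem_filter.1 ha
  obtain ⟨haM, -, P, hmonic, hirr, hPM, hPv, hPW, hPF⟩ := Finset.mem_filter.1 ha
  simp only [affinePair, derivative_add_mul_of_derivative_eq_zero hQ U, hda] at hPW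
  rw [← derivative_add_mul_of_derivative_eq_zero hQ U] at hPW
  exact Finset.mem_filter.2 ⟨Finset.mem_filter.2 ⟨haM, hda⟩, P, hmonic, hirr, hPM,
    hPv.of_mul_right_left, hPW, hPF⟩

lemma card_hasLargeCriticalPrime_mul_le (hf : f ≠ 0) (hQ : derivative Q = 0) (hN : 0 < N)
    (hU : U.natDegree ≤ 2 * (p * N)) (hQM : Q.natDegree ≤ p * N) :
    {x ∈ pairsDegreeLT K (p * N) | HasLargeCriticalPrime f (p * N) (affinePair U Q x)}.card *
      Nat.card K ^ N ≤ 4 * f.natDegree * f.natDegree * Nat.card K ^ (2 * (p * N)) := by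
  have hM : 0 < p * N := Nat.mul_pos (Fact.out : p.Prime).pos hN
  calc _ ≤ 4 * f.natDegree * f.natDegree * ((polysDegreeLT K (p * N)).image derivative).card *
          Nat.card K ^ (p * N) * Nat.card K ^ N := by
        refine Nat.mul_le_mul_right _ (card_filter_pairsDegreeLT_le fun b hb => ?_)
        exact card_fst_hasLargeCriticalPrime_le hf hQ hM hU hQM hb
    _ = 4 * f.natDegree * f.natDegree * Nat.card K ^ (p * N) *
          (((polysDegreeLT K (p * N)).image derivative).card * Nat.card K ^ N) := by ring
    _ ≤ 4 * f.natDegree * f.natDegree * Nat.card K ^ (p * N) * Nat.card K ^ (p * N) :=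
        Nat.mul_le_mul_left _ (card_image_derivative_mul_le N)
    _ = 4 * f.natDegree * f.natDegree * Nat.card K ^ (2 * (p * N)) := by ring

lemma card_fst_isDegenerate_le (hf : f ≠ 0) (hQ : derivative Q = 0) (hQ0 : Q ≠ 0)
    (N : ℕ) (U b : K[X]) :
    {a ∈ polysDegreeLT K (p * N) | IsDegenerate f (affinePair U Q (a, b))}.card ≤
      Nat.card K ^ N * f.natDegree := by
  have hroots : ({a ∈ polysDegreeLT K (p * N) | IsDegenerate f (affinePair U Q (a, b))}.image
      fun a => derivative (U + Q * a)).card ≤ f.natDegree := by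
    rw [← natDegree_homForm f (derivative (Q * b))]
    refine card_le_degree_of_subset_roots fun y hy => ?_
    obtain ⟨a, ha, rfl⟩ := Finset.mem_image.1 hy
    exact (mem_roots (homForm_ne_zero hf _)).2 (Finset.mem_filter.1 ha).2
  refine (Finset.card_le_mul_card_image (f := fun a => derivative (U + Q * a)) _ _
    fun y hy => ?_).trans (Nat.mul_le_mul_left _ hroots)
  obtain ⟨a₀, -, rfl⟩ := Finset.mem_image.1 hy
  refine (Finset.card_le_card fun a ha => ?_).trans
    (card_filter_derivative_le N (derivative a₀))
  obtain ⟨ha, hda⟩ := Finset.mem_filter.1 ha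
  simp only [derivative_add_mul_of_derivative_eq_zero hQ U, add_right_inj] at hda
  exact Finset.mem_filter.2 ⟨(Finset.mem_filter.1 ha).1, mul_left_cancel₀ hQ0 hda⟩

lemma card_isDegenerate_mul_le (hf : f ≠ 0) (hQ : derivative Q = 0) (hQ0 : Q ≠ 0)
    (hN : 2 * N ≤ p * N) (U : K[X]) :
    {x ∈ pairsDegreeLT K (p * N) | IsDegenerate f (affinePair U Q x)}.card * Nat.card K ^ N ≤
      f.natDegree * Nat.card K ^ (2 * (p * N)) := by
  have hfibre := card_filter_pairsDegreeLT_le (E := fun x => IsDegenerate f (affinePair U Q x))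
    fun b (_ : b ∈ polysDegreeLT K (p * N)) => card_fst_isDegenerate_le hf hQ hQ0 N U b
  calc _ ≤ Nat.card K ^ N * f.natDegree * Nat.card K ^ (p * N) * Nat.card K ^ N :=
        Nat.mul_le_mul_right _ hfibre
    _ = f.natDegree * Nat.card K ^ (2 * N + p * N) := by ring
    _ ≤ f.natDegree * Nat.card K ^ (2 * (p * N)) := by
        gcongr
        · exact Nat.card_pos
        · omega

end Derivative

end BadPairs

/-! ### The smooth part -/

section SmoothPart

variable {K : Type*} [Field K] {f U Q : K[X]}

/-- The total degree of the distinct prime factors of `h` of degree at most `L`, that is, the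
degree of the radical of the `L`-smooth part of `h`. -/
noncomputable def smoothDegree (L : ℕ) (h : K[X]) : ℕ :=
  ∑ P ∈ UniqueFactorizationMonoid.primeFactors h with P.natDegree ≤ L, P.natDegree

lemma not_dvd_homEval_affinePair (hf : f ≠ 0) (hUQ : IsCoprime U Q) {P : K[X]}
    (hP : Irreducible P) (hPQ : P ∣ Q) (x : K[X] × K[X]) :
    ¬ P ∣ homEval f (affinePair U Q x).1 (affinePair U Q x).2 := by
  intro hx
  have hPu := dvd_of_dvd_homEval hf hP.prime (hPQ.mul_right x.2) hx
  exact hP.not_isUnit (hUQ.isUnit_of_dvd' ((dvd_add_left (hPQ.mul_right _)).1 hPu) hPQ)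

variable [Finite K]

lemma smoothDegree_le_sum_monicIrreducibles (L : ℕ) (h : K[X]) :
    smoothDegree L h ≤
      ∑ k ∈ Finset.Icc 1 L, ∑ P ∈ monicIrreducibles K k, if P ∣ h then k else 0 := by
  rcases eq_or_ne h 0 with rfl | h0
  · simp [smoothDegree]
  calc smoothDegree L h
      ≤ ∑ P ∈ (Finset.Icc 1 L).biUnion (monicIrreducibles K),
          if P ∣ h then P.natDegree else 0 := by
        rw [smoothDegree, ← Finset.sum_filter]
        refine Finset.sum_le_sum_of_subset fun P hP => ?_
        obtain ⟨hPh, hPL⟩ := Finset.mem_filter.1 hP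
        obtain ⟨hmonic, hirr, hdvd⟩ := (mem_primeFactors_iff_monic h0).1 hPh
        exact Finset.mem_filter.2 ⟨Finset.mem_biUnion.2 ⟨_, Finset.mem_Icc.2
          ⟨hirr.natDegree_pos, hPL⟩, mem_monicIrreducibles.2 ⟨hmonic, hirr, rfl⟩⟩, hdvd⟩
    _ ≤ ∑ k ∈ Finset.Icc 1 L, ∑ P ∈ monicIrreducibles K k, if P ∣ h then P.natDegree else 0 :=
        (Finset.sum_biUnion fun _ _ _ _ hkl => Finset.disjoint_left.2 fun _ hPk hPl => hkl
          ((mem_monicIrreducibles.1 hPk).2.2.symm.trans (mem_monicIrreducibles.1 hPl).2.2)).le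
    _ = _ := Finset.sum_congr rfl fun _ _ => Finset.sum_congr rfl fun _ hP => by
        rw [(mem_monicIrreducibles.1 hP).2.2]

lemma sum_smoothDegree_le {α : Type*} (A : Finset α) (h : α → K[X]) {L T c : ℕ} (hL : L ≤ T)
    (hcount : ∀ P : K[X], P.Monic → Irreducible P → P.natDegree ≤ L →
      {x ∈ A | P ∣ h x}.card ≤ c * Nat.card K ^ (T - P.natDegree)) :
    ∑ x ∈ A, smoothDegree L (h x) ≤ L * (c * Nat.card K ^ T) := by
  calc ∑ x ∈ A, smoothDegree L (h x)
      ≤ ∑ x ∈ A, ∑ k ∈ Finset.Icc 1 L, ∑ P ∈ monicIrreducibles K k, if P ∣ h x then k else 0 :=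
        Finset.sum_le_sum fun x _ => smoothDegree_le_sum_monicIrreducibles L (h x)
    _ = ∑ k ∈ Finset.Icc 1 L, ∑ P ∈ monicIrreducibles K k, {x ∈ A | P ∣ h x}.card * k := by
        rw [Finset.sum_comm]
        refine Finset.sum_congr rfl fun k _ => ?_
        rw [Finset.sum_comm]
        simp only [← Finset.sum_filter, Finset.sum_const, smul_eq_mul]
    _ ≤ ∑ k ∈ Finset.Icc 1 L, c * Nat.card K ^ T := Finset.sum_le_sum fun k hk => ?_
    _ = L * (c * Nat.card K ^ T) := by simp
  obtain ⟨hk, hkL⟩ := Finset.mem_Icc.1 hk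
  calc ∑ P ∈ monicIrreducibles K k, {x ∈ A | P ∣ h x}.card * k
      ≤ ∑ P ∈ monicIrreducibles K k, c * Nat.card K ^ (T - k) * k := by
        refine Finset.sum_le_sum fun P hP => Nat.mul_le_mul_right k ?_
        obtain ⟨hmonic, hirr, rfl⟩ := mem_monicIrreducibles.1 hP
        exact hcount P hmonic hirr hkL
    _ = k * (monicIrreducibles K k).card * (c * Nat.card K ^ (T - k)) := by
        rw [Finset.sum_const, smul_eq_mul]; ring
    _ ≤ Nat.card K ^ k * (c * Nat.card K ^ (T - k)) :=
        Nat.mul_le_mul_right _ (mul_card_monicIrreducibles_le hk)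
    _ = c * Nat.card K ^ T := by
        rw [mul_left_comm, ← pow_add, Nat.add_sub_cancel' (hkL.trans hL)]

lemma card_dvd_homEval_affinePair_le (hf : f ≠ 0) (hUQ : IsCoprime U Q) {P : K[X]}
    (hP : Irreducible P) {M : ℕ} (hPM : P.natDegree ≤ M) :
    {x ∈ pairsDegreeLT K M | P ∣ homEval f (affinePair U Q x).1 (affinePair U Q x).2}.card ≤
      f.natDegree * Nat.card K ^ (2 * M - P.natDegree) := by
  by_cases hPQ : P ∣ Q
  · rw [Finset.filter_false_of_mem fun x _ => not_dvd_homEval_affinePair hf hUQ hP hPQ x,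
      Finset.card_empty]
    exact Nat.zero_le _
  · calc _ ≤ Nat.card K ^ (M - P.natDegree) * f.natDegree * Nat.card K ^ M :=
          card_filter_pairsDegreeLT_le
            (E := fun x => P ∣ homEval f (affinePair U Q x).1 (affinePair U Q x).2) fun b _ =>
              card_dvd_homEval_le hf hP (hP.coprime_iff_not_dvd.2 hPQ) U (Q * b) M
      _ = f.natDegree * Nat.card K ^ (2 * M - P.natDegree) := by
          rw [mul_right_comm, ← pow_add, mul_comm]
          congr 2
          omega

/- Markov's inequality: the mean of `smoothDegree L (F(u, v))` is at most `L deg f`. -/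
lemma mul_card_lt_smoothDegree_le (hf : f ≠ 0) (hUQ : IsCoprime U Q) {M m L c : ℕ} (hLM : L ≤ M)
    (hm : 0 < m) (hL : c * (L * f.natDegree) ≤ m) :
    c * {x ∈ pairsDegreeLT K M | m < smoothDegree L
      (homEval f (affinePair U Q x).1 (affinePair U Q x).2)}.card ≤ Nat.card K ^ (2 * M) := by
  set A := {x ∈ pairsDegreeLT K M | m < smoothDegree L
    (homEval f (affinePair U Q x).1 (affinePair U Q x).2)}
  have hmarkov : A.card * m ≤ L * (f.natDegree * Nat.card K ^ (2 * M)) :=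
    calc A.card * m
        ≤ ∑ x ∈ A, smoothDegree L (homEval f (affinePair U Q x).1 (affinePair U Q x).2) :=
          Finset.card_nsmul_le_sum A _ m fun x hx => (Finset.mem_filter.1 hx).2.le
      _ ≤ ∑ x ∈ pairsDegreeLT K M,
            smoothDegree L (homEval f (affinePair U Q x).1 (affinePair U Q x).2) :=
          Finset.sum_le_sum_of_subset (Finset.filter_subset _ _)
      _ ≤ L * (f.natDegree * Nat.card K ^ (2 * M)) :=
          sum_smoothDegree_le _ _ (by omega) fun P _ hP hPL =>
            card_dvd_homEval_affinePair_le hf hUQ hP (hPL.trans hLM)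
  refine Nat.le_of_mul_le_mul_right ?_ hm
  calc c * A.card * m = c * (A.card * m) := mul_assoc _ _ _
    _ ≤ c * (L * (f.natDegree * Nat.card K ^ (2 * M))) := Nat.mul_le_mul_left _ hmarkov
    _ = c * (L * f.natDegree) * Nat.card K ^ (2 * M) := by ring
    _ ≤ m * Nat.card K ^ (2 * M) := Nat.mul_le_mul_right _ hL
    _ = Nat.card K ^ (2 * M) * m := mul_comm _ _

end SmoothPart

/-! ### The sieve -/

section Sieve

variable {K : Type*} [Field K] {f U Q : K[X]}

/-- A sieve modulus of level `k`: a monic polynomial divisible by every prime of degree at most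
`k`. Its derivative vanishes, so that multiplication by it commutes with differentiation. -/
structure IsSieveModulus (k : ℕ) (Q : K[X]) : Prop where
  monic : Q.Monic
  derivative_eq_zero : derivative Q = 0
  dvd : ∀ P : K[X], P.Monic → Irreducible P → P.natDegree ≤ k → P ∣ Q

/-- `(u, v)` is a good pair of degree `m`: `u` is monic of degree `m > deg v`, the form `F(u, v)` is
squarefree, and the total degree of its primes of degree at most `L` is at most `m`. -/
structure IsGoodPair (f : K[X]) (L m : ℕ) (x : K[X] × K[X]) : Prop where
  monic : x.1.Monic
  natDegree_fst : x.1.natDegree = m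
  natDegree_snd_lt : x.2.natDegree < m
  squarefree : Squarefree (homEval f x.1 x.2)
  smoothDegree_le : smoothDegree L (homEval f x.1 x.2) ≤ m

lemma exists_sq_dvd_of_not_squarefree {h : K[X]} (h0 : h ≠ 0) (hsq : ¬ Squarefree h) :
    ∃ P : K[X], P.Monic ∧ Irreducible P ∧ P ^ 2 ∣ h := by
  rw [squarefree_iff_no_irreducibles h0] at hsq
  push Not at hsq
  obtain ⟨P, hP, hPP⟩ := hsq
  refine ⟨normalize P, monic_normalize hP.ne_zero,
    (normalize_associated P).symm.irreducible hP, ?_⟩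
  rw [← sq] at hPP
  exact ((normalize_associated P).pow_pow).dvd.trans hPP

lemma hasCommonPrime_or_of_not_squarefree (hf : f.Separable) {y : K[X] × K[X]} {k : ℕ}
    (h0 : homEval f y.1 y.2 ≠ 0)
    (hk : ∀ P : K[X], P.Monic → Irreducible P → P ∣ homEval f y.1 y.2 → k < P.natDegree)
    (hsq : ¬ Squarefree (homEval f y.1 y.2)) (M : ℕ) :
    HasCommonPrime k y ∨ HasMediumSquare f k M y ∨ HasLargeCriticalPrime f M y ∨
      IsDegenerate f y := by
  obtain ⟨P, hmonic, hirr, hP2⟩ := exists_sq_dvd_of_not_squarefree h0 hsq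
  have hP : P ∣ homEval f y.1 y.2 := (dvd_pow_self P two_ne_zero).trans hP2
  have hkP := hk P hmonic hirr hP
  by_cases hPv : P ∣ y.2
  · exact .inl ⟨P, hmonic, hirr, hkP, dvd_of_dvd_homEval hf.ne_zero hirr.prime hPv hP, hPv⟩
  replace hPv := hirr.coprime_iff_not_dvd.2 hPv
  by_cases hPM : P.natDegree ≤ M / 2
  · exact .inr (.inl ⟨P, hmonic, hirr, hkP, hPM, hPv, hP2⟩)
  by_cases hdeg : IsDegenerate f y
  · exact .inr (.inr (.inr hdeg))
  · exact .inr (.inr (.inl ⟨hdeg, P, hmonic, hirr, by omega, hPv,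
      dvd_homEval_derivation hf hirr.prime hPv hP2 derivative', hP⟩))

lemma lt_natDegree_of_dvd_homEval_affinePair {k : ℕ} (hf : f ≠ 0) (hQ : IsSieveModulus k Q)
    (hUQ : IsCoprime U Q) (x : K[X] × K[X]) {P : K[X]} (hmonic : P.Monic) (hirr : Irreducible P)
    (hP : P ∣ homEval f (affinePair U Q x).1 (affinePair U Q x).2) : k < P.natDegree := by
  by_contra! hk
  exact not_dvd_homEval_affinePair hf hUQ hirr (hQ.dvd P hmonic hirr hk) x hP

lemma affinePair_injective (hQ : Q ≠ 0) (U : K[X]) : Function.Injective (affinePair U Q) := by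
  rintro ⟨a, b⟩ ⟨a', b'⟩ h
  simp only [affinePair, Prod.mk.injEq, add_right_inj] at h
  exact Prod.ext (mul_left_cancel₀ hQ h.1) (mul_left_cancel₀ hQ h.2)

lemma natDegree_snd_affinePair_lt {M : ℕ} (hM : 0 < M) {x : K[X] × K[X]} (hx : x.2.degree < M) :
    (affinePair U Q x).2.natDegree < M + Q.natDegree := by
  rcases eq_or_ne x.2 0 with h0 | h0
  · simp only [affinePair, h0, mul_zero, natDegree_zero]
    omega
  · have := (natDegree_lt_iff_degree_lt h0).2 hx
    exact natDegree_mul_le.trans_lt (by omega)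

lemma monic_fst_affinePair (hQ : Q.Monic) {M : ℕ} (hM : 0 < M) {x : K[X] × K[X]}
    (hx : x.1.degree < M) :
    (affinePair (1 + Q * X ^ M) Q x).1.Monic ∧
      (affinePair (1 + Q * X ^ M) Q x).1.natDegree = M + Q.natDegree := by
  have hfactor : (affinePair (1 + Q * X ^ M) Q x).1 = Q * (X ^ M + x.1) + 1 := by
    simp only [affinePair]; ring
  have hmonic : (X ^ M + x.1).Monic := monic_X_pow_add hx
  have hnatDegree : (Q * (X ^ M + x.1)).natDegree = M + Q.natDegree := by
    rw [hQ.natDegree_mul hmonic, natDegree_add_eq_left_of_degree_lt (by rwa [degree_X_pow]),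
      natDegree_X_pow, add_comm]
  have hdegree : (1 : K[X]).degree < (Q * (X ^ M + x.1)).degree := by
    rw [degree_one, ← natDegree_pos_iff_degree_pos, hnatDegree]
    omega
  rw [hfactor]
  exact ⟨(hQ.mul hmonic).add_of_left hdegree,
    (natDegree_add_eq_left_of_degree_lt hdegree).trans hnatDegree⟩

lemma natDegree_one_add_mul_X_pow (hQ : Q.Monic) {M : ℕ} (hM : 0 < M) :
    (1 + Q * X ^ M).natDegree = M + Q.natDegree := by
  have h := (monic_fst_affinePair hQ hM (x := 0) (by simp)).2
  rwa [affinePair, Prod.fst_zero, mul_zero, add_zero] at h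

lemma card_le_add_of_forall_mem_or {α : Type*} {s : Finset α} {A B C : α → Prop}
    [DecidablePred A] [DecidablePred B] [DecidablePred C]
    (h : ∀ x ∈ s, A x ∨ B x ∨ C x) :
    s.card ≤ {x ∈ s | A x}.card + {x ∈ s | B x}.card + {x ∈ s | C x}.card := by
  refine (Finset.card_le_card fun x hx => ?_).trans <| (Finset.card_union_le _ _).trans <|
    Nat.add_le_add_right (Finset.card_union_le _ _) _
  simpa [hx, or_assoc] using h x hx

lemma mul_le_of_mul_le_mul {e r c t n : ℕ} (h : e * r ≤ c * t) (hr : n * c ≤ r) (hc : 0 < c) :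
    n * e ≤ t := by
  refine Nat.le_of_mul_le_mul_right ?_ hc
  calc n * e * c = e * (n * c) := by ring
    _ ≤ e * r := Nat.mul_le_mul_left e hr
    _ ≤ t * c := h.trans_eq (mul_comm c t)

variable [Finite K]

lemma homEval_affinePair_ne_zero (hd : 0 < f.natDegree) (hQ : Q.Monic) {M : ℕ} (hM : 0 < M)
    {x : K[X] × K[X]} (hx : x ∈ pairsDegreeLT K M) :
    homEval f (affinePair (1 + Q * X ^ M) Q x).1 (affinePair (1 + Q * X ^ M) Q x).2 ≠ 0 := by
  obtain ⟨hx₁, hx₂⟩ := mem_pairsDegreeLT.1 hx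
  have hfst := (monic_fst_affinePair hQ hM hx₁).2
  intro h
  have hdeg := natDegree_homEval f
    ((natDegree_snd_affinePair_lt (U := 1 + Q * X ^ M) hM hx₂).trans_eq hfst.symm)
  rw [h, natDegree_zero, hfst] at hdeg
  exact (Nat.mul_pos hd (by omega)).ne hdeg

lemma exists_isSieveModulus (K : Type*) [Field K] [Finite K] (k : ℕ) :
    ∃ Q : K[X], IsSieveModulus k Q := by
  obtain ⟨p, hp⟩ := CharP.exists K
  refine ⟨(∏ P ∈ (Finset.Icc 1 k).biUnion (monicIrreducibles K), P) ^ p,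
    Monic.pow (monic_prod_of_monic _ _ fun P hP => ?_) p, ?_, fun P hmonic hirr hk => ?_⟩
  · obtain ⟨l, -, hP⟩ := Finset.mem_biUnion.1 hP
    exact (mem_monicIrreducibles.1 hP).1
  · rw [derivative_pow, CharP.cast_eq_zero, C_0, zero_mul, zero_mul]
  · refine dvd_pow (Finset.dvd_prod_of_mem _ (Finset.mem_biUnion.2 ⟨P.natDegree, ?_, ?_⟩))
      (CharP.char_ne_zero_of_finite K p)
    · exact Finset.mem_Icc.2 ⟨hirr.natDegree_pos, hk⟩
    · exact mem_monicIrreducibles.2 ⟨hmonic, hirr, rfl⟩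

/- A repeated prime of `F(u, v)` has degree greater than `k`, since `F(u, v)` is a unit modulo the
primes dividing `Q`. -/
lemma card_not_squarefree_homEval_le_add (hf : Squarefree f) {k : ℕ} (hQ : IsSieveModulus k Q)
    (hUQ : IsCoprime U Q) {M : ℕ} (hne : ∀ x ∈ pairsDegreeLT K M,
      homEval f (affinePair U Q x).1 (affinePair U Q x).2 ≠ 0) :
    {x ∈ pairsDegreeLT K M |
      ¬ Squarefree (homEval f (affinePair U Q x).1 (affinePair U Q x).2)}.card ≤
        {x ∈ pairsDegreeLT K M | x.2 = 0}.card +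
        {x ∈ pairsDegreeLT K M | x.2 ≠ 0 ∧ HasCommonPrime k (affinePair U Q x)}.card +
        {x ∈ pairsDegreeLT K M | HasMediumSquare f k M (affinePair U Q x)}.card +
        {x ∈ pairsDegreeLT K M | HasLargeCriticalPrime f M (affinePair U Q x)}.card +
        {x ∈ pairsDegreeLT K M | IsDegenerate f (affinePair U Q x)}.card := by
  refine (Finset.card_le_card fun x hx => ?_).trans <| (Finset.card_union_le _ _).trans <|
    Nat.add_le_add_right ((Finset.card_union_le _ _).trans <| Nat.add_le_add_right
      ((Finset.card_union_le _ _).trans <| Nat.add_le_add_right (Finset.card_union_le _ _) _) _) _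
  obtain ⟨hxM, hsq⟩ := Finset.mem_filter.1 hx
  have hbad := hasCommonPrime_or_of_not_squarefree
    (PerfectField.separable_iff_squarefree.2 hf) (hne x hxM)
    (fun P => lt_natDegree_of_dvd_homEval_affinePair hf.ne_zero hQ hUQ x) hsq M
  simp only [Finset.mem_union, Finset.mem_filter, hxM, true_and]
  tauto

variable {p : ℕ} [CharP K p] [Fact p.Prime]

lemma card_not_squarefree_homEval_le (hf : Squarefree f) (hd : 0 < f.natDegree)
    (hQ : IsSieveModulus (8 * f.natDegree) Q) (hUQ : IsCoprime U Q) {N : ℕ}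
    (hN : 32 * f.natDegree ^ 2 ≤ N) (hU : U.natDegree ≤ 2 * (p * N)) (hQN : Q.natDegree ≤ p * N)
    (hne : ∀ x ∈ pairsDegreeLT K (p * N),
      homEval f (affinePair U Q x).1 (affinePair U Q x).2 ≠ 0) :
    8 * {x ∈ pairsDegreeLT K (p * N) |
      ¬ Squarefree (homEval f (affinePair U Q x).1 (affinePair U Q x).2)}.card ≤
        5 * Nat.card K ^ (2 * (p * N)) := by
  have hpow : ∀ {c n : ℕ}, c ≤ n → c ≤ Nat.card K ^ n := fun h =>
    h.trans (Nat.lt_pow_self Finite.one_lt_card).le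
  have hd2 : f.natDegree ≤ f.natDegree ^ 2 := Nat.le_self_pow two_ne_zero _
  have hNp : 2 * N ≤ p * N := Nat.mul_le_mul_right N (Fact.out : p.Prime).two_le
  have hzeros := mul_le_of_mul_le_mul (n := 8) (c := 1)
    ((card_snd_eq_zero_mul_le K (p * N)).trans_eq (one_mul _).symm) (hpow (by omega)) one_pos
  have hcommon := mul_le_of_mul_le_mul (n := 8) (c := 1)
    ((card_hasCommonPrime_mul_le hUQ (p * N) (8 * f.natDegree)).trans_eq (one_mul _).symm)
    (hpow (by omega)) one_pos
  have hmedium := mul_le_of_mul_le_mul (n := 8)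
    (card_hasMediumSquare_mul_le hf U Q (p * N) (8 * f.natDegree)) (hpow le_rfl) hd
  have hlarge := mul_le_of_mul_le_mul (n := 8)
    (card_hasLargeCriticalPrime_mul_le hf.ne_zero hQ.derivative_eq_zero (by omega) hU hQN)
    (hpow (by nlinarith)) (by positivity)
  have hdegenerate := mul_le_of_mul_le_mul (n := 8)
    (card_isDegenerate_mul_le hf.ne_zero hQ.derivative_eq_zero hQ.monic.ne_zero hNp U)
    (hpow (by omega)) hd
  have := card_not_squarefree_homEval_le_add hf hQ hUQ hne
  omega

lemma pow_le_card_isGoodPair (hf : Squarefree f) (hd : 0 < f.natDegree)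
    (hQ : IsSieveModulus (8 * f.natDegree) Q) {N : ℕ}
    (hN : 32 * f.natDegree ^ 2 + Q.natDegree < N) :
    Nat.card K ^ (2 * (p * N)) ≤ 4 * {x ∈ pairsDegreeLT K (p * N) |
      IsGoodPair f (p * N / (8 * f.natDegree)) (p * N + Q.natDegree)
        (affinePair (1 + Q * X ^ (p * N)) Q x)}.card := by
  have hM : N ≤ p * N := Nat.le_mul_of_pos_left N (Fact.out : p.Prime).pos
  have hUQ : IsCoprime (1 + Q * X ^ (p * N)) Q := ⟨1, -X ^ (p * N), by ring⟩
  have hirregular := card_not_squarefree_homEval_le hf hd hQ hUQ (by omega)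
    (by rw [natDegree_one_add_mul_X_pow hQ.monic (by omega)]; omega) (by omega)
    fun x hx => homEval_affinePair_ne_zero hd hQ.monic (by omega) hx
  have hsmooth := mul_card_lt_smoothDegree_le hf.ne_zero hUQ (M := p * N)
    (m := p * N + Q.natDegree) (L := p * N / (8 * f.natDegree)) (c := 8) (Nat.div_le_self _ _)
    (by omega) (by linarith [Nat.div_mul_le_self (p * N) (8 * f.natDegree)])
  have hcover := card_le_add_of_forall_mem_or (s := pairsDegreeLT K (p * N))
    (A := fun x => IsGoodPair f (p * N / (8 * f.natDegree)) (p * N + Q.natDegree)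
      (affinePair (1 + Q * X ^ (p * N)) Q x))
    (B := fun x => ¬ Squarefree (homEval f (affinePair (1 + Q * X ^ (p * N)) Q x).1
      (affinePair (1 + Q * X ^ (p * N)) Q x).2))
    (C := fun x => p * N + Q.natDegree < smoothDegree (p * N / (8 * f.natDegree))
      (homEval f (affinePair (1 + Q * X ^ (p * N)) Q x).1
        (affinePair (1 + Q * X ^ (p * N)) Q x).2)) fun x hx => by
    obtain ⟨hx₁, hx₂⟩ := mem_pairsDegreeLT.1 hx
    obtain ⟨hmonic, hnatDegree⟩ := monic_fst_affinePair hQ.monic (M := p * N) (by omega) hx₁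
    have hsnd := natDegree_snd_affinePair_lt (U := 1 + Q * X ^ (p * N)) (Q := Q) (by omega) hx₂
    rw [← not_le]
    by_contra! h
    exact h.1 ⟨hmonic, hnatDegree, hsnd, h.2.1, h.2.2⟩
  rw [card_pairsDegreeLT] at hcover
  omega

variable (p) in
lemma exists_finset_isGoodPair (hf : Squarefree f) (hd : 0 < f.natDegree) :
    ∃ s N₀ : ℕ, ∀ N, N₀ ≤ N → s ≤ p * N ∧ 0 < p * N ∧ ∃ G : Finset (K[X] × K[X]),
      Nat.card K ^ (2 * (p * N)) ≤ 4 * G.card ∧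
      ∀ x ∈ G, IsGoodPair f (p * N / (8 * f.natDegree)) (p * N + s) x := by
  obtain ⟨Q, hQ⟩ := exists_isSieveModulus K (8 * f.natDegree)
  refine ⟨Q.natDegree, 32 * f.natDegree ^ 2 + Q.natDegree + 1, fun N hN => ?_⟩
  have hM : N ≤ p * N := Nat.le_mul_of_pos_left N (Fact.out : p.Prime).pos
  refine ⟨by omega, by omega, Finset.image (affinePair (1 + Q * X ^ (p * N)) Q)
    {x ∈ pairsDegreeLT K (p * N) | IsGoodPair f (p * N / (8 * f.natDegree)) (p * N + Q.natDegree)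
      (affinePair (1 + Q * X ^ (p * N)) Q x)},
    ?_, fun y hy => ?_⟩
  · rw [Finset.card_image_of_injective _ (affinePair_injective hQ.monic.ne_zero _)]
    exact pow_le_card_isGoodPair hf hd hQ hN
  · obtain ⟨x, hx, rfl⟩ := Finset.mem_image.1 hy
    exact (Finset.mem_filter.1 hx).2

end Sieve

/-! ### Pairs with a prescribed value -/

section Fibres

variable {K : Type*} [Field K] {f h P : K[X]} {x y : K[X] × K[X]} {L m : ℕ}

/-- The set of monic primes of degree greater than `L` dividing `h`. -/
noncomputable def largePrimes (L : ℕ) (h : K[X]) : Finset K[X] :=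
  {P ∈ UniqueFactorizationMonoid.primeFactors h | L < P.natDegree}

/-- The residue of `u / v` modulo `P`, where `x = (u, v)` and `v` is a unit modulo `P`. -/
noncomputable def ratioMod (P : K[X]) (x : K[X] × K[X]) : AdjoinRoot P :=
  AdjoinRoot.mk P x.1 * Ring.inverse (AdjoinRoot.mk P x.2)

lemma mem_largePrimes (h0 : h ≠ 0) :
    P ∈ largePrimes L h ↔ (P.Monic ∧ Irreducible P ∧ P ∣ h) ∧ L < P.natDegree := by
  rw [largePrimes, Finset.mem_filter, mem_primeFactors_iff_monic h0]

lemma smoothDegree_add_sum_largePrimes (hsq : Squarefree h) (L : ℕ) :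
    smoothDegree L h + ∑ P ∈ largePrimes L h, P.natDegree = h.natDegree := by
  rw [← sum_natDegree_primeFactors_of_squarefree hsq, smoothDegree, largePrimes]
  simp only [← not_le]
  exact Finset.sum_filter_add_sum_filter_not _ _ _

lemma card_largePrimes_mul_le (h0 : h ≠ 0) (L : ℕ) :
    (largePrimes L h).card * (L + 1) ≤ h.natDegree :=
  (Finset.card_nsmul_le_sum _ _ _ fun _ hP => ((mem_largePrimes h0).1 hP).2).trans
    (sum_natDegree_le_of_monic_of_irreducible h0 fun _ hP => ((mem_largePrimes h0).1 hP).1)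

lemma isCoprime_snd_of_dvd_homEval (hf : f ≠ 0) (hx : IsCoprime x.1 x.2) (hP : Irreducible P)
    (hPf : P ∣ homEval f x.1 x.2) : IsCoprime P x.2 :=
  hP.coprime_iff_not_dvd.2 fun hPv =>
    hP.not_isUnit (hx.isUnit_of_dvd' (dvd_of_dvd_homEval hf hP.prime hPv hPf) hPv)

lemma mk_fst_eq_ratioMod_mul (hx : IsCoprime P x.2) :
    AdjoinRoot.mk P x.1 = ratioMod P x * AdjoinRoot.mk P x.2 := by
  have hunit := hx.map (AdjoinRoot.mk P)
  rw [AdjoinRoot.mk_self, isCoprime_zero_left] at hunit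
  rw [ratioMod, mul_assoc, Ring.inverse_mul_cancel _ hunit, mul_one]

lemma dvd_cross_sub_of_ratioMod_eq (hx : IsCoprime P x.2) (hy : IsCoprime P y.2)
    (hxy : ratioMod P x = ratioMod P y) : P ∣ x.1 * y.2 - y.1 * x.2 := by
  rw [← AdjoinRoot.mk_eq_mk, map_mul, map_mul, mk_fst_eq_ratioMod_mul hx,
    mk_fst_eq_ratioMod_mul hy, hxy]
  ring

lemma aeval_ratioMod_eq_zero (hx : IsCoprime P x.2) (hPf : P ∣ homEval f x.1 x.2) :
    aeval (ratioMod P x) f = 0 := by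
  obtain ⟨g, hg, hfg⟩ := exists_dvd_sub_mul_and_dvd_aeval hx hPf
  have hunit := hx.map (AdjoinRoot.mk P)
  rw [AdjoinRoot.mk_self, isCoprime_zero_left] at hunit
  have hratio : ratioMod P x = AdjoinRoot.mkₐ P g := hunit.mul_left_injective <| by
    rw [← AdjoinRoot.mk_eq_mk, map_mul, mk_fst_eq_ratioMod_mul hx] at hg
    exact hg
  rw [hratio, aeval_algHom_apply]
  exact AdjoinRoot.mk_eq_zero.2 hfg

lemma card_image_ratioMod_le (hf : f ≠ 0) (hP : Irreducible P) {T : Finset (K[X] × K[X])}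
    (hT : ∀ x ∈ T, IsCoprime P x.2 ∧ P ∣ homEval f x.1 x.2) :
    (T.image (ratioMod P)).card ≤ f.natDegree := by
  have : Fact (Irreducible P) := ⟨hP⟩
  rw [← natDegree_map (algebraMap K (AdjoinRoot P))]
  refine card_le_degree_of_subset_roots fun y hy => ?_
  obtain ⟨x, hx, rfl⟩ := Finset.mem_image.1 hy
  rw [mem_roots (map_ne_zero hf), IsRoot.def, eval_map_algebraMap]
  exact aeval_ratioMod_eq_zero (hT x hx).1 (hT x hx).2

lemma eq_of_cross_eq (hx : x.1.Monic) (hy : y.1.Monic) (hcx : IsCoprime x.1 x.2)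
    (hcy : IsCoprime y.1 y.2) (hxy : x.1 * y.2 = y.1 * x.2) : x = y := by
  have hfst : x.1 = y.1 := eq_of_monic_of_associated hx hy <| associated_of_dvd_dvd
    (hcx.dvd_of_dvd_mul_right (hxy ▸ dvd_mul_right _ _))
    (hcy.dvd_of_dvd_mul_right (hxy ▸ dvd_mul_right _ _))
  refine Prod.ext hfst (mul_left_cancel₀ hx.ne_zero ?_)
  rw [hxy, hfst]

/- The product of the large primes has degree at least `3m - m`, more than that of the
determinant of `x` and `y`, which it divides. -/
lemma IsGoodPair.eq_of_ratioMod_eq (hd : 3 ≤ f.natDegree) (hx : IsGoodPair f L m x)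
    (hy : IsGoodPair f L m y) (hxy : homEval f x.1 x.2 = homEval f y.1 y.2)
    (hratio : ∀ P ∈ largePrimes L (homEval f x.1 x.2), ratioMod P x = ratioMod P y) : x = y := by
  have hf : f ≠ 0 := ne_zero_of_natDegree_gt hd
  have h0 := hx.squarefree.ne_zero
  have hcx := isCoprime_of_squarefree_homEval (by omega) hx.squarefree
  have hcy := isCoprime_of_squarefree_homEval (by omega) hy.squarefree
  refine eq_of_cross_eq hx.monic hy.monic hcx hcy (by_contra fun hne => ?_)
  have hlarge : ∑ P ∈ largePrimes L (homEval f x.1 x.2), P.natDegree ≤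
      (x.1 * y.2 - y.1 * x.2).natDegree := by
    refine sum_natDegree_le_of_monic_of_irreducible (sub_ne_zero.2 hne) fun P hP => ?_
    obtain ⟨⟨hmonic, hirr, hdvd⟩, -⟩ := (mem_largePrimes h0).1 hP
    exact ⟨hmonic, hirr, dvd_cross_sub_of_ratioMod_eq
      (isCoprime_snd_of_dvd_homEval hf hcx hirr hdvd)
      (isCoprime_snd_of_dvd_homEval hf hcy hirr (hxy ▸ hdvd)) (hratio P hP)⟩
  have hcross : (x.1 * y.2 - y.1 * x.2).natDegree < 2 * m := by
    have h₁ := natDegree_mul_le (p := x.1) (q := y.2)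
    have h₂ := natDegree_mul_le (p := y.1) (q := x.2)
    have := natDegree_sub_le (x.1 * y.2) (y.1 * x.2)
    have := hx.natDegree_fst
    have := hy.natDegree_fst
    have := hx.natDegree_snd_lt
    have := hy.natDegree_snd_lt
    omega
  have hsum := smoothDegree_add_sum_largePrimes hx.squarefree L
  rw [natDegree_homEval f (hx.natDegree_snd_lt.trans_eq hx.natDegree_fst.symm),
    hx.natDegree_fst] at hsum
  have := hx.smoothDegree_le
  have := Nat.mul_le_mul_right m hd
  omega

lemma card_le_pow_card_largePrimes (hd : 3 ≤ f.natDegree) (h0 : h ≠ 0) {T : Finset (K[X] × K[X])}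
    (hT : ∀ x ∈ T, IsGoodPair f L m x ∧ homEval f x.1 x.2 = h) :
    T.card ≤ f.natDegree ^ (largePrimes L h).card := by
  have hf : f ≠ 0 := ne_zero_of_natDegree_gt hd
  calc T.card ≤ ((largePrimes L h).pi fun P => T.image (ratioMod P)).card := by
        refine Finset.card_le_card_of_injOn (fun x P _ => ratioMod P x)
          (fun x hx => Finset.mem_pi.2 fun P _ => Finset.mem_image_of_mem _ hx)
          fun x hx y hy hxy => ?_
        obtain ⟨hx, rfl⟩ := hT x hx
        obtain ⟨hy, hyx⟩ := hT y hy
        exact hx.eq_of_ratioMod_eq hd hy hyx.symm fun P hP => congrFun (congrFun hxy P) hP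
    _ = ∏ P ∈ largePrimes L h, (T.image (ratioMod P)).card := Finset.card_pi _ _
    _ ≤ f.natDegree ^ (largePrimes L h).card := by
        refine Finset.prod_le_pow_card _ _ _ fun P hP => ?_
        obtain ⟨⟨-, hirr, hdvd⟩, -⟩ := (mem_largePrimes h0).1 hP
        refine card_image_ratioMod_le hf hirr fun x hx => ?_
        obtain ⟨hx, rfl⟩ := hT x hx
        exact ⟨isCoprime_snd_of_dvd_homEval hf
          (isCoprime_of_squarefree_homEval (by omega) hx.squarefree) hirr hdvd, hdvd⟩

lemma card_largePrimes_le {M : ℕ} (hM : 0 < M) (h0 : h ≠ 0) {d : ℕ} (hd : 0 < d)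
    (hdeg : h.natDegree ≤ d * (2 * M)) : (largePrimes (M / (8 * d)) h).card ≤ 16 * d ^ 2 := by
  have hcard := (card_largePrimes_mul_le h0 (M / (8 * d))).trans hdeg
  have hlt : M < 8 * d * (M / (8 * d) + 1) := Nat.lt_mul_div_succ M (by omega)
  refine Nat.le_of_mul_le_mul_right ?_ hM
  calc (largePrimes (M / (8 * d)) h).card * M
      ≤ (largePrimes (M / (8 * d)) h).card * (8 * d * (M / (8 * d) + 1)) :=
        Nat.mul_le_mul_left _ hlt.le
    _ = 8 * d * ((largePrimes (M / (8 * d)) h).card * (M / (8 * d) + 1)) := by ring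
    _ ≤ 8 * d * (d * (2 * M)) := Nat.mul_le_mul_left _ hcard
    _ = 16 * d ^ 2 * M := by ring

lemma card_isGoodPair_le {M s : ℕ} (hM : 0 < M) (hs : s ≤ M) (hd : 3 ≤ f.natDegree)
    {T : Finset (K[X] × K[X])}
    (hT : ∀ x ∈ T, IsGoodPair f (M / (8 * f.natDegree)) (M + s) x ∧ homEval f x.1 x.2 = h) :
    T.card ≤ f.natDegree ^ (16 * f.natDegree ^ 2) := by
  obtain rfl | ⟨x, hx⟩ := T.eq_empty_or_nonempty
  · exact Nat.zero_le _
  obtain ⟨hgood, hxh⟩ := hT x hx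
  have h0 : h ≠ 0 := hxh ▸ hgood.squarefree.ne_zero
  refine (card_le_pow_card_largePrimes hd h0 hT).trans (Nat.pow_le_pow_right (by omega) ?_)
  refine card_largePrimes_le hM h0 (by omega) ?_
  rw [← hxh]
  exact natDegree_homEval_le f (by have := hgood.natDegree_fst; omega)
    (by have := hgood.natDegree_snd_lt; omega)

lemma homEval_of_natDegree_eq_one (hf : f.natDegree = 1) (u v : K[X]) :
    homEval f u v = C (f.coeff 1) * u + C (f.coeff 0) * v := by
  simp [homEval_eq_sum, hf, Finset.sum_range_succ, add_comm]

lemma coeff_det_ne_zero {g : K[X]} (hf : f.natDegree = 1) (hg : g.natDegree = 1)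
    (hfg : IsCoprime f g) : f.coeff 1 * g.coeff 0 - f.coeff 0 * g.coeff 1 ≠ 0 := by
  intro hdet
  have hcomb : f * C (g.coeff 1) = g * C (f.coeff 1) := by
    have hC := congrArg C hdet
    simp only [C_sub, C_mul, C_0] at hC
    have hf' := eq_X_add_C_of_natDegree_le_one hf.le
    have hg' := eq_X_add_C_of_natDegree_le_one hg.le
    linear_combination C (g.coeff 1) * hf' - C (f.coeff 1) * hg' - hC
  have hlead : f.coeff 1 ≠ 0 := by
    rw [← hf, coeff_natDegree, leadingCoeff_ne_zero]
    exact ne_zero_of_natDegree_gt (hf ▸ one_pos)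
  have hunit : IsUnit f := isUnit_of_dvd_unit
    (hfg.dvd_of_dvd_mul_left ⟨_, hcomb.symm⟩) (isUnit_C.2 hlead.isUnit)
  exact one_ne_zero (hf.symm.trans (natDegree_eq_zero_of_isUnit hunit))

lemma eq_of_homEval_eq_of_natDegree_eq_one {g : K[X]} (hf : f.natDegree = 1)
    (hg : g.natDegree = 1) (hfg : IsCoprime f g) (hxf : homEval f x.1 x.2 = homEval f y.1 y.2)
    (hxg : homEval g x.1 x.2 = homEval g y.1 y.2) : x = y := by
  have hdet := C_ne_zero.2 (coeff_det_ne_zero hf hg hfg)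
  rw [C_sub, C_mul, C_mul] at hdet
  rw [homEval_of_natDegree_eq_one hf, homEval_of_natDegree_eq_one hf] at hxf
  rw [homEval_of_natDegree_eq_one hg, homEval_of_natDegree_eq_one hg] at hxg
  refine Prod.ext (mul_left_cancel₀ hdet ?_) (mul_left_cancel₀ hdet ?_)
  · linear_combination C (g.coeff 0) * hxf - C (f.coeff 0) * hxg
  · linear_combination C (f.coeff 1) * hxg - C (g.coeff 1) * hxf

end Fibres

/-! ### Counting tuples -/

section Tuples

variable {K : Type*} [Field K] {ι : Type*} [Fintype ι] {f : ι → K[X]}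

/-- `D` is a tuple of pairwise coprime squarefree polynomials of total degree at most `n` of the
form `(F_i(u, v))_i`. -/
structure IsSpecialization (f : ι → K[X]) (n : ℕ) (D : ι → K[X]) : Prop where
  squarefree : ∀ i, Squarefree (D i)
  isCoprime : ∀ i j, i ≠ j → IsCoprime (D i) (D j)
  sum_natDegree_le : ∑ i, (D i).natDegree ≤ n
  eq_homEval : ∃ u v : K[X], ∀ i, D i = homEval (f i) u v

lemma isSpecialization_iff {D : ι → K[X]} {n : ℕ} :
    IsSpecialization f n D ↔ (∀ i, Squarefree (D i)) ∧ (∀ i j, i ≠ j → IsCoprime (D i) (D j)) ∧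
      (∑ i, (D i).natDegree) ≤ n ∧ ∃ u v : K[X], ∀ i, D i =
        ∑ j ∈ Finset.range ((f i).natDegree + 1),
          C ((f i).coeff j) * u ^ j * v ^ ((f i).natDegree - j) := by
  refine ⟨fun ⟨hsqf, hcop, hdeg, huv⟩ => ⟨hsqf, hcop, hdeg, ?_⟩,
    fun ⟨hsqf, hcop, hdeg, huv⟩ => ⟨hsqf, hcop, hdeg, ?_⟩⟩ <;>
  simpa only [homEval_eq_sum, algebraMap_eq] using huv

lemma isCoprime_of_squarefree_prod {g : ι → K[X]} (hg : Squarefree (∏ i, g i)) {i j : ι}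
    (hij : i ≠ j) : IsCoprime (g i) (g j) := by
  refine (IsRelPrime.of_squarefree_mul (hg.squarefree_of_dvd ?_)).isCoprime
  rw [← Finset.prod_pair hij]
  exact Finset.prod_dvd_prod_of_subset _ _ _ (Finset.subset_univ _)

lemma isSpecialization_of_squarefree_prod {x : K[X] × K[X]} {m : ℕ}
    (hsq : Squarefree (∏ i, homEval (f i) x.1 x.2)) (hx₁ : x.1.natDegree ≤ m)
    (hx₂ : x.2.natDegree ≤ m) :
    IsSpecialization f ((∑ i, (f i).natDegree) * m) fun i => homEval (f i) x.1 x.2 where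
  squarefree i := hsq.squarefree_of_dvd
    (Finset.dvd_prod_of_mem (fun i => homEval (f i) x.1 x.2) (Finset.mem_univ i))
  isCoprime _ _ := isCoprime_of_squarefree_prod hsq
  sum_natDegree_le := by
    rw [Finset.sum_mul]
    exact Finset.sum_le_sum fun i _ => natDegree_homEval_le (f i) hx₁ hx₂
  eq_homEval := ⟨x.1, x.2, fun _ => rfl⟩

lemma card_fibre_le {G : Finset (K[X] × K[X])} {M s : ℕ} (hM : 0 < M) (hs : s ≤ M)
    (hG : ∀ x ∈ G, IsGoodPair (∏ i, f i) (M / (8 * (∏ i, f i).natDegree)) (M + s) x)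
    (hcop : ∀ i j, i ≠ j → IsCoprime (f i) (f j)) (hd : 0 < (∏ i, f i).natDegree)
    (hcase : 3 ≤ (∏ i, f i).natDegree ∨
      ∃ i j, i ≠ j ∧ (f i).natDegree = 1 ∧ (f j).natDegree = 1) (D : ι → K[X]) :
    {x ∈ G | (fun i => homEval (f i) x.1 x.2) = D}.card ≤
      (∏ i, f i).natDegree ^ (16 * (∏ i, f i).natDegree ^ 2) := by
  rcases hcase with hd3 | ⟨i, j, hij, hi, hj⟩
  · refine card_isGoodPair_le (h := ∏ i, D i) hM hs hd3 fun x hx => ?_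
    obtain ⟨hxG, rfl⟩ := Finset.mem_filter.1 hx
    exact ⟨hG x hxG, homEval_prod _ _ _ _⟩
  · refine (Finset.card_le_one.2 fun x hx y hy => ?_).trans (Nat.one_le_pow _ _ hd)
    have hxy := (Finset.mem_filter.1 hx).2.trans (Finset.mem_filter.1 hy).2.symm
    exact eq_of_homEval_eq_of_natDegree_eq_one hi hj (hcop i j hij) (congrFun hxy i)
      (congrFun hxy j)

variable [Finite K]

lemma finite_setOf_isSpecialization (f : ι → K[X]) (n : ℕ) :
    {D | IsSpecialization f n D}.Finite := by
  refine (Set.Finite.pi' fun _ : ι => (polysDegreeLT K (n + 1)).finite_toSet).subset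
    fun D hD i => ?_
  rw [Finset.mem_coe, mem_polysDegreeLT]
  refine degree_le_natDegree.trans_lt
    (Nat.cast_lt.2 (Nat.lt_succ_of_le (le_trans ?_ hD.sum_natDegree_le)))
  exact Finset.single_le_sum (f := fun i => (D i).natDegree) (fun _ _ => Nat.zero_le _)
    (Finset.mem_univ i)

lemma exists_pow_le_mul_card_isSpecialization (hsqf : ∀ i, Squarefree (f i))
    (hcop : ∀ i j, i ≠ j → IsCoprime (f i) (f j)) {d : ℕ} (hd : d = ∑ i, (f i).natDegree)
    (hcase : 3 ≤ d ∨ ∃ i j, i ≠ j ∧ (f i).natDegree = 1 ∧ (f j).natDegree = 1) (hd0 : 0 < d)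
    (p : ℕ) [CharP K p] [Fact p.Prime] :
    ∃ s N₀ c : ℕ, 0 < c ∧ ∀ N, N₀ ≤ N → Nat.card K ^ (2 * (p * N)) ≤
      c * Nat.card {D : ι → K[X] // IsSpecialization f (d * (p * N + s)) D} := by
  have hsq : Squarefree (∏ i, f i) := Finset.squarefree_prod_of_pairwise_isCoprime
    (fun i _ j _ hij => (hcop i j hij).isRelPrime) fun i _ => hsqf i
  have hdeg : (∏ i, f i).natDegree = d := by
    rw [natDegree_prod _ _ fun i _ => (hsqf i).ne_zero, hd]
  obtain ⟨s, N₀, hgood⟩ := exists_finset_isGoodPair p hsq (hdeg ▸ hd0)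
  refine ⟨s, N₀, 4 * d ^ (16 * d ^ 2), by positivity, fun N hN => ?_⟩
  obtain ⟨hs, hM, G, hcard, hG⟩ := hgood N hN
  have hfibre := Finset.card_le_mul_card_image (f := fun x i => homEval (f i) x.1 x.2) G _
    fun D _ => card_fibre_le hM hs hG hcop (hdeg ▸ hd0) (hdeg ▸ hcase) D
  have hspec : ∀ D ∈ G.image fun x i => homEval (f i) x.1 x.2,
      IsSpecialization f (d * (p * N + s)) D := fun D hD => by
    obtain ⟨x, hx, rfl⟩ := Finset.mem_image.1 hD
    rw [hd]
    exact isSpecialization_of_squarefree_prod (homEval_prod _ f x.1 x.2 ▸ (hG x hx).squarefree)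
      (hG x hx).natDegree_fst.le (hG x hx).natDegree_snd_lt.le
  have himage : (G.image fun x i => homEval (f i) x.1 x.2).card ≤
      Nat.card {D : ι → K[X] // IsSpecialization f (d * (p * N + s)) D} := by
    rw [← Set.ncard_coe_finset]
    exact Set.ncard_le_ncard hspec (finite_setOf_isSpecialization f _)
  rw [hdeg] at hfibre
  calc _ ≤ 4 * G.card := hcard
    _ ≤ _ := by
      rw [mul_assoc]
      exact Nat.mul_le_mul_left 4 (hfibre.trans (Nat.mul_le_mul_left _ himage))

lemma card_isSpecialization_mono {f : ι → K[X]} : Monotone fun n =>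
    Nat.card {D : ι → K[X] // IsSpecialization f n D} := fun _ n hmn =>
  Set.ncard_le_ncard (fun _ hD => ⟨hD.1, hD.2, hD.3.trans hmn, hD.4⟩)
    (finite_setOf_isSpecialization f n)

end Tuples

lemma exists_pos_mul_rpow_le {count : ℕ → ℕ} (hmono : Monotone count) {q d p : ℕ} (hq : 0 < q)
    (hd : 0 < d) (hp : 0 < p) {s N₀ c : ℕ} (hc : 0 < c)
    (h : ∀ N, N₀ ≤ N → q ^ (2 * (p * N)) ≤ c * count (d * (p * N + s))) :
    ∃ B : ℝ, 0 < B ∧ ∃ N : ℕ, ∀ n : ℕ, N < n →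
      B * (q : ℝ) ^ (2 * (n : ℝ) / (d : ℝ)) ≤ count n := by
  refine ⟨1 / (c * (q : ℝ) ^ (2 * (p + s))), by positivity, d * (p * N₀ + s), fun n hn => ?_⟩
  obtain ⟨N, hN, hNn, hnN⟩ : ∃ N, N₀ ≤ N ∧ d * (p * N + s) ≤ n ∧ n ≤ d * (p * N + (p + s)) := by
    have hs : p * N₀ + s ≤ n / d := (Nat.le_div_iff_mul_le hd).2 (by linarith)
    have hlow := Nat.mul_div_le (n / d - s) p
    have hhigh := Nat.lt_mul_div_succ (n / d - s) hp
    rw [mul_add_one] at hhigh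
    refine ⟨(n / d - s) / p, (Nat.le_div_iff_mul_le hp).2 (by rw [mul_comm]; omega), ?_, ?_⟩
    · exact (Nat.mul_le_mul_left d (by omega)).trans (Nat.mul_div_le n d)
    · exact (Nat.lt_mul_div_succ n hd).le.trans (Nat.mul_le_mul_left d (by omega))
  have hexponent : 2 * (n : ℝ) / d ≤ (2 * (p * N) + 2 * (p + s) : ℕ) := by
    rw [div_le_iff₀ (by positivity)]
    exact_mod_cast (by linarith : 2 * n ≤ (2 * (p * N) + 2 * (p + s)) * d)
  rw [one_div, inv_mul_le_iff₀ (by positivity)]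
  calc (q : ℝ) ^ (2 * (n : ℝ) / (d : ℝ)) ≤ q ^ (2 * (p * N)) * q ^ (2 * (p + s)) := by
        rw [← pow_add, ← Real.rpow_natCast]
        exact Real.rpow_le_rpow_of_exponent_le (by exact_mod_cast hq) hexponent
    _ ≤ c * count n * q ^ (2 * (p + s)) := by
        gcongr
        exact_mod_cast (h N hN).trans (Nat.mul_le_mul_left c (hmono hNn))
    _ = c * q ^ (2 * (p + s)) * count n := by ring

/- A single nonzero `a i` would be at most `2`, and the congruence would force the prime `ℓ` to
divide `i + 1 < ℓ` or `a i < ℓ`. -/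
lemma three_le_sum_or_exists_eq_one {ℓ : ℕ} (hℓ : ℓ.Prime) (hodd : Odd ℓ) {a : Fin (ℓ - 1) → ℕ}
    (hpos : 1 ≤ ∑ i, a i) (hmod : (∑ i : Fin (ℓ - 1), ((i : ℕ) + 1) * a i) % ℓ = 0) :
    3 ≤ ∑ i, a i ∨ ∃ i j, i ≠ j ∧ a i = 1 ∧ a j = 1 := by
  obtain ⟨i, -, hi⟩ := Finset.exists_ne_zero_of_sum_ne_zero (Nat.one_le_iff_ne_zero.1 hpos)
  by_cases hsingle : ∀ j, j ≠ i → a j = 0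
  · have hdvd := Nat.dvd_of_mod_eq_zero hmod
    rw [Fintype.sum_eq_single i fun j hj => by rw [hsingle j hj, mul_zero]] at hdvd
    left
    rw [Fintype.sum_eq_single i hsingle]
    have hℓi := (hℓ.dvd_mul.1 hdvd).resolve_left
      (Nat.not_dvd_of_pos_of_lt (Nat.succ_pos _) (by omega))
    have := Nat.le_of_dvd (Nat.pos_of_ne_zero hi) hℓi
    have := hℓ.two_le
    obtain ⟨k, rfl⟩ := hodd
    omega
  · push Not at hsingle
    obtain ⟨j, hji, hj⟩ := hsingle
    have hpair := Finset.sum_le_sum_of_subset (f := a) (Finset.subset_univ {i, j})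
    rw [Finset.sum_pair hji.symm] at hpair
    by_cases h3 : 3 ≤ ∑ i, a i
    · exact .inl h3
    · exact .inr ⟨i, j, hji.symm, by omega, by omega⟩

end SuperellipticCount

theorem stmt_0_general {K : Type*} [Field K] [Finite K] {ι : Type*} [Fintype ι] (f : ι → K[X])
    (hsqf : ∀ i, Squarefree (f i)) (hcop : ∀ i j, i ≠ j → IsCoprime (f i) (f j))
    (d : ℕ) (hd : d = ∑ i, (f i).natDegree)
    (hcase : 3 ≤ d ∨ ∃ i j, i ≠ j ∧ (f i).natDegree = 1 ∧ (f j).natDegree = 1) :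
    ∃ B : ℝ, 0 < B ∧ ∃ N : ℕ, ∀ n : ℕ, N < n →
      B * (Nat.card K : ℝ) ^ (2 * (n : ℝ) / (d : ℝ)) ≤
        (Nat.card {D : ι → K[X] //
          (∀ i, Squarefree (D i)) ∧
          (∀ i j, i ≠ j → IsCoprime (D i) (D j)) ∧
          (∑ i, (D i).natDegree) ≤ n ∧
          ∃ u v : K[X], ∀ i, D i =
            ∑ j ∈ Finset.range ((f i).natDegree + 1),
              C ((f i).coeff j) * u ^ j * v ^ ((f i).natDegree - j)} : ℝ) := by
  have hd0 : 0 < d := by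
    rcases hcase with h | ⟨i, -, -, hi, -⟩
    · omega
    · exact hd ▸ Finset.sum_pos' (fun _ _ => Nat.zero_le _) ⟨i, Finset.mem_univ i, by omega⟩
  obtain ⟨p, _⟩ := CharP.exists K
  have : Fact p.Prime := ⟨CharP.char_is_prime K p⟩
  obtain ⟨s, N₀, c, hc, h⟩ :=
    SuperellipticCount.exists_pow_le_mul_card_isSpecialization hsqf hcop hd hcase hd0 p
  simpa only [SuperellipticCount.isSpecialization_iff] using
    SuperellipticCount.exists_pos_mul_rpow_le SuperellipticCount.card_isSpecialization_mono
      Nat.card_pos hd0 (Fact.out : p.Prime).pos hc h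

/-- Theorem 3.8 (counting content): lower bound on the number of tuples
`(D₁, …, D_{ℓ-1})` of pairwise coprime squarefree polynomials with
`∑ deg Dᵢ ≤ n` and `Dᵢ = Fᵢ(u, v)` for some `u, v`, where `Fᵢ` is the
homogenization of `fᵢ`. -/
theorem stmt_0 (p e q ℓ : ℕ) (hp : p.Prime) (hpodd : Odd p) (he : 0 < e) (hq : q = p ^ e)
    (hℓ : ℓ.Prime) (hℓodd : Odd ℓ) (hℓq : ¬ (ℓ ∣ q))
    (Fq : Type) [Field Fq] [Fintype Fq] (hcard : Fintype.card Fq = q)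
    (f : Fin (ℓ - 1) → Fq[X])
    (hsqf : ∀ i, Squarefree (f i))
    (hcop : ∀ i j, i ≠ j → IsCoprime (f i) (f j))
    (d : ℕ) (hd : d = ∑ i, (f i).natDegree) (hd1 : 1 ≤ d)
    (hmod : (∑ i : Fin (ℓ - 1), ((i : ℕ) + 1) * (f i).natDegree) % ℓ = 0)
    (hnot : ¬ ∃ (c g : Fq[X]) (k : ℕ), IsUnit c ∧ Irreducible g ∧
      (∏ i : Fin (ℓ - 1), (f i) ^ ((i : ℕ) + 1)) = c * g ^ k) :
    ∀ ε : ℝ, 0 < ε → ∃ B : ℝ, 0 < B ∧ ∃ N : ℕ, ∀ n : ℕ, N < n →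
      (B * (q : ℝ) ^ ((2 * (n : ℝ) / (d : ℝ)) - ε) : ℝ) ≤
        (Nat.card {D : Fin (ℓ - 1) → Fq[X] //
          (∀ i, Squarefree (D i)) ∧
          (∀ i j, i ≠ j → IsCoprime (D i) (D j)) ∧
          (∑ i, (D i).natDegree) ≤ n ∧
          ∃ u v : Fq[X], ∀ i, D i =
            ∑ j ∈ Finset.range ((f i).natDegree + 1),
              Polynomial.C ((f i).coeff j) * u ^ j * v ^ ((f i).natDegree - j)} : ℝ) := by
  intro ε hε
  have hcase := SuperellipticCount.three_le_sum_or_exists_eq_one hℓ hℓodd (hd ▸ hd1) hmod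
  obtain ⟨B, hB, N, hN⟩ := stmt_0_general f hsqf hcop d hd (hd ▸ hcase)
  rw [Nat.card_eq_fintype_card, hcard] at hN
  refine ⟨B, hB, N, fun n hn => le_trans ?_ (hN n hn)⟩
  gcongr
  · exact_mod_cast hcard ▸ Fintype.card_pos
  · exact sub_le_self _ hε.le
end

section
/- Let q be an odd prime power not divisible by 3. Then for every ε > 0 there exist a real constant B > 0 and a natural number N such that for every integer n > N, the number of squarefree polynomials D ∈ 𝔽_q[t] with deg D ≤ n for which there exist u, v ∈ 𝔽_q[t] with D = u·(u − v)·(u + v), is at least B · q^{(2n/3) − ε}. -/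
open Polynomial

/-!
Restrict to `u = aP` with `P` a monic irreducible polynomial of degree `d` in `[2m/3, m]`, `a` monic
of degree `j = m - d`, and `deg v < m`. A sieve over squares of irreducibles keeps a positive
proportion, of order `q ^ (2 * j + d)`, of the pairs `(a, v)`: the associated values
`u (u - v) (u + v)` are squarefree. If `(a, v)` and `(a', v')` give the same value, then `(v, v')`
lies on the conic `a x ^ 2 - a' y ^ 2 = P ^ 2 (a ^ 3 - a' ^ 3)`. For `a = a'` this means `v' = ± v`;
for `a ≠ a'`, two points on the conic satisfy `v w' ≡ ± v' w` modulo `P ^ 2`, and since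
`deg (v w' ∓ v' w) < 2 m` this puts all points on `O (q ^ (2 * j))` lines relative to a fixed base
point, each meeting the conic at most twice. As `2 * j ≤ d`, there are `O (q ^ (2 * j + d))`
collisions, so by Cauchy–Schwarz the values attached to `P` number at least a constant times
`q ^ (2 * j + d) = q ^ (2 * m) / q ^ d`. A value has degree `3 * m`, so it is attached to at most
four such `P`, and `∑ 1 / q ^ deg P` over these `P` is bounded below by the count of irreducibles.
-/

namespace SquarefreeCubicForm

open Finset

section Combinatorics

variable {ι α β : Type*}

theorem card_sq_le_card_image_mul_card_collisions [DecidableEq β] (s : Finset α) (f : α → β) :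
    #s ^ 2 ≤ #(s.image f) * #{x ∈ s ×ˢ s | f x.1 = f x.2} := by
  have fiber_sq (b : β) : #{x ∈ s ×ˢ s | f x.1 = f x.2 ∧ f x.1 = b} = #{x ∈ s | f x = b} ^ 2 := by
    rw [sq, ← card_product]
    congr 1
    grind
  calc #s ^ 2 = (∑ b ∈ s.image f, #{x ∈ s | f x = b}) ^ 2 := by
        rw [← card_eq_sum_card_image]
    _ ≤ #(s.image f) * ∑ b ∈ s.image f, #{x ∈ s | f x = b} ^ 2 := sq_sum_le_card_mul_sum_sq
    _ = #(s.image f) * #{x ∈ s ×ˢ s | f x.1 = f x.2} := by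
        rw [card_eq_sum_card_fiberwise (f := fun x : α × α ↦ f x.1) (t := s.image f)]
        · simp_rw [filter_filter, fiber_sq]
        · intro x hx
          simp only [coe_filter, mem_product, Set.mem_ofPred_eq] at hx
          exact mem_coe.2 (mem_image_of_mem f hx.1.1)

theorem sum_card_le_mul_card_biUnion [DecidableEq α] (s : Finset ι) (t : ι → Finset α) (n : ℕ)
    (h : ∀ x, #{i ∈ s | x ∈ t i} ≤ n) : ∑ i ∈ s, #(t i) ≤ n * #(s.biUnion t) := by
  rw [← card_sigma]
  refine card_le_mul_card_image_of_maps_to (f := fun y ↦ y.2)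
    (fun y hy ↦ mem_biUnion.2 ⟨y.1, mem_sigma.1 hy⟩) n fun x _ ↦ (card_le_card_of_injOn Sigma.fst
    (fun y hy ↦ ?_) fun y hy z hz hyz ↦ ?_).trans (h x)
  · obtain ⟨mem, rfl⟩ := mem_filter.1 hy
    exact mem_filter.2 (mem_sigma.1 mem)
  · exact Sigma.ext hyz (heq_of_eq ((mem_filter.1 hy).2.trans (mem_filter.1 hz).2.symm))

theorem two_mul_sum_properDivisors_pow_le {q : ℕ} (hq : 2 ≤ q) (k : ℕ) :
    2 * ∑ d ∈ k.properDivisors, q ^ d ≤ q ^ k := by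
  rcases lt_or_ge k 4 with hk | hk
  · have two_mul_le : 2 * q ≤ q ^ 2 := by nlinarith
    have : q ^ 2 ≤ q ^ 3 := Nat.pow_le_pow_right (by lia) (by lia)
    interval_cases k <;> simp [Nat.properDivisors, sum_filter, sum_Ico_succ_top] <;> lia
  · calc 2 * ∑ d ∈ k.properDivisors, q ^ d ≤ q * q ^ (k / 2 + 1) := by
          gcongr
          refine (Nat.geomSum_lt hq fun d hd ↦ ?_).le
          obtain ⟨⟨c, rfl⟩, hlt⟩ := Nat.mem_properDivisors.1 hd
          have : 2 ≤ c := by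
            by_contra! hc
            interval_cases c <;> lia
          have := Nat.mul_le_mul_left d this
          lia
      _ = q ^ (k / 2 + 2) := by ring
      _ ≤ q ^ k := Nat.pow_le_pow_right (by lia) (by lia)

end Combinatorics

section CubicForm

variable {R : Type*} [CommRing R]

/-- The binary cubic form `u(u - v)(u + v) = u³ - uv²`, the homogenization of `x³ - x`. -/
def cubicForm (u v : R) : R := u * (u - v) * (u + v)

theorem squarefree_cubicForm [IsDomain R] [DecompositionMonoid R] {u v : R} (h2 : IsUnit (2 : R))
    (huv : IsCoprime u v) (hu : Squarefree u) (hsub : Squarefree (u - v))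
    (hadd : Squarefree (u + v)) : Squarefree (cubicForm u v) := by
  have u_sub : IsCoprime u (u - v) := by
    simpa [sub_eq_neg_add] using (huv.neg_right.add_mul_left_right 1)
  have u_add : IsCoprime u (u + v) := by
    simpa [add_comm] using (huv.add_mul_left_right 1)
  have sub_add : IsCoprime (u - v) (u + v) := by
    obtain ⟨a, b, hab⟩ := huv
    obtain ⟨c, hc⟩ := h2.exists_left_inv
    exact ⟨c * (a - b), c * (a + b), by linear_combination hc + 2 * c * hab⟩
  rw [cubicForm, squarefree_mul_iff, squarefree_mul_iff]
  exact ⟨(u_add.mul_left sub_add).isRelPrime, ⟨u_sub.isRelPrime, hu, hsub⟩, hadd⟩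

theorem cubicForm_mul_eq_iff [IsDomain R] {p : R} (hp : p ≠ 0) {a b v w : R} :
    cubicForm (a * p) v = cubicForm (b * p) w ↔
      a * v ^ 2 - b * w ^ 2 = p ^ 2 * (a ^ 3 - b ^ 3) := by
  rw [← mul_right_inj' hp (b := a * v ^ 2 - b * w ^ 2), cubicForm, cubicForm]
  constructor <;> intro h <;> linear_combination -h

end CubicForm

section Conic

variable {R : Type*} [CommRing R] [IsDomain R]

theorem conic_inter_line_card_le_two {a b N w w' : R} (hN : N ≠ 0)
    (hw : a * w ^ 2 - b * w' ^ 2 = N) (c : R) (S : Finset (R × R))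
    (hS : ∀ s ∈ S, a * s.1 ^ 2 - b * s.2 ^ 2 = N ∧ s.1 * w' - s.2 * w = c) : #S ≤ 2 := by
  classical
  set polar : R × R → R := fun s ↦ a * s.1 * w - b * s.2 * w'
  have polar_sq (s) (hs : s ∈ S) : polar s ^ 2 = N ^ 2 + a * b * c ^ 2 := by
    obtain ⟨hconic, hline⟩ := hS s hs
    calc polar s ^ 2 = (a * s.1 ^ 2 - b * s.2 ^ 2) * (a * w ^ 2 - b * w' ^ 2)
          + a * b * (s.1 * w' - s.2 * w) ^ 2 := by ring
      _ = N ^ 2 + a * b * c ^ 2 := by rw [hconic, hw, hline, ← sq]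
  -- `(s.1, s.2) ↦ (s.1 w' - s.2 w, polar s)` is linear of determinant `-N`.
  have polar_injOn : Set.InjOn polar S := by
    intro s hs t ht hst
    have hline : s.1 * w' - s.2 * w = t.1 * w' - t.2 * w := (hS s hs).2.trans (hS t ht).2.symm
    ext <;> refine mul_left_cancel₀ hN ?_ <;> rw [← hw]
    · linear_combination w * hst - b * w' * hline
    · linear_combination w' * hst - a * w * hline
  calc #S ≤ #(nthRoots 2 (N ^ 2 + a * b * c ^ 2)).toFinset :=
        card_le_card_of_injOn polar (fun s hs ↦ by
          simpa [mem_nthRoots] using polar_sq s hs) polar_injOn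
    _ ≤ 2 := (Multiset.toFinset_card_le _).trans (card_nthRoots 2 _)

theorem sq_dvd_sub_or_sq_dvd_add_of_conic {p a b N v v' w w' : R} (hp : Prime p)
    (h2 : ¬ p ∣ 2) (ha : ¬ p ∣ a) (hv : ¬ p ∣ v) (hw' : ¬ p ∣ w') (hN : p ^ 2 ∣ N)
    (hvv : a * v ^ 2 - b * v' ^ 2 = N) (hww : a * w ^ 2 - b * w' ^ 2 = N) :
    p ^ 2 ∣ v * w' - v' * w ∨ p ^ 2 ∣ v * w' + v' * w := by
  have prod_dvd : p ^ 2 ∣ (v * w' - v' * w) * (v * w' + v' * w) := by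
    refine hp.pow_dvd_of_dvd_mul_left 2 ha ((hN.mul_right (w' ^ 2 - v' ^ 2)).trans (dvd_of_eq ?_))
    linear_combination v' ^ 2 * hww - w' ^ 2 * hvv
  have not_both (hsub : p ∣ v * w' - v' * w) : ¬ p ∣ v * w' + v' * w := by
    intro hadd
    have : p ∣ 2 * (v * w') := by convert dvd_add hsub hadd using 1; ring
    simp [hp.dvd_mul, h2, hv, hw'] at this
  by_cases hsub : p ∣ v * w' - v' * w
  · exact .inl (hp.pow_dvd_of_dvd_mul_right 2 (not_both hsub) prod_dvd)
  · exact .inr (hp.pow_dvd_of_dvd_mul_left 2 hsub prod_dvd)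

end Conic

section MonicOfDegree

variable {R : Type*} [Ring R] [Nontrivial R] {f g : R[X]} {n : ℕ}

theorem degree_eq_of_isMonicOfDegree (hf : f.IsMonicOfDegree n) : f.degree = n := by
  rw [degree_eq_natDegree hf.ne_zero, hf.natDegree_eq]

theorem isMonicOfDegree_add_of_degree_lt (hf : f.IsMonicOfDegree n) (hg : g.degree < n) :
    (f + g).IsMonicOfDegree n := by
  rw [← degree_eq_of_isMonicOfDegree hf] at hg
  exact ⟨(natDegree_add_eq_left_of_degree_lt hg).trans hf.natDegree_eq, hf.monic.add_of_left hg⟩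

theorem isMonicOfDegree_sub_of_degree_lt (hf : f.IsMonicOfDegree n) (hg : g.degree < n) :
    (f - g).IsMonicOfDegree n := by
  simpa only [sub_eq_add_neg] using isMonicOfDegree_add_of_degree_lt hf (by rwa [degree_neg])

theorem isMonicOfDegree_cubicForm {R : Type*} [CommRing R] [Nontrivial R] {u v : R[X]} {n : ℕ}
    (hu : u.IsMonicOfDegree n) (hv : v.degree < n) : (cubicForm u v).IsMonicOfDegree (3 * n) := by
  rw [show 3 * n = n + n + n by ring]
  exact (hu.mul (isMonicOfDegree_sub_of_degree_lt hu hv)).mul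
    (isMonicOfDegree_add_of_degree_lt hu hv)

end MonicOfDegree

section Counting

variable (F : Type*) [Field F] [Finite F]

theorem finite_degreeLT (n : ℕ) : (degreeLT F n : Set F[X]).Finite :=
  Module.finite_of_finite F (M := degreeLT F n)

/-- The finite set of polynomials of degree less than `n` over a finite field. -/
noncomputable def degreeLTFinset (n : ℕ) : Finset F[X] :=
  (finite_degreeLT F n).toFinset

/-- The finite set of monic polynomials of degree `n` over a finite field, encoded as the
translate by `X ^ n` of the polynomials of degree less than `n`. -/
noncomputable def monicFinset (n : ℕ) : Finset F[X] :=
  (degreeLTFinset F n).map (addLeftEmbedding (X ^ n))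

open scoped Classical in
/-- The finite set of monic irreducible polynomials of degree `n` over a finite field. -/
noncomputable def monicIrreducibles (n : ℕ) : Finset F[X] :=
  {P ∈ monicFinset F n | Irreducible P}

variable {F} {n : ℕ}

theorem mem_degreeLTFinset {f : F[X]} : f ∈ degreeLTFinset F n ↔ f.degree < n := by
  simp [degreeLTFinset, mem_degreeLT]

theorem mem_monicFinset {f : F[X]} : f ∈ monicFinset F n ↔ f.IsMonicOfDegree n := by
  simp only [monicFinset, mem_map, mem_degreeLTFinset, addLeftEmbedding_apply]
  constructor
  · rintro ⟨g, hg, rfl⟩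
    exact isMonicOfDegree_add_of_degree_lt (isMonicOfDegree_X_pow F n) hg
  · intro hf
    refine ⟨f - X ^ n, ?_, add_sub_cancel _ _⟩
    rw [← degree_eq_of_isMonicOfDegree hf]
    exact degree_sub_lt_left (by rw [degree_eq_of_isMonicOfDegree hf, degree_X_pow]) hf.ne_zero
      (by rw [hf.leadingCoeff_eq, leadingCoeff_X_pow])

theorem mem_monicIrreducibles {P : F[X]} :
    P ∈ monicIrreducibles F n ↔ P.IsMonicOfDegree n ∧ Irreducible P := by
  simp [monicIrreducibles, mem_monicFinset]

theorem natDegree_eq_of_mem_monicIrreducibles {P : F[X]} (hP : P ∈ monicIrreducibles F n) :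
    P.natDegree = n :=
  (mem_monicIrreducibles.1 hP).1.natDegree_eq

theorem pairwiseDisjoint_monicIrreducibles (s : Set ℕ) : s.PairwiseDisjoint (monicIrreducibles F) :=
  fun _ _ _ _ hne ↦ disjoint_left.2 fun _ hd he ↦ hne <|
    (natDegree_eq_of_mem_monicIrreducibles hd).symm.trans (natDegree_eq_of_mem_monicIrreducibles he)

variable (F n)

theorem card_degreeLTFinset : #(degreeLTFinset F n) = Nat.card F ^ n := by
  rw [degreeLTFinset, ← Set.ncard_eq_toFinset_card _ (finite_degreeLT F n), ← Nat.card_coe_set_eq,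
    SetLike.coe_sort_coe, Nat.card_congr (degreeLTEquiv F n).toEquiv, Nat.card_fun, Nat.card_fin]

theorem card_monicFinset : #(monicFinset F n) = Nat.card F ^ n := by
  rw [monicFinset, card_map, card_degreeLTFinset]

variable {n}

theorem squarefree_X_pow_card_pow_sub_X (hn : n ≠ 0) :
    Squarefree (X ^ Nat.card F ^ n - X : F[X]) := by
  obtain ⟨p, _⟩ := CharP.exists F
  have := Fintype.ofFinite F
  have : p ∣ Nat.card F := (CharP.cast_eq_zero_iff F p _).1 <| by
    rw [Nat.card_eq_fintype_card, Nat.cast_card_eq_zero]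
  exact (galois_poly_separable p _ (dvd_pow this hn)).squarefree

open scoped Classical in
theorem primeFactors_X_pow_card_pow_sub_X (hn : n ≠ 0) :
    UniqueFactorizationMonoid.primeFactors (X ^ Nat.card F ^ n - X : F[X]) =
      n.divisors.biUnion (monicIrreducibles F) := by
  ext P
  rw [UniqueFactorizationMonoid.mem_primeFactors, Polynomial.mem_normalizedFactors_iff
    (FiniteField.X_pow_card_pow_sub_X_ne_zero F hn Finite.one_lt_card)]
  simp only [mem_biUnion, Nat.mem_divisors, mem_monicIrreducibles]
  constructor
  · rintro ⟨hirr, hmonic, hdvd⟩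
    exact ⟨P.natDegree, ⟨hirr.natDegree_dvd_iff_dvd_X_pow_card_pow_sub_X.2 hdvd, hn⟩,
      ⟨rfl, hmonic⟩, hirr⟩
  · rintro ⟨d, ⟨hd, -⟩, hP, hirr⟩
    refine ⟨hirr, hP.monic, hirr.natDegree_dvd_iff_dvd_X_pow_card_pow_sub_X.1 ?_⟩
    rwa [hP.natDegree_eq]

theorem sum_divisors_mul_card_monicIrreducibles (hn : n ≠ 0) :
    ∑ d ∈ n.divisors, d * #(monicIrreducibles F d) = Nat.card F ^ n := by
  classical
  set f : F[X] := X ^ Nat.card F ^ n - X with f_def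
  have f_ne_zero : f ≠ 0 := FiniteField.X_pow_card_pow_sub_X_ne_zero F hn Finite.one_lt_card
  calc ∑ d ∈ n.divisors, d * #(monicIrreducibles F d)
      = ∑ d ∈ n.divisors, ∑ P ∈ monicIrreducibles F d, P.natDegree := by
        refine sum_congr rfl fun d _ ↦ ?_
        rw [sum_congr rfl fun P ↦ natDegree_eq_of_mem_monicIrreducibles, sum_const, smul_eq_mul,
          mul_comm]
    _ = ∑ P ∈ UniqueFactorizationMonoid.primeFactors f, P.natDegree := by
        rw [f_def, primeFactors_X_pow_card_pow_sub_X F hn,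
          sum_biUnion (pairwiseDisjoint_monicIrreducibles _)]
    _ = (UniqueFactorizationMonoid.radical f).natDegree := by
        rw [UniqueFactorizationMonoid.radical, natDegree_prod_of_monic]
        · rfl
        · intro P hP
          exact ((Polynomial.mem_normalizedFactors_iff f_ne_zero).1
            (UniqueFactorizationMonoid.mem_primeFactors.1 hP)).2.1
    _ = f.natDegree := natDegree_eq_of_degree_eq <| degree_eq_degree_of_associated <|
        UniqueFactorizationMonoid.radical_associated
          (squarefree_X_pow_card_pow_sub_X F hn).isRadical f_ne_zero
    _ = Nat.card F ^ n :=
        FiniteField.X_pow_card_pow_sub_X_natDegree_eq F hn Finite.one_lt_card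

theorem mul_card_monicIrreducibles_le (hn : n ≠ 0) :
    n * #(monicIrreducibles F n) ≤ Nat.card F ^ n := by
  rw [← sum_divisors_mul_card_monicIrreducibles F hn]
  exact single_le_sum (f := fun d ↦ d * #(monicIrreducibles F d)) (fun _ _ ↦ Nat.zero_le _)
    (Nat.mem_divisors_self n hn)

theorem card_pow_le_two_mul_mul_card_monicIrreducibles (hn : n ≠ 0) :
    Nat.card F ^ n ≤ 2 * (n * #(monicIrreducibles F n)) := by
  have gauss := sum_divisors_mul_card_monicIrreducibles F hn
  rw [← Nat.cons_self_properDivisors hn, sum_cons] at gauss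
  have proper : ∑ d ∈ n.properDivisors, d * #(monicIrreducibles F d) ≤
      ∑ d ∈ n.properDivisors, Nat.card F ^ d :=
    sum_le_sum fun d hd ↦ mul_card_monicIrreducibles_le F (Nat.pos_of_mem_properDivisors hd).ne'
  have := two_mul_sum_properDivisors_pow_le (Finite.one_lt_card (α := F)) n
  lia

end Counting

section Sieve

variable {F : Type*} [Field F] [Finite F] {α : Type*}

open scoped Classical in
theorem card_filter_dvd_le (s : Finset α) {g : α → F[X]} {n : ℕ} (hg : Set.InjOn g s)
    (hgn : ∀ x ∈ s, (g x).IsMonicOfDegree n) {f : F[X]} {d : ℕ} (hf : f.IsMonicOfDegree d) :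
    (#{x ∈ s | f ∣ g x} : ℝ) ≤ (Nat.card F : ℝ) ^ n / (Nat.card F : ℝ) ^ d := by
  have card_pos : (0 : ℝ) < Nat.card F := mod_cast Nat.card_pos
  rcases lt_or_ge n d with hnd | hdn
  · have : {x ∈ s | f ∣ g x} = ∅ := filter_eq_empty_iff.2 fun x hx hdvd ↦ by
      have := natDegree_le_of_dvd hdvd (hgn x hx).ne_zero
      rw [hf.natDegree_eq, (hgn x hx).natDegree_eq] at this
      lia
    rw [this, card_empty, Nat.cast_zero]
    positivity
  · have mul_div {x : α} (hx : f ∣ g x) : f * (g x / f) = g x :=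
      EuclideanDomain.mul_div_cancel' hf.ne_zero hx
    have card_le : #{x ∈ s | f ∣ g x} ≤ #(monicFinset F (n - d)) := by
      refine card_le_card_of_injOn (fun x ↦ g x / f) (fun x hx ↦ ?_) fun x hx y hy hxy ↦ ?_
      · obtain ⟨hxs, hdvd⟩ := mem_filter.1 hx
        refine mem_coe.2 (mem_monicFinset.2 (hf.of_mul_left ?_))
        rw [mul_div hdvd, Nat.add_sub_cancel' hdn]
        exact hgn x hxs
      · obtain ⟨hxs, hxdvd⟩ := mem_filter.1 hx
        obtain ⟨hys, hydvd⟩ := mem_filter.1 hy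
        refine hg hxs hys ?_
        rw [← mul_div hxdvd, ← mul_div hydvd]
        exact congrArg (f * ·) hxy
    rw [div_eq_mul_inv, ← pow_sub₀ _ card_pos.ne' hdn]
    exact_mod_cast card_le.trans_eq (card_monicFinset F _)

open scoped Classical in
theorem card_degreeLTFinset_filter_dvd_le {f : F[X]} {d n : ℕ} (hf : f.IsMonicOfDegree d)
    (hdn : d ≤ n) :
    (#{v ∈ degreeLTFinset F n | f ∣ v} : ℝ) ≤ (Nat.card F : ℝ) ^ n / (Nat.card F : ℝ) ^ d := by
  have shift : (f * X ^ (n - d)).IsMonicOfDegree n := by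
    simpa [Nat.add_sub_cancel' hdn] using hf.mul (isMonicOfDegree_X_pow F (n - d))
  have := card_filter_dvd_le (degreeLTFinset F n) (g := fun v ↦ f * X ^ (n - d) + v)
    (add_right_injective _).injOn
    (fun v hv ↦ isMonicOfDegree_add_of_degree_lt shift (mem_degreeLTFinset.1 hv)) hf
  simpa only [dvd_add_right (dvd_mul_right f _)] using this

theorem exists_mem_monicIrreducibles_associated {z : F[X]} (hz : Irreducible z) :
    ∃ P ∈ monicIrreducibles F z.natDegree, Associated P z := by
  classical
  exact ⟨normalize z, mem_monicIrreducibles.2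
    ⟨⟨natDegree_eq_of_degree_eq degree_normalize, monic_normalize hz.ne_zero⟩,
      (normalize_associated z).symm.irreducible hz⟩, normalize_associated z⟩

variable (F) in
/-- The partial sum `∑ |P|⁻²` over the monic irreducible `P` of degree at most `n`, where
`|P| = q ^ deg P`: the proportion of elements that sieving out the squares of these primes can
remove. -/
noncomputable def primeZetaTwo (n : ℕ) : ℝ :=
  ∑ k ∈ Icc 1 n, (#(monicIrreducibles F k) : ℝ) / (Nat.card F : ℝ) ^ (2 * k)

theorem primeZetaTwo_le (hq : 5 ≤ Nat.card F) (n : ℕ) : primeZetaTwo F n ≤ 9 / 40 := by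
  have term_le (k : ℕ) (hk : k ≠ 0) :
      (#(monicIrreducibles F k) : ℝ) / (Nat.card F : ℝ) ^ (2 * k) ≤ (1 / 5) ^ k / k := by
    have card_le : (k : ℝ) * #(monicIrreducibles F k) ≤ (Nat.card F : ℝ) ^ k :=
      mod_cast mul_card_monicIrreducibles_le F hk
    have hq : (5 : ℝ) ≤ Nat.card F := mod_cast hq
    have hk : (0 : ℝ) < k := mod_cast hk.pos
    calc (#(monicIrreducibles F k) : ℝ) / (Nat.card F : ℝ) ^ (2 * k)
        ≤ ((Nat.card F : ℝ) ^ k / k) / (Nat.card F : ℝ) ^ (2 * k) := by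
          gcongr
          rwa [le_div_iff₀' hk]
      _ = (1 / (Nat.card F : ℝ)) ^ k / k := by
          rw [div_right_comm, two_mul, pow_add, div_mul_cancel_left₀ (by positivity),
            one_div, inv_pow]
      _ ≤ (1 / 5) ^ k / k := by gcongr
  have sum_le (n : ℕ) : primeZetaTwo F (n + 1) ≤ 9 / 40 - (1 / 5) ^ n / 40 := by
    induction n with
    | zero => simpa [primeZetaTwo] using (term_le 1 one_ne_zero).trans (by norm_num)
    | succ n ih =>
      have next_term : ((1 : ℝ) / 5) ^ (n + 2) / ((n + 2 : ℕ) : ℝ) ≤ (1 / 5) ^ (n + 2) / 2 := by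
        gcongr
        push_cast
        linarith [(n.cast_nonneg : (0 : ℝ) ≤ n)]
      rw [primeZetaTwo, sum_Icc_succ_top (by lia), ← primeZetaTwo]
      linarith [term_le (n + 2) (by lia), pow_succ (1 / 5 : ℝ) n, pow_succ (1 / 5 : ℝ) (n + 1)]
  rcases n with - | n
  · norm_num [primeZetaTwo]
  · linarith [sum_le n, show (0 : ℝ) ≤ (1 / 5) ^ n by positivity]

open scoped Classical in
theorem card_le_mul_primeZetaTwo (s : Finset α) (r : F[X] → α → Prop) {n : ℕ} {c : ℝ}
    (hex : ∀ x ∈ s, ∃ k ∈ Icc 1 n, ∃ P ∈ monicIrreducibles F k, r P x)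
    (hcard : ∀ k ∈ Icc 1 n, ∀ P ∈ monicIrreducibles F k,
      (#{x ∈ s | r P x} : ℝ) ≤ c / (Nat.card F : ℝ) ^ (2 * k)) :
    (#s : ℝ) ≤ c * primeZetaTwo F n := by
  have cover : s ⊆ (Icc 1 n).biUnion fun k ↦
      (monicIrreducibles F k).biUnion fun P ↦ {x ∈ s | r P x} := fun x hx ↦ by
    simpa [hx] using hex x hx
  calc (#s : ℝ) ≤ ∑ k ∈ Icc 1 n, ∑ P ∈ monicIrreducibles F k, (#{x ∈ s | r P x} : ℝ) :=
        mod_cast (card_le_card cover).trans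
          (card_biUnion_le.trans (sum_le_sum fun k _ ↦ card_biUnion_le))
    _ ≤ ∑ k ∈ Icc 1 n, ∑ _P ∈ monicIrreducibles F k, c / (Nat.card F : ℝ) ^ (2 * k) :=
        sum_le_sum fun k hk ↦ sum_le_sum (hcard k hk)
    _ = c * primeZetaTwo F n := by
        rw [primeZetaTwo, mul_sum]
        refine sum_congr rfl fun k _ ↦ ?_
        rw [sum_const, nsmul_eq_mul]
        ring

open scoped Classical in
theorem card_filter_not_squarefree_le (s : Finset α) {g : α → F[X]} {n : ℕ}
    (hg : Set.InjOn g s) (hgn : ∀ x ∈ s, (g x).IsMonicOfDegree n) :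
    (#{x ∈ s | ¬ Squarefree (g x)} : ℝ) ≤ (Nat.card F : ℝ) ^ n * primeZetaTwo F n := by
  refine card_le_mul_primeZetaTwo _ (fun P x ↦ P ^ 2 ∣ g x) (fun x hx ↦ ?_) fun k _ P hP ↦ ?_
  · obtain ⟨hxs, hx⟩ := mem_filter.1 hx
    rw [squarefree_iff_no_irreducibles (hgn x hxs).ne_zero] at hx
    push Not at hx
    obtain ⟨z, hz, hzz⟩ := hx
    obtain ⟨P, hP, hPz⟩ := exists_mem_monicIrreducibles_associated hz
    have z_le := natDegree_le_of_dvd (dvd_of_mul_right_dvd hzz) (hgn x hxs).ne_zero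
    rw [(hgn x hxs).natDegree_eq] at z_le
    exact ⟨_, mem_Icc.2 ⟨hz.natDegree_pos, z_le⟩, P, hP, (hPz.pow_pow.dvd.trans (sq z ▸ hzz))⟩
  · have hP2 : (P ^ 2).IsMonicOfDegree (2 * k) := by
      simpa [mul_comm] using (mem_monicIrreducibles.1 hP).1.pow 2
    refine le_trans ?_ (card_filter_dvd_le s hg hgn hP2)
    exact_mod_cast card_le_card (filter_subset_filter _ (filter_subset _ _))

theorem card_filter_monicFinset_product_le {j m : ℕ} (p : F[X] × F[X] → Prop) [DecidablePred p]
    {c : ℝ}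
    (h : ∀ a ∈ monicFinset F j, (#{v ∈ degreeLTFinset F m | p (a, v)} : ℝ) ≤ c) :
    (#{x ∈ monicFinset F j ×ˢ degreeLTFinset F m | p x} : ℝ) ≤ (Nat.card F : ℝ) ^ j * c := by
  calc (#{x ∈ monicFinset F j ×ˢ degreeLTFinset F m | p x} : ℝ)
      = ∑ a ∈ monicFinset F j, (#{v ∈ degreeLTFinset F m | p (a, v)} : ℝ) := by
        simp_rw [card_filter, sum_product, Nat.cast_sum]
    _ ≤ (Nat.card F : ℝ) ^ j * c := by
        refine (sum_le_card_nsmul _ _ c h).trans_eq ?_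
        rw [card_monicFinset, nsmul_eq_mul, Nat.cast_pow]

open scoped Classical in
theorem card_filter_not_squarefree_fiberwise_le {j m n : ℕ} (g : F[X] → F[X] → F[X])
    (hg : ∀ a ∈ monicFinset F j, Set.InjOn (g a) (degreeLTFinset F m))
    (hgn : ∀ a ∈ monicFinset F j, ∀ v ∈ degreeLTFinset F m, (g a v).IsMonicOfDegree n) :
    (#{x ∈ monicFinset F j ×ˢ degreeLTFinset F m | ¬ Squarefree (g x.1 x.2)} : ℝ) ≤
      (Nat.card F : ℝ) ^ (j + n) * primeZetaTwo F n := by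
  rw [pow_add, mul_assoc]
  exact card_filter_monicFinset_product_le _ fun a ha ↦
    card_filter_not_squarefree_le _ (hg a ha) (hgn a ha)

open scoped Classical in
theorem card_filter_not_squarefree_fst_le (j m : ℕ) :
    (#{x ∈ monicFinset F j ×ˢ degreeLTFinset F m | ¬ Squarefree x.1} : ℝ) ≤
      (Nat.card F : ℝ) ^ (j + m) * primeZetaTwo F j := by
  have factor : #{x ∈ monicFinset F j ×ˢ degreeLTFinset F m | ¬ Squarefree x.1} =
      #{a ∈ monicFinset F j | ¬ Squarefree a} * Nat.card F ^ m := by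
    rw [← card_degreeLTFinset, ← card_product, ← filter_product_left]
  rw [factor, Nat.cast_mul, Nat.cast_pow, pow_add, mul_right_comm]
  gcongr
  exact card_filter_not_squarefree_le (monicFinset F j) (g := id) (Set.injOn_id _)
    fun a ha ↦ mem_monicFinset.1 ha

open scoped Classical in
theorem card_filter_not_isCoprime_le {j m : ℕ} (hjm : j ≤ m) :
    (#{x ∈ monicFinset F j ×ˢ degreeLTFinset F m | ¬ IsCoprime x.1 x.2} : ℝ) ≤
      (Nat.card F : ℝ) ^ (j + m) * primeZetaTwo F j := by
  refine card_le_mul_primeZetaTwo _ (fun P x ↦ P ∣ x.1 ∧ P ∣ x.2) (fun x hx ↦ ?_)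
    fun k hk P hP ↦ ?_
  · obtain ⟨hxs, hx⟩ := mem_filter.1 hx
    have hx1 := mem_monicFinset.1 (mem_product.1 hxs).1
    obtain ⟨z, hz, hz1, hz2⟩ : ∃ z, Irreducible z ∧ z ∣ x.1 ∧ z ∣ x.2 := by
      by_contra! h
      exact hx (isCoprime_of_irreducible_dvd (fun h0 ↦ hx1.ne_zero h0.1) h)
    obtain ⟨P, hP, hPz⟩ := exists_mem_monicIrreducibles_associated hz
    have z_le := natDegree_le_of_dvd hz1 hx1.ne_zero
    rw [hx1.natDegree_eq] at z_le
    exact ⟨_, mem_Icc.2 ⟨hz.natDegree_pos, z_le⟩, P, hP, hPz.dvd.trans hz1, hPz.dvd.trans hz2⟩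
  · have hPk := (mem_monicIrreducibles.1 hP).1
    have hM := card_filter_dvd_le (monicFinset F j) (g := id) (Set.injOn_id _)
      (fun a ha ↦ mem_monicFinset.1 ha) hPk
    have hL := card_degreeLTFinset_filter_dvd_le hPk ((mem_Icc.1 hk).2.trans hjm)
    calc _ ≤ (#({a ∈ monicFinset F j | P ∣ a} ×ˢ {v ∈ degreeLTFinset F m | P ∣ v}) : ℝ) := by
          gcongr
          intro x
          simp only [mem_filter, mem_product]
          tauto
      _ ≤ ((Nat.card F : ℝ) ^ j / (Nat.card F : ℝ) ^ k) *
            ((Nat.card F : ℝ) ^ m / (Nat.card F : ℝ) ^ k) := by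
          rw [card_product, Nat.cast_mul]
          exact mul_le_mul hM hL (by positivity) (by positivity)
      _ = (Nat.card F : ℝ) ^ (j + m) / (Nat.card F : ℝ) ^ (2 * k) := by
          rw [div_mul_div_comm, ← pow_add, ← pow_add, two_mul]

open scoped Classical in
theorem card_filter_dvd_snd_le {f : F[X]} {d j m : ℕ} (hf : f.IsMonicOfDegree d) (hdm : d ≤ m) :
    (#{x ∈ monicFinset F j ×ˢ degreeLTFinset F m | f ∣ x.2} : ℝ) ≤
      (Nat.card F : ℝ) ^ (j + m) / (Nat.card F : ℝ) ^ d := by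
  rw [pow_add, mul_div_assoc]
  exact card_filter_monicFinset_product_le (fun x ↦ f ∣ x.2) fun a _ ↦
    card_degreeLTFinset_filter_dvd_le hf hdm

end Sieve

section CubicFormMul

variable {F : Type*} [Field F]

theorem isUnit_two (h2 : (2 : F) ≠ 0) : IsUnit (2 : F[X]) := by
  rw [← C_ofNat]
  exact isUnit_C.2 h2.isUnit

theorem squarefree_cubicForm_mul (h2 : (2 : F) ≠ 0) {P a v : F[X]} (hP : Irreducible P)
    (hPa : ¬ P ∣ a) (hPv : ¬ P ∣ v) (hav : IsCoprime a v) (ha : Squarefree a)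
    (hsub : Squarefree (a * P - v)) (hadd : Squarefree (a * P + v)) :
    Squarefree (cubicForm (a * P) v) :=
  squarefree_cubicForm (isUnit_two h2) (hav.mul_left (hP.coprime_iff_not_dvd.2 hPv))
    (squarefree_mul_iff.2 ⟨(hP.isRelPrime_iff_not_dvd.2 hPa).symm, ha, hP.squarefree⟩) hsub hadd

end CubicFormMul

section AdmissiblePairs

variable {F : Type*} [Field F] [Finite F] {P : F[X]} {d j : ℕ}

open scoped Classical in
/-- The pairs `(a, v)` with `a` monic of degree `j` and `deg v < j + deg P` for which the value of
`cubicForm` at `u = aP` and `v` is squarefree and `P` does not divide `v`. Since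
`deg v < deg (aP)`, this value is monic of degree `3 (j + deg P)`. -/
noncomputable def admissiblePairs (P : F[X]) (j : ℕ) : Finset (F[X] × F[X]) :=
  {x ∈ monicFinset F j ×ˢ degreeLTFinset F (j + P.natDegree) |
    Squarefree (cubicForm (x.1 * P) x.2) ∧ ¬ P ∣ x.2}

theorem mem_admissiblePairs (hP : P ∈ monicIrreducibles F d) {x : F[X] × F[X]} :
    x ∈ admissiblePairs P j ↔ (x.1.IsMonicOfDegree j ∧ x.2.degree < (j + d : ℕ)) ∧
      Squarefree (cubicForm (x.1 * P) x.2) ∧ ¬ P ∣ x.2 := by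
  simp only [admissiblePairs, mem_filter, mem_product, mem_monicFinset, mem_degreeLTFinset,
    natDegree_eq_of_mem_monicIrreducibles hP]

theorem not_dvd_of_mem_monicIrreducibles (hP : P ∈ monicIrreducibles F d) {a : F[X]}
    (ha : a.IsMonicOfDegree j) (hjd : j < d) : ¬ P ∣ a :=
  Polynomial.not_dvd_of_natDegree_lt ha.ne_zero <| by
    rwa [ha.natDegree_eq, natDegree_eq_of_mem_monicIrreducibles hP]

open scoped Classical in
theorem card_le_card_admissiblePairs_add (h2 : (2 : F) ≠ 0) (hP : P ∈ monicIrreducibles F d)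
    (hjd : j < d) (S : Finset (F[X] × F[X]))
    (hS : ∀ x ∈ S, x.1.IsMonicOfDegree j ∧ x.2.degree < (j + d : ℕ)) :
    #S ≤ #(admissiblePairs P j) + #{x ∈ S | ¬ Squarefree x.1} + #{x ∈ S | ¬ IsCoprime x.1 x.2} +
      #{x ∈ S | ¬ Squarefree (x.1 * P - x.2)} + #{x ∈ S | ¬ Squarefree (x.1 * P + x.2)} +
      #{x ∈ S | P ∣ x.2} := by
  have cover : S ⊆ admissiblePairs P j ∪ {x ∈ S | ¬ Squarefree x.1} ∪
      {x ∈ S | ¬ IsCoprime x.1 x.2} ∪ {x ∈ S | ¬ Squarefree (x.1 * P - x.2)} ∪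
      {x ∈ S | ¬ Squarefree (x.1 * P + x.2)} ∪ {x ∈ S | P ∣ x.2} := by
    intro x hxS
    obtain ⟨ha, hv⟩ := hS x hxS
    have admissible := squarefree_cubicForm_mul (v := x.2) h2 (mem_monicIrreducibles.1 hP).2
      (not_dvd_of_mem_monicIrreducibles hP ha hjd)
    simp only [mem_union, mem_filter, mem_admissiblePairs hP]
    tauto
  refine (card_le_card cover).trans ?_
  refine (card_union_le _ _).trans (Nat.add_le_add_right ?_ _)
  refine (card_union_le _ _).trans (Nat.add_le_add_right ?_ _)
  refine (card_union_le _ _).trans (Nat.add_le_add_right ?_ _)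
  exact (card_union_le _ _).trans (Nat.add_le_add_right (card_union_le _ _) _)

open scoped Classical in
theorem card_pow_div_le_card_admissiblePairs (h2 : (2 : F) ≠ 0) (hq : 5 ≤ Nat.card F)
    (hP : P ∈ monicIrreducibles F d) (hjd : j < d) (hd : 2 ≤ d) :
    (Nat.card F : ℝ) ^ (2 * j + d) / 20 ≤ #(admissiblePairs P j) := by
  have hq5 : (5 : ℝ) ≤ Nat.card F := mod_cast hq
  set q := (Nat.card F : ℝ)
  obtain ⟨S, hS⟩ : ∃ S, S = monicFinset F j ×ˢ degreeLTFinset F (j + d) := ⟨_, rfl⟩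
  have zeta_le (n : ℕ) : q ^ (j + (j + d)) * primeZetaTwo F n ≤ q ^ (2 * j + d) * (9 / 40) := by
    rw [← add_assoc, ← two_mul]
    gcongr
    exact primeZetaTwo_le hq n
  have monic_mul (a : F[X]) (ha : a ∈ monicFinset F j) : (a * P).IsMonicOfDegree (j + d) :=
    (mem_monicFinset.1 ha).mul (mem_monicIrreducibles.1 hP).1
  have bad_left : (#{x ∈ S | ¬ Squarefree x.1} : ℝ) ≤ q ^ (2 * j + d) * (9 / 40) :=
    (hS ▸ card_filter_not_squarefree_fst_le j (j + d)).trans (zeta_le j)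
  have bad_coprime : (#{x ∈ S | ¬ IsCoprime x.1 x.2} : ℝ) ≤ q ^ (2 * j + d) * (9 / 40) :=
    (hS ▸ card_filter_not_isCoprime_le (Nat.le_add_right j d)).trans (zeta_le j)
  have bad_sub : (#{x ∈ S | ¬ Squarefree (x.1 * P - x.2)} : ℝ) ≤ q ^ (2 * j + d) * (9 / 40) := by
    rw [hS]
    exact (card_filter_not_squarefree_fiberwise_le (fun a v ↦ a * P - v)
      (fun a _ ↦ sub_right_injective.injOn) fun a ha v hv ↦
        isMonicOfDegree_sub_of_degree_lt (monic_mul a ha) (mem_degreeLTFinset.1 hv)).trans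
        (zeta_le (j + d))
  have bad_add : (#{x ∈ S | ¬ Squarefree (x.1 * P + x.2)} : ℝ) ≤ q ^ (2 * j + d) * (9 / 40) := by
    rw [hS]
    exact (card_filter_not_squarefree_fiberwise_le (fun a v ↦ a * P + v)
      (fun a _ ↦ (add_right_injective _).injOn) fun a ha v hv ↦
        isMonicOfDegree_add_of_degree_lt (monic_mul a ha) (mem_degreeLTFinset.1 hv)).trans
        (zeta_le (j + d))
  have bad_dvd : (#{x ∈ S | P ∣ x.2} : ℝ) ≤ q ^ (2 * j + d) / 25 := by
    have : 5 ^ 2 ≤ q ^ d :=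
      (pow_le_pow_left₀ (by norm_num) hq5 2).trans (pow_le_pow_right₀ (by linarith) hd)
    rw [hS, two_mul, add_assoc]
    refine (card_filter_dvd_snd_le (mem_monicIrreducibles.1 hP).1 (Nat.le_add_left d j)).trans ?_
    gcongr
    linarith
  have total : (#S : ℝ) = q ^ (2 * j + d) := by
    rw [hS, card_product, card_monicFinset, card_degreeLTFinset, ← pow_add, ← add_assoc, ← two_mul,
      Nat.cast_pow]
  have cover := Nat.cast_le (α := ℝ).2 <| card_le_card_admissiblePairs_add h2 hP hjd S fun x hx ↦ by
    rwa [hS, mem_product, mem_monicFinset, mem_degreeLTFinset] at hx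
  push_cast at cover
  linarith [show 0 ≤ q ^ (2 * j + d) by positivity]

end AdmissiblePairs

section ConicOverPolynomials

variable {F : Type*} [Field F] {a b N P : F[X]} {d m r : ℕ}

theorem eq_of_monic_of_pow_eq_pow (ha : a.Monic) (hb : b.Monic) {n : ℕ} (hn : n ≠ 0)
    (h : a ^ n = b ^ n) : a = b :=
  eq_of_monic_of_associated ha hb <| associated_of_dvd_dvd
    ((UniqueFactorizationMonoid.pow_dvd_pow_iff_dvd hn).1 h.dvd)
    ((UniqueFactorizationMonoid.pow_dvd_pow_iff_dvd hn).1 h.symm.dvd)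

theorem degree_mul_lt_add {R : Type*} [Semiring R] {f g : R[X]} {n : ℕ} (hf : f.degree < m)
    (hg : g.degree < n) : (f * g).degree < (m + n : ℕ) := by
  by_cases hfg : f * g = 0
  · rw [hfg, degree_zero]
    exact WithBot.bot_lt_coe _
  rw [← natDegree_lt_iff_degree_lt hfg]
  rw [← natDegree_lt_iff_degree_lt (left_ne_zero_of_mul hfg)] at hf
  rw [← natDegree_lt_iff_degree_lt (right_ne_zero_of_mul hfg)] at hg
  exact natDegree_mul_le.trans_lt (add_lt_add hf hg)

theorem degree_lt_of_degree_mul_lt {Q h : F[X]} (hQ : Q.IsMonicOfDegree d)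
    (hQh : (Q * h).degree < (d + r : ℕ)) : h.degree < r := by
  rw [degree_mul, degree_eq_of_isMonicOfDegree hQ, Nat.cast_add] at hQh
  exact lt_of_add_lt_add_left hQh

variable [Finite F]

theorem card_conic_of_dvd_le {Q : F[X]} (hQ : Q.IsMonicOfDegree d) (hr : 2 * m ≤ d + r)
    (hN : N ≠ 0) {w : F[X] × F[X]} (hw : w.1.degree < m ∧ w.2.degree < m)
    (hw_conic : a * w.1 ^ 2 - b * w.2 ^ 2 = N) (S : Finset (F[X] × F[X]))
    (hS : ∀ s ∈ S, s.1.degree < m ∧ s.2.degree < m)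
    (hS_conic : ∀ s ∈ S, a * s.1 ^ 2 - b * s.2 ^ 2 = N)
    (hS_dvd : ∀ s ∈ S, Q ∣ s.1 * w.2 - s.2 * w.1) : #S ≤ 2 * Nat.card F ^ r := by
  classical
  choose! h hh using hS_dvd
  rw [← card_degreeLTFinset F r]
  refine card_le_mul_card_image_of_maps_to (f := h) (fun s hs ↦ ?_) 2 fun c _ ↦ ?_
  · refine mem_degreeLTFinset.2 (degree_lt_of_degree_mul_lt hQ ?_)
    rw [← hh s hs]
    refine ((degree_sub_le _ _).trans_lt (max_lt ?_ ?_)).trans_le (Nat.cast_le.2 (two_mul m ▸ hr))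
    · exact degree_mul_lt_add (hS s hs).1 hw.2
    · exact degree_mul_lt_add (hS s hs).2 hw.1
  · refine conic_inter_line_card_le_two hN hw_conic (Q * c) _ fun s hs ↦ ?_
    obtain ⟨hsS, rfl⟩ := mem_filter.1 hs
    exact ⟨hS_conic s hsS, hh s hsS⟩

theorem card_conic_le (h2 : (2 : F) ≠ 0) (hP : P ∈ monicIrreducibles F d)
    (hr : 2 * m ≤ 2 * d + r) (ha : ¬ P ∣ a) (hN : N ≠ 0) (hPN : P ^ 2 ∣ N)
    (S : Finset (F[X] × F[X])) (hS : ∀ s ∈ S, s.1.degree < m ∧ s.2.degree < m)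
    (hS_dvd : ∀ s ∈ S, ¬ P ∣ s.1 ∧ ¬ P ∣ s.2)
    (hS_conic : ∀ s ∈ S, a * s.1 ^ 2 - b * s.2 ^ 2 = N) : #S ≤ 4 * Nat.card F ^ r := by
  classical
  obtain ⟨P_monic, P_irr⟩ := mem_monicIrreducibles.1 hP
  obtain rfl | ⟨w, hw⟩ := S.eq_empty_or_nonempty
  · simp
  have P_sq : (P ^ 2).IsMonicOfDegree (2 * d) := mul_comm d 2 ▸ P_monic.pow 2
  -- The second family is the first one relative to the base point `(w.1, -w.2)`.
  have cover : S = {s ∈ S | P ^ 2 ∣ s.1 * w.2 - s.2 * w.1} ∪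
      {s ∈ S | P ^ 2 ∣ s.1 * (-w.2) - s.2 * w.1} := by
    rw [← filter_or, filter_true_of_mem]
    intro s hs
    refine (sq_dvd_sub_or_sq_dvd_add_of_conic P_irr.prime
      (fun h ↦ P_irr.not_isUnit (isUnit_of_dvd_unit h (isUnit_two h2))) ha (hS_dvd s hs).1
      (hS_dvd w hw).2 hPN (hS_conic s hs) (hS_conic w hw)).imp_right fun h ↦ ?_
    convert h.neg_right using 1
    ring
  have card_sub : #{s ∈ S | P ^ 2 ∣ s.1 * w.2 - s.2 * w.1} ≤ 2 * Nat.card F ^ r :=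
    card_conic_of_dvd_le P_sq hr hN (hS w hw) (hS_conic w hw) _
      (fun s hs ↦ hS s (mem_filter.1 hs).1) (fun s hs ↦ hS_conic s (mem_filter.1 hs).1)
      fun s hs ↦ (mem_filter.1 hs).2
  have card_add : #{s ∈ S | P ^ 2 ∣ s.1 * (-w.2) - s.2 * w.1} ≤ 2 * Nat.card F ^ r :=
    card_conic_of_dvd_le (w := (w.1, -w.2)) P_sq hr hN
      ⟨(hS w hw).1, (degree_neg w.2).trans_lt (hS w hw).2⟩
      (by rw [neg_sq, hS_conic w hw]) _
      (fun s hs ↦ hS s (mem_filter.1 hs).1) (fun s hs ↦ hS_conic s (mem_filter.1 hs).1)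
      fun s hs ↦ (mem_filter.1 hs).2
  calc #S ≤ _ := (card_le_card cover.subset).trans (card_union_le _ _)
    _ ≤ 2 * Nat.card F ^ r + 2 * Nat.card F ^ r := add_le_add card_sub card_add
    _ = 4 * Nat.card F ^ r := by ring

end ConicOverPolynomials

section Collisions

variable {F : Type*} [Field F] [Finite F] {P : F[X]} {d j : ℕ}

theorem card_cubicForm_mul_eq_le (h2 : (2 : F) ≠ 0) (hP : P ∈ monicIrreducibles F d) (hjd : j < d)
    {a b : F[X]} (ha : a.IsMonicOfDegree j) (hb : b.IsMonicOfDegree j) (hab : a ≠ b)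
    (S : Finset (F[X] × F[X])) (hS : ∀ s ∈ S, (a, s.1) ∈ admissiblePairs P j ∧
      (b, s.2) ∈ admissiblePairs P j ∧ cubicForm (a * P) s.1 = cubicForm (b * P) s.2) :
    #S ≤ 4 * Nat.card F ^ (2 * j) := by
  simp only [mem_admissiblePairs hP] at hS
  have P_ne_zero : P ≠ 0 := (mem_monicIrreducibles.1 hP).2.ne_zero
  have cubes_ne : a ^ 3 - b ^ 3 ≠ 0 :=
    sub_ne_zero.2 fun h ↦ hab (eq_of_monic_of_pow_eq_pow ha.monic hb.monic three_ne_zero h)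
  exact card_conic_le (m := j + d) h2 hP (by lia) (not_dvd_of_mem_monicIrreducibles hP ha hjd)
    (mul_ne_zero (pow_ne_zero 2 P_ne_zero) cubes_ne) (dvd_mul_right _ _) S
    (fun s hs ↦ ⟨(hS s hs).1.1.2, (hS s hs).2.1.1.2⟩)
    (fun s hs ↦ ⟨(hS s hs).1.2.2, (hS s hs).2.1.2.2⟩)
    fun s hs ↦ (cubicForm_mul_eq_iff P_ne_zero).1 (hS s hs).2.2

open scoped Classical in
theorem card_collisions_ne_le (h2 : (2 : F) ≠ 0) (hP : P ∈ monicIrreducibles F d) (hjd : j < d) :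
    #{x ∈ admissiblePairs P j ×ˢ admissiblePairs P j |
      cubicForm (x.1.1 * P) x.1.2 = cubicForm (x.2.1 * P) x.2.2 ∧ x.1.1 ≠ x.2.1} ≤
      4 * Nat.card F ^ (4 * j) := by
  have fst_mem (x : F[X] × F[X]) (hx : x ∈ admissiblePairs P j) : x.1 ∈ monicFinset F j :=
    mem_monicFinset.2 ((mem_admissiblePairs hP).1 hx).1.1
  calc _ ≤ 4 * Nat.card F ^ (2 * j) * #(monicFinset F j ×ˢ monicFinset F j) := by
        refine card_le_mul_card_image_of_maps_to (f := fun x ↦ (x.1.1, x.2.1))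
          (fun x hx ↦ ?_) _ fun c hc ↦ ?_
        · have mem := mem_product.1 (mem_filter.1 hx).1
          exact mem_product.2 ⟨fst_mem x.1 mem.1, fst_mem x.2 mem.2⟩
        by_cases hne : c.1 = c.2
        · rw [filter_false_of_mem]
          · simp
          · rintro x hx rfl
            exact (mem_filter.1 hx).2.2 hne
        rw [mem_product, mem_monicFinset, mem_monicFinset] at hc
        rw [← card_image_of_injOn (f := fun x ↦ (x.1.2, x.2.2))]
        · refine card_cubicForm_mul_eq_le h2 hP hjd hc.1 hc.2 hne _ fun s hs ↦ ?_
          obtain ⟨x, hx, rfl⟩ := mem_image.1 hs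
          obtain ⟨collision, rfl⟩ := mem_filter.1 hx
          obtain ⟨mem, values_eq, -⟩ := mem_filter.1 collision
          exact ⟨(mem_product.1 mem).1, (mem_product.1 mem).2, values_eq⟩
        · intro x hx y hy hxy
          have := (mem_filter.1 hx).2.trans (mem_filter.1 hy).2.symm
          simp only [Prod.mk.injEq] at this hxy
          exact Prod.ext (Prod.ext this.1 hxy.1) (Prod.ext this.2 hxy.2)
    _ = 4 * Nat.card F ^ (4 * j) := by
        rw [card_product, card_monicFinset]
        ring

open scoped Classical in
theorem card_collisions_eq_le (hP : P ∈ monicIrreducibles F d) :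
    #{x ∈ admissiblePairs P j ×ˢ admissiblePairs P j |
      cubicForm (x.1.1 * P) x.1.2 = cubicForm (x.2.1 * P) x.2.2 ∧ x.1.1 = x.2.1} ≤
      2 * #(admissiblePairs P j) := by
  have P_ne_zero : P ≠ 0 := (mem_monicIrreducibles.1 hP).2.ne_zero
  have cover : {x ∈ admissiblePairs P j ×ˢ admissiblePairs P j |
      cubicForm (x.1.1 * P) x.1.2 = cubicForm (x.2.1 * P) x.2.2 ∧ x.1.1 = x.2.1} ⊆
      (admissiblePairs P j).image (fun x ↦ (x, x)) ∪
        (admissiblePairs P j).image (fun x ↦ (x, (x.1, -x.2))) := by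
    rintro ⟨⟨a, v⟩, ⟨b, w⟩⟩ hx
    simp only [mem_filter, mem_product] at hx
    obtain ⟨⟨mem, -⟩, hvw, rfl⟩ := hx
    have a_ne_zero : a ≠ 0 := ((mem_admissiblePairs hP).1 mem).1.1.ne_zero
    have sq_eq : w ^ 2 = v ^ 2 := by
      refine mul_left_cancel₀ a_ne_zero ?_
      linear_combination -(cubicForm_mul_eq_iff P_ne_zero).1 hvw
    obtain rfl | rfl := sq_eq_sq_iff_eq_or_eq_neg.1 sq_eq
    · exact mem_union_left _ (mem_image_of_mem _ mem)
    · exact mem_union_right _ (mem_image_of_mem (fun x ↦ (x, (x.1, -x.2))) mem)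
  calc _ ≤ _ := (card_le_card cover).trans (card_union_le _ _)
    _ ≤ #(admissiblePairs P j) + #(admissiblePairs P j) := add_le_add card_image_le card_image_le
    _ = 2 * #(admissiblePairs P j) := (two_mul _).symm

open scoped Classical in
theorem card_collisions_le (h2 : (2 : F) ≠ 0) (hP : P ∈ monicIrreducibles F d) (hjd : j < d) :
    #{x ∈ admissiblePairs P j ×ˢ admissiblePairs P j |
      cubicForm (x.1.1 * P) x.1.2 = cubicForm (x.2.1 * P) x.2.2} ≤
      2 * #(admissiblePairs P j) + 4 * Nat.card F ^ (4 * j) := by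
  rw [← card_filter_add_card_filter_not (fun x ↦ x.1.1 = x.2.1), filter_filter, filter_filter]
  exact add_le_add (card_collisions_eq_le hP) (card_collisions_ne_le h2 hP hjd)

open scoped Classical in
/-- The values of `cubicForm` at `u = aP` and `v` for the admissible pairs `(a, v)`. -/
noncomputable def admissibleValues (P : F[X]) (j : ℕ) : Finset F[X] :=
  (admissiblePairs P j).image fun x ↦ cubicForm (x.1 * P) x.2

theorem card_pow_div_le_card_admissibleValues (h2 : (2 : F) ≠ 0) (hq : 5 ≤ Nat.card F)
    (hP : P ∈ monicIrreducibles F d) (hjd : 2 * j ≤ d) (hd : 2 ≤ d) :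
    (Nat.card F : ℝ) ^ (2 * j + d) / 1640 ≤ #(admissibleValues P j) := by
  classical
  have hq1 : (1 : ℝ) ≤ Nat.card F := mod_cast (by lia)
  have pairs_ge := card_pow_div_le_card_admissiblePairs h2 hq hP (by lia : j < d) hd
  have pairs_pos : (0 : ℝ) < #(admissiblePairs P j) := lt_of_lt_of_le (by positivity) pairs_ge
  have collisions := Nat.cast_le (α := ℝ).2 (card_collisions_le h2 hP (by lia : j < d))
  have cauchy := Nat.cast_le (α := ℝ).2 (card_sq_le_card_image_mul_card_collisions
    (admissiblePairs P j) fun x ↦ cubicForm (x.1 * P) x.2)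
  have pow_le : (Nat.card F : ℝ) ^ (4 * j) ≤ Nat.card F ^ (2 * j + d) :=
    pow_le_pow_right₀ hq1 (by lia)
  push_cast at collisions cauchy
  have : (#(admissiblePairs P j) : ℝ) ≤ #(admissibleValues P j) * 82 := by
    refine le_of_mul_le_mul_right ?_ pairs_pos
    calc _ = (#(admissiblePairs P j) : ℝ) ^ 2 := (sq _).symm
      _ ≤ _ := cauchy
      _ ≤ #(admissibleValues P j) * (82 * #(admissiblePairs P j)) := by
          gcongr
          · exact le_rfl
          · linarith
      _ = _ := by ring
  linarith

end Collisions

section LargePrimes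

variable {F : Type*} [Field F] {P D : F[X]} {d j m n : ℕ}

theorem card_mul_le_natDegree_of_forall_dvd (hD : D ≠ 0) (T : Finset F[X])
    (hT : ∀ P ∈ T, P.Monic ∧ Irreducible P ∧ P ∣ D) (hn : ∀ P ∈ T, n ≤ P.natDegree) :
    #T * n ≤ D.natDegree := by
  have prod_dvd : ∏ P ∈ T, P ∣ D := by
    refine prod_dvd_of_coprime (fun P hP Q hQ hPQ ↦ ?_) fun P hP ↦ (hT P hP).2.2
    obtain ⟨P_monic, P_irr, -⟩ := hT P hP
    obtain ⟨Q_monic, Q_irr, -⟩ := hT Q hQ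
    exact P_irr.coprime_iff_not_dvd.2 fun h ↦
      hPQ (eq_of_monic_of_associated P_monic Q_monic (P_irr.associated_of_dvd Q_irr h))
  calc #T * n ≤ ∑ P ∈ T, P.natDegree := card_nsmul_le_sum T _ n hn
    _ = (∏ P ∈ T, P).natDegree := (natDegree_prod_of_monic _ _ fun P hP ↦ (hT P hP).1).symm
    _ ≤ D.natDegree := natDegree_le_of_dvd prod_dvd hD

variable [Finite F]

theorem of_mem_admissibleValues (hP : P ∈ monicIrreducibles F d) (hD : D ∈ admissibleValues P j) :
    Squarefree D ∧ D.natDegree = 3 * (j + d) ∧ P ∣ D ∧ ∃ u v, D = cubicForm u v := by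
  classical
  obtain ⟨x, hx, rfl⟩ := mem_image.1 hD
  obtain ⟨⟨ha, hv⟩, squarefree, -⟩ := (mem_admissiblePairs hP).1 hx
  refine ⟨squarefree, ?_, ?_, _, _, rfl⟩
  · exact (isMonicOfDegree_cubicForm (ha.mul (mem_monicIrreducibles.1 hP).1) hv).natDegree_eq
  · exact ((dvd_mul_left P x.1).mul_right _).mul_right _

open scoped Classical in
/-- The monic irreducible polynomials of degree between `m - m / 3` and `m`. A polynomial of
degree `3 * m` has at most four divisors among them. -/
noncomputable def largePrimes (F : Type*) [Field F] [Finite F] (m : ℕ) : Finset F[X] :=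
  (Icc (m - m / 3) m).biUnion fun d ↦ monicIrreducibles F d

theorem mem_largePrimes :
    P ∈ largePrimes F m ↔
      P ∈ monicIrreducibles F P.natDegree ∧ m - m / 3 ≤ P.natDegree ∧ P.natDegree ≤ m := by
  simp only [largePrimes, mem_biUnion, mem_Icc]
  constructor
  · rintro ⟨d, hd, hP⟩
    obtain rfl := natDegree_eq_of_mem_monicIrreducibles hP
    exact ⟨hP, hd⟩
  · exact fun h ↦ ⟨_, h.2, h.1⟩

theorem one_sixth_le_sum_largePrimes (F : Type*) [Field F] [Finite F] (hm : m ≠ 0) :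
    (1 / 6 : ℝ) ≤ ∑ P ∈ largePrimes F m, ((Nat.card F : ℝ) ^ P.natDegree)⁻¹ := by
  classical
  have q_pos : (0 : ℝ) < Nat.card F := mod_cast Nat.card_pos
  have : (0 : ℝ) < m := mod_cast Nat.pos_of_ne_zero hm
  rw [largePrimes, sum_biUnion (pairwiseDisjoint_monicIrreducibles _)]
  calc (1 / 6 : ℝ) = (m : ℝ) / 3 * (1 / (2 * m)) := by field_simp; norm_num
    _ ≤ #(Icc (m - m / 3) m) * (1 / (2 * m)) := by
        gcongr
        rw [div_le_iff₀ three_pos, Nat.card_Icc]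
        exact_mod_cast (by lia : m ≤ (m + 1 - (m - m / 3)) * 3)
    _ ≤ ∑ d ∈ Icc (m - m / 3) m, ∑ P ∈ monicIrreducibles F d,
          ((Nat.card F : ℝ) ^ P.natDegree)⁻¹ := by
        rw [← nsmul_eq_mul]
        refine card_nsmul_le_sum _ _ _ fun d hd ↦ ?_
        have hdm := mem_Icc.1 hd
        have d_le_m : (d : ℝ) ≤ m := mod_cast hdm.2
        have card_ge := Nat.cast_le (α := ℝ).2
          (card_pow_le_two_mul_mul_card_monicIrreducibles F (by lia : d ≠ 0))
        push_cast at card_ge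
        rw [sum_congr rfl fun P hP ↦ by rw [natDegree_eq_of_mem_monicIrreducibles hP],
          sum_const, nsmul_eq_mul, ← div_eq_mul_inv,
          div_le_div_iff₀ (by positivity) (by positivity), one_mul]
        nlinarith [(#(monicIrreducibles F d)).cast_nonneg (α := ℝ)]

open scoped Classical in
theorem card_filter_largePrimes_le_four (hm : m ≠ 0) (D : F[X]) :
    #{P ∈ largePrimes F m | D ∈ admissibleValues P (m - P.natDegree)} ≤ 4 := by
  obtain ⟨T, hT⟩ : ∃ T : Finset F[X],
    T = {P ∈ largePrimes F m | D ∈ admissibleValues P (m - P.natDegree)} := ⟨_, rfl⟩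
  rw [← hT]
  obtain rfl | ⟨Q, hQ⟩ := T.eq_empty_or_nonempty
  · simp
  have mem_T {P : F[X]} (hP : P ∈ T) :
      P ∈ largePrimes F m ∧ D ∈ admissibleValues P (m - P.natDegree) := by
    rwa [hT, mem_filter] at hP
  have props {P : F[X]} (hP : P ∈ T) := of_mem_admissibleValues
    (mem_largePrimes.1 (mem_T hP).1).1 (mem_T hP).2
  have natDegree_D : D.natDegree = 3 * m := by
    have := (mem_largePrimes.1 (mem_T hQ).1).2.2
    rw [(props hQ).2.1]
    lia
  have card_mul_le : #T * (m - m / 3) ≤ 3 * m := natDegree_D ▸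
    card_mul_le_natDegree_of_forall_dvd (props hQ).1.ne_zero T
      (fun P hP ↦ by
        obtain ⟨P_monic, P_irr⟩ := mem_monicIrreducibles.1 (mem_largePrimes.1 (mem_T hP).1).1
        exact ⟨P_monic.monic, P_irr, (props hP).2.2.1⟩)
      fun P hP ↦ (mem_largePrimes.1 (mem_T hP).1).2.1
  by_contra! card_gt
  have := Nat.mul_le_mul_right (m - m / 3) card_gt
  lia

open scoped Classical in
/-- The squarefree values of `cubicForm`, of degree `3 * m`, that are produced by the admissible
pairs of all large primes. -/
noncomputable def largePrimeValues (F : Type*) [Field F] [Finite F] (m : ℕ) : Finset F[X] :=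
  (largePrimes F m).biUnion fun P ↦ admissibleValues P (m - P.natDegree)

theorem of_mem_largePrimeValues (hD : D ∈ largePrimeValues F m) :
    Squarefree D ∧ D.natDegree = 3 * m ∧ ∃ u v, D = cubicForm u v := by
  classical
  obtain ⟨P, hP, hD⟩ := mem_biUnion.1 hD
  obtain ⟨hP, -, hPm⟩ := mem_largePrimes.1 hP
  obtain ⟨squarefree, natDegree_eq, -, exists_eq⟩ := of_mem_admissibleValues hP hD
  exact ⟨squarefree, by rw [natDegree_eq, Nat.sub_add_cancel hPm], exists_eq⟩

theorem card_pow_div_le_card_largePrimeValues (h2 : (2 : F) ≠ 0) (hq : 5 ≤ Nat.card F)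
    (hm : 2 ≤ m) : (Nat.card F : ℝ) ^ (2 * m) / 39360 ≤ #(largePrimeValues F m) := by
  classical
  have : (0 : ℝ) < Nat.card F := mod_cast Nat.card_pos
  have values_ge (P : F[X]) (hP : P ∈ largePrimes F m) :
      (Nat.card F : ℝ) ^ (2 * m) / 1640 * ((Nat.card F : ℝ) ^ P.natDegree)⁻¹ ≤
        #(admissibleValues P (m - P.natDegree)) := by
    obtain ⟨hP, le_natDegree, natDegree_le⟩ := mem_largePrimes.1 hP
    refine le_trans (le_of_eq ?_) (card_pow_div_le_card_admissibleValues
      h2 hq hP (j := m - P.natDegree) (by lia) (by lia))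
    rw [show 2 * m = 2 * (m - P.natDegree) + P.natDegree + P.natDegree by lia,
      pow_add _ _ P.natDegree]
    field_simp
  have overlap := Nat.cast_le (α := ℝ).2 (sum_card_le_mul_card_biUnion (largePrimes F m)
    (fun P ↦ admissibleValues P (m - P.natDegree)) 4
    (card_filter_largePrimes_le_four (by lia : m ≠ 0)))
  push_cast at overlap
  have : (Nat.card F : ℝ) ^ (2 * m) / 1640 * (1 / 6) ≤ 4 * #(largePrimeValues F m) :=
    calc _ ≤ (Nat.card F : ℝ) ^ (2 * m) / 1640 *
          ∑ P ∈ largePrimes F m, ((Nat.card F : ℝ) ^ P.natDegree)⁻¹ := by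
          gcongr
          exact one_sixth_le_sum_largePrimes F (by lia : m ≠ 0)
      _ ≤ ∑ P ∈ largePrimes F m, (#(admissibleValues P (m - P.natDegree)) : ℝ) := by
          rw [mul_sum]
          exact sum_le_sum values_ge
      _ ≤ 4 * #(largePrimeValues F m) := overlap
  linarith

theorem card_largePrimeValues_le (hn : 3 * m ≤ n) :
    #(largePrimeValues F m) ≤ Nat.card {D : F[X] // Squarefree D ∧ D.natDegree ≤ n ∧
      ∃ u v : F[X], D = u * (u - v) * (u + v)} := by
  rw [← Set.ncard_coe_finset]
  refine Set.ncard_le_ncard (t := {D : F[X] | _}) (fun D hD ↦ ?_) ?_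
  · obtain ⟨squarefree, natDegree_eq, exists_eq⟩ := of_mem_largePrimeValues hD
    exact ⟨squarefree, natDegree_eq.trans_le hn, exists_eq⟩
  · refine (degreeLTFinset F (n + 1)).finite_toSet.subset fun D hD ↦ mem_degreeLTFinset.2 ?_
    exact (natDegree_lt_iff_degree_lt hD.1.ne_zero).1 (Nat.lt_succ_of_le hD.2.1)

end LargePrimes

end SquarefreeCubicForm

theorem stmt_1_general (F : Type*) [Field F] [Finite F] (h2 : (2 : F) ≠ 0) (hq : 5 ≤ Nat.card F) :
    ∃ B : ℝ, 0 < B ∧ ∃ N : ℕ, ∀ n : ℕ, N < n →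
      B * (Nat.card F : ℝ) ^ (2 * (n : ℝ) / 3) ≤
        (Nat.card {D : F[X] // Squarefree D ∧ D.natDegree ≤ n ∧
          ∃ u v : F[X], D = u * (u - v) * (u + v)} : ℝ) := by
  have one_le_q : (1 : ℝ) ≤ Nat.card F := mod_cast (by lia)
  refine ⟨1 / (39360 * (Nat.card F : ℝ) ^ 2), by positivity, 5, fun n hn ↦ ?_⟩
  have exponent_le : 2 * (n : ℝ) / 3 ≤ (2 * (n / 3) + 2 : ℕ) := by
    rw [div_le_iff₀ three_pos]
    exact_mod_cast (by lia : 2 * n ≤ (2 * (n / 3) + 2) * 3)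
  calc _ ≤ 1 / (39360 * (Nat.card F : ℝ) ^ 2) * (Nat.card F : ℝ) ^ (2 * (n / 3) + 2) := by
        rw [← Real.rpow_natCast _ (2 * (n / 3) + 2)]
        gcongr
    _ = (Nat.card F : ℝ) ^ (2 * (n / 3)) / 39360 := by rw [pow_add]; field_simp
    _ ≤ (SquarefreeCubicForm.largePrimeValues F (n / 3)).card :=
        SquarefreeCubicForm.card_pow_div_le_card_largePrimeValues h2 hq (by lia)
    _ ≤ _ := mod_cast SquarefreeCubicForm.card_largePrimeValues_le (Nat.mul_div_le n 3)

/-- For an odd prime power `q` not divisible by `3`, the number of squarefree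
polynomials `D ∈ 𝔽_q[t]` of degree at most `n` of the form `D = u(u-v)(u+v)` with
`u, v ∈ 𝔽_q[t]` is at least `B · q^{2n/3 - ε}` for all large `n`. -/
theorem stmt_1 (p e q : ℕ) (hp : p.Prime) (hodd : Odd p) (he : 0 < e) (hq : q = p ^ e)
    (h3 : ¬ (3 ∣ q))
    (Fq : Type) [Field Fq] [Fintype Fq] (hcard : Fintype.card Fq = q) :
    ∀ ε : ℝ, 0 < ε → ∃ B : ℝ, 0 < B ∧ ∃ N : ℕ, ∀ n : ℕ, N < n →
      (B * (q : ℝ) ^ ((2 * (n : ℝ) / 3) - ε) : ℝ) ≤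
        (Nat.card {D : Fq[X] // Squarefree D ∧ D.natDegree ≤ n ∧
          ∃ u v : Fq[X], D = u * (u - v) * (u + v)} : ℝ) := by
  intro ε hε
  have hp5 : 5 ≤ p := by
    have p_ne_three : p ≠ 3 := by
      rintro rfl
      exact h3 (hq ▸ dvd_pow_self 3 he.ne')
    have := hp.two_le
    obtain ⟨k, hk⟩ := hodd
    lia
  have hq5 : 5 ≤ q := hq ▸ hp5.trans (Nat.le_self_pow he.ne' p)
  have h2 : (2 : Fq) ≠ 0 := Ring.two_ne_zero fun h ↦ by
    rw [FiniteField.even_card_iff_char_two, hcard, hq] at h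
    exact Nat.not_even_iff_odd.2 hodd.pow (Nat.even_iff.2 h)
  obtain rfl : Nat.card Fq = q := Nat.card_eq_fintype_card.trans hcard
  obtain ⟨B, hB, N, count_ge⟩ := stmt_1_general Fq h2 hq5
  refine ⟨B, hB, N, fun n hn ↦ le_trans ?_ (count_ge n hn)⟩
  gcongr
  · exact_mod_cast (by lia : 1 ≤ Nat.card Fq)
  · linarith
end

section
/- Let p be an odd prime with p ≡ 2 (mod 3) and let e be a positive integer with e ≡ 0 (mod 4); set q = p^e. Then the number of pairs (x, y) ∈ 𝔽_q × 𝔽_q satisfying y² = x³ + 1 is exactly p^e − 2·p^{e/2}. -/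
/-!
For `6 ∣ q - 1`, let `ψ` and `χ` be characters of `𝔽_q` of orders `3` and `2`. Counting with
characters gives `q + J(ψ, χ) + J(ψ⁻¹, χ)` affine points on `y² = x³ + 1`. Here `χ⁻¹ = χ`, so the
two Jacobi sums are conjugate: the error term is the trace of an Eisenstein integer of norm `q`.
If `q = p ^ (2 * m)` with `p ≡ 2 (mod 3)` inert, that integer is `(-p) ^ m` times a unit. The unit
is pinned down modulo `6`: sixth roots of unity act on the points, freely away from the axes, so
the number of points is `5` modulo `6`.
-/

open Finset

section PowerFibres

lemma card_pow_eq_pow_of_isPrimitiveRoot {R : Type*} [CommRing R] [IsDomain R] {n : ℕ} [NeZero n]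
    {ζ : R} (hζ : IsPrimitiveRoot ζ n) {b : R} (hb : b ≠ 0) :
    Nat.card {x : R // x ^ n = b ^ n} = n := by
  classical
  have hroots : (Polynomial.nthRoots n (b ^ n)).toFinset.card = n := by
    rw [Multiset.toFinset_card_of_nodup (hζ.nthRoots_nodup (pow_ne_zero n hb)),
      hζ.card_nthRoots, if_pos ⟨b, rfl⟩]
  rw [Nat.subtype_card _ fun x => by
    rw [Multiset.mem_toFinset, Polynomial.mem_nthRoots (NeZero.pos n)], hroots]

lemma card_pow_eq_zero {R : Type*} [MonoidWithZero R] [NoZeroDivisors R] {n : ℕ} [NeZero n] :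
    Nat.card {x : R // x ^ n = 0} = 1 := by
  simp only [pow_eq_zero_iff (NeZero.ne n), Nat.card_unique]

open Classical in
lemma card_pow_eq_modEq {R : Type*} [CommRing R] [IsDomain R] {n : ℕ} [NeZero n]
    {ζ : R} (hζ : IsPrimitiveRoot ζ n) (a : R) :
    Nat.card {x : R // x ^ n = a} ≡ if a = 0 then 1 else 0 [MOD n] := by
  split_ifs with ha
  · rw [ha, card_pow_eq_zero]
  by_cases hpow : ∃ b, b ^ n = a
  · obtain ⟨b, rfl⟩ := hpow
    rw [card_pow_eq_pow_of_isPrimitiveRoot hζ (ne_zero_pow (NeZero.ne n) ha)]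
    exact Nat.modEq_zero_iff_dvd.2 dvd_rfl
  · have : IsEmpty {x : R // x ^ n = a} := ⟨fun x => hpow ⟨x, x.2⟩⟩
    rw [Nat.card_of_isEmpty]

lemma card_subtype_prod_eq_sum {α β : Type*} [Fintype α] [Finite β] (r : α → β → Prop) :
    Nat.card {v : α × β // r v.1 v.2} = ∑ a, Nat.card {b // r a b} := by
  rw [Nat.card_congr (Equiv.subtypeProdEquivSigmaSubtype r), Nat.card_sigma]

lemma card_pow_add_pow_eq_one_eq_sum {R : Type*} [Ring R] [Fintype R] (m n : ℕ) :
    Nat.card {v : R × R // v.1 ^ m + v.2 ^ n = 1} =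
      ∑ a : R, Nat.card {x : R // x ^ m = a} * Nat.card {y : R // y ^ n = 1 - a} := by
  classical
  rw [card_subtype_prod_eq_sum fun x y : R => x ^ m + y ^ n = 1]
  simp only [← eq_sub_iff_add_eq']
  rw [← Fintype.sum_fiberwise' (fun x : R => x ^ m) fun a => Nat.card {y : R // y ^ n = 1 - a}]
  simp only [sum_const, card_univ, smul_eq_mul, Nat.card_eq_fintype_card]

lemma card_pow_eq_apply_modEq_card_zeros {α R : Type*} [Finite α] [CommRing R] [IsDomain R]
    [Finite R] {n : ℕ} [NeZero n] {ζ : R} (hζ : IsPrimitiveRoot ζ n) (f : α → R) :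
    Nat.card {v : α × R // v.2 ^ n = f v.1} ≡ Nat.card {a // f a = 0} [MOD n] := by
  classical
  cases nonempty_fintype α
  have hzeros : Nat.card {a // f a = 0} = ∑ a, if f a = 0 then 1 else 0 := by
    rw [Nat.card_eq_fintype_card, Fintype.card_subtype, card_filter]
  rw [card_subtype_prod_eq_sum fun a y => y ^ n = f a, hzeros]
  exact Nat.ModEq.sum fun a _ => card_pow_eq_modEq hζ (f a)

end PowerFibres

section FiniteField

variable {F R : Type*} [Field F] [CommRing R]

lemma exists_isPrimitiveRoot_of_dvd_card_sub_one [Finite F] {n : ℕ} (hn : n ∣ Nat.card F - 1) :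
    ∃ ζ : F, IsPrimitiveRoot ζ n := by
  classical
  obtain ⟨g, hg⟩ := IsCyclic.exists_ofOrder_eq_natCard (α := Fˣ)
  rw [← Nat.card_units, ← hg] at hn
  obtain ⟨k, hk⟩ := hn
  exact ⟨(g ^ k : Fˣ), IsPrimitiveRoot.coe_units_iff.2 <|
    (IsPrimitiveRoot.orderOf g).pow (orderOf_pos g) (hk.trans (mul_comm n k))⟩

lemma mulChar_apply_eq_one_iff_exists_pow_eq [Finite F] (χ : MulChar F R) {a : F}
    (ha : a ≠ 0) : χ a = 1 ↔ ∃ b, b ^ orderOf χ = a := by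
  have hχ := χ.orderOf_pos
  constructor
  · obtain ⟨g, hg⟩ := IsCyclic.exists_generator (α := Fˣ)
    obtain ⟨k, hk⟩ := mem_powers_iff_mem_zpowers.2 (hg (Units.mk0 a ha))
    obtain rfl : (g : F) ^ k = a := by simpa using congrArg Units.val hk
    intro ha1
    have hpow : χ ^ k = 1 := by
      rw [MulChar.eq_iff hg, MulChar.pow_apply_coe, MulChar.one_apply_coe, ← map_pow, ha1]
    obtain ⟨j, rfl⟩ := orderOf_dvd_of_pow_eq_one hpow
    exact ⟨(g : F) ^ j, by rw [← pow_mul, mul_comm]⟩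
  · rintro ⟨b, rfl⟩
    have hb : b ≠ 0 := ne_zero_pow hχ.ne' ha
    rw [map_pow, ← MulChar.pow_apply' χ hχ.ne', pow_orderOf_eq_one, MulChar.one_apply hb.isUnit]

variable [IsDomain R]

lemma card_pow_orderOf_eq_sum_mulChar [Finite F] (χ : MulChar F R) (a : F) :
    (Nat.card {x : F // x ^ orderOf χ = a} : R) = 1 + ∑ i ∈ Ico 1 (orderOf χ), (χ ^ i) a := by
  have hχ := χ.orderOf_pos
  have : NeZero (orderOf χ) := ⟨hχ.ne'⟩
  rcases eq_or_ne a 0 with rfl | ha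
  · simp only [card_pow_eq_zero, MulChar.map_zero, sum_const_zero, Nat.cast_one, add_zero]
  have hgeom : 1 + ∑ i ∈ Ico 1 (orderOf χ), (χ ^ i) a = ∑ i ∈ range (orderOf χ), χ a ^ i := by
    rw [range_eq_Ico, sum_eq_sum_Ico_succ_bot hχ, pow_zero, zero_add]
    exact congrArg (1 + ·) (sum_congr rfl fun i hi =>
      MulChar.pow_apply' χ (Nat.one_le_iff_ne_zero.1 (mem_Ico.1 hi).1) a)
  rw [hgeom]
  by_cases ha1 : χ a = 1
  · obtain ⟨b, rfl⟩ := (mulChar_apply_eq_one_iff_exists_pow_eq χ ha).1 ha1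
    have hdvd : orderOf χ ∣ Nat.card F - 1 := by
      cases nonempty_fintype F
      exact Nat.card_eq_fintype_card (α := F) ▸ χ.orderOf_dvd_card_sub_one
    obtain ⟨ζ, hζ⟩ := exists_isPrimitiveRoot_of_dvd_card_sub_one hdvd
    rw [card_pow_eq_pow_of_isPrimitiveRoot hζ (ne_zero_pow hχ.ne' ha)]
    simp only [ha1, one_pow, sum_const, card_range, nsmul_eq_mul, mul_one]
  · have : IsEmpty {x : F // x ^ orderOf χ = a} :=
      ⟨fun x => ha1 ((mulChar_apply_eq_one_iff_exists_pow_eq χ ha).2 ⟨x, x.2⟩)⟩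
    have hroot : χ a ^ orderOf χ = 1 := by
      rw [← MulChar.pow_apply' χ hχ.ne', pow_orderOf_eq_one, MulChar.one_apply ha.isUnit]
    rw [Nat.card_of_isEmpty, Nat.cast_zero, eq_comm]
    refine (mul_eq_zero.1 ?_).resolve_left (sub_ne_zero.2 ha1)
    rw [mul_geom_sum, hroot, sub_self]

lemma sum_mulChar_pow_eq_zero [Fintype F] (χ : MulChar F R) {i : ℕ} (hi : i ∈ Ico 1 (orderOf χ)) :
    ∑ a, (χ ^ i) a = 0 := by
  obtain ⟨hpos, hlt⟩ := mem_Ico.1 hi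
  exact MulChar.sum_eq_zero_of_ne_one
    (pow_ne_one_of_lt_orderOf (Nat.one_le_iff_ne_zero.1 hpos) hlt)

theorem card_pow_add_pow_eq_one_eq_sum_jacobiSum [Fintype F] (χ ψ : MulChar F R) :
    (Nat.card {v : F × F // v.1 ^ orderOf χ + v.2 ^ orderOf ψ = 1} : R) =
      Fintype.card F +
        ∑ i ∈ Ico 1 (orderOf χ), ∑ j ∈ Ico 1 (orderOf ψ), jacobiSum (χ ^ i) (ψ ^ j) := by
  have hleft : ∑ a : F, ∑ i ∈ Ico 1 (orderOf χ), (χ ^ i) a = 0 := by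
    rw [sum_comm]
    exact sum_eq_zero fun i hi => sum_mulChar_pow_eq_zero χ hi
  have hright : ∑ a : F, ∑ j ∈ Ico 1 (orderOf ψ), (ψ ^ j) (1 - a) = 0 := by
    rw [sum_comm]
    exact sum_eq_zero fun j hj =>
      ((Equiv.subLeft (1 : F)).sum_comp _).trans (sum_mulChar_pow_eq_zero ψ hj)
  have hcross : ∑ a : F, (∑ i ∈ Ico 1 (orderOf χ), (χ ^ i) a) *
      ∑ j ∈ Ico 1 (orderOf ψ), (ψ ^ j) (1 - a) =
      ∑ i ∈ Ico 1 (orderOf χ), ∑ j ∈ Ico 1 (orderOf ψ), jacobiSum (χ ^ i) (ψ ^ j) := by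
    simp only [jacobiSum, sum_mul_sum]
    rw [sum_comm]
    exact sum_congr rfl fun i _ => sum_comm
  rw [card_pow_add_pow_eq_one_eq_sum]
  push_cast
  simp only [card_pow_orderOf_eq_sum_mulChar, add_mul, mul_add, one_mul, mul_one,
    sum_add_distrib, hleft, hright, hcross, sum_const, card_univ, nsmul_eq_mul, add_zero, zero_add]

end FiniteField

open ComplexConjugate in
lemma jacobiSum_inv_inv_eq_conj {R : Type*} [CommRing R] [Fintype R] (ψ χ : MulChar R ℂ) :
    jacobiSum ψ⁻¹ χ⁻¹ = conj (jacobiSum ψ χ) := by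
  rw [← MulChar.star_eq_inv, ← MulChar.star_eq_inv]
  exact jacobiSum_ringHomComp ψ χ (starRingEnd ℂ)

section QuadraticIntegers

lemma exists_eq_add_mul_of_mem_adjoin {R A : Type*} [CommRing R] [CommRing A] [Algebra R A]
    {μ : A} {b c : R} (hμ : μ ^ 2 = algebraMap R A b + algebraMap R A c * μ) {z : A}
    (hz : z ∈ Algebra.adjoin R {μ}) :
    ∃ u v : R, z = algebraMap R A u + algebraMap R A v * μ := by
  induction hz using Algebra.adjoin_induction with
  | mem x hx => exact ⟨0, 1, by simp [Set.mem_singleton_iff.1 hx]⟩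
  | algebraMap r => exact ⟨r, 0, by simp⟩
  | add x y _ _ hx hy =>
    obtain ⟨u, v, rfl⟩ := hx
    obtain ⟨u', v', rfl⟩ := hy
    exact ⟨u + u', v + v', by simp only [map_add]; ring⟩
  | mul x y _ _ hx hy =>
    obtain ⟨u, v, rfl⟩ := hx
    obtain ⟨u', v', rfl⟩ := hy
    refine ⟨u * u' + v * v' * b, u * v' + v * u' + v * v' * c, ?_⟩
    simp only [map_add, map_mul]
    linear_combination algebraMap R A v * algebraMap R A v' * hμ

open ComplexConjugate in
lemma exists_trace_norm_of_mem_adjoin {μ z : ℂ} (hμ : IsPrimitiveRoot μ 6)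
    (hz : z ∈ Algebra.adjoin ℤ {μ}) :
    ∃ u v : ℤ, z + conj z = (2 * u + v : ℤ) ∧ z * conj z = (u ^ 2 + u * v + v ^ 2 : ℤ) := by
  have hroot : μ ^ 2 - μ + 1 = 0 := by
    simpa [Polynomial.cyclotomic_six] using hμ.isRoot_cyclotomic (by norm_num)
  have hnorm : μ * conj μ = 1 := by
    rw [Complex.mul_conj, Complex.normSq_eq_norm_sq,
      Complex.norm_eq_one_of_pow_eq_one hμ.pow_eq_one (by norm_num)]
    norm_num
  have htrace : μ + conj μ = 1 := by
    linear_combination conj μ * hroot + (1 - μ) * hnorm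
  obtain ⟨u, v, rfl⟩ := exists_eq_add_mul_of_mem_adjoin (b := -1) (c := 1)
    (by simp only [map_neg, map_one]; linear_combination hroot) hz
  refine ⟨u, v, ?_, ?_⟩
  · simp only [algebraMap_int_eq, eq_intCast, map_add, map_mul, map_intCast]
    push_cast
    linear_combination (v : ℂ) * htrace
  · simp only [algebraMap_int_eq, eq_intCast, map_add, map_mul, map_intCast]
    push_cast
    linear_combination (u * v : ℂ) * htrace + (v : ℂ) ^ 2 * hnorm

end QuadraticIntegers

section InertPrimes

lemma pow_left_injective_of_coprime_card_units {G : Type*} [GroupWithZero G] {n : ℕ} (hn : n ≠ 0)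
    (hcop : (Nat.card Gˣ).Coprime n) : Function.Injective fun x : G => x ^ n := by
  intro x y hxy
  have hxy : x ^ n = y ^ n := hxy
  rcases eq_or_ne x 0 with rfl | hx
  · rw [zero_pow hn] at hxy
    exact (eq_zero_of_pow_eq_zero hxy.symm).symm
  have hy : y ≠ 0 := by
    rintro rfl
    exact hx (eq_zero_of_pow_eq_zero (hxy.trans (zero_pow hn)))
  have hunits : Units.mk0 x hx ^ n = Units.mk0 y hy ^ n := Units.ext hxy
  exact congrArg Units.val (hcop.pow_left_bijective.injective hunits)

variable {p : ℕ}

lemma prime_dvd_and_dvd_of_dvd_sq_add_mul_add_sq (hp : p.Prime) (h3 : p % 3 = 2) {u v : ℤ}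
    (h : (p : ℤ) ∣ u ^ 2 + u * v + v ^ 2) : (p : ℤ) ∣ u ∧ (p : ℤ) ∣ v := by
  have : Fact p.Prime := ⟨hp⟩
  have hthree : (3 : ZMod p) ≠ 0 := by
    rw [← Nat.cast_ofNat, Ne, ZMod.natCast_eq_zero_iff,
      Nat.prime_dvd_prime_iff_eq hp Nat.prime_three]
    omega
  have hcop : (Nat.card (ZMod p)ˣ).Coprime 3 := by
    rw [Nat.card_eq_fintype_card, ZMod.card_units, Nat.coprime_comm,
      Nat.prime_three.coprime_iff_not_dvd]
    have := hp.two_le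
    omega
  simp only [← ZMod.intCast_zmod_eq_zero_iff_dvd] at h ⊢
  push_cast at h
  have huv : (u : ZMod p) = v :=
    pow_left_injective_of_coprime_card_units three_ne_zero hcop <| by
      linear_combination ((u : ZMod p) - v) * h
  have hv : (v : ZMod p) = 0 := by
    have : (3 : ZMod p) * (v : ZMod p) ^ 2 = 0 := by
      rw [huv] at h
      linear_combination h
    exact eq_zero_of_pow_eq_zero ((mul_eq_zero.1 this).resolve_left hthree)
  exact ⟨huv.trans hv, hv⟩

lemma prime_pow_dvd_and_dvd_of_dvd_sq_add_mul_add_sq (hp : p.Prime) (h3 : p % 3 = 2) (m : ℕ)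
    {u v : ℤ} (h : (p : ℤ) ^ (2 * m) ∣ u ^ 2 + u * v + v ^ 2) :
    (p : ℤ) ^ m ∣ u ∧ (p : ℤ) ^ m ∣ v := by
  induction m generalizing u v with
  | zero => simp only [pow_zero, one_dvd, and_self]
  | succ m ih =>
    obtain ⟨⟨a, rfl⟩, ⟨b, rfl⟩⟩ := prime_dvd_and_dvd_of_dvd_sq_add_mul_add_sq hp h3
      ((dvd_pow_self _ (by omega)).trans h)
    have hab : (p : ℤ) ^ 2 * (p : ℤ) ^ (2 * m) ∣ (p : ℤ) ^ 2 * (a ^ 2 + a * b + b ^ 2) := by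
      convert h using 1 <;> ring
    have hp0 : (p : ℤ) ^ 2 ≠ 0 := pow_ne_zero 2 (Nat.cast_ne_zero.2 hp.ne_zero)
    obtain ⟨ha, hb⟩ := ih ((mul_dvd_mul_iff_left hp0).1 hab)
    rw [pow_succ']
    exact ⟨mul_dvd_mul_left _ ha, mul_dvd_mul_left _ hb⟩

-- Of the six units of the Eisenstein integers only `-1` has trace congruent to `4` modulo `6`.
lemma two_mul_add_eq_neg_two {a b : ℤ} (hnorm : a ^ 2 + a * b + b ^ 2 = 1)
    (htrace : 2 * a + b ≡ 4 [ZMOD 6]) : 2 * a + b = -2 := by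
  have hsq : (2 * a + b) ^ 2 ≤ 2 ^ 2 := by linarith [sq_nonneg b]
  obtain ⟨hlower, hupper⟩ := abs_le_of_sq_le_sq' hsq zero_le_two
  rw [Int.ModEq] at htrace
  omega

lemma two_mul_add_eq_neg_two_mul_neg_pow (hp : p.Prime) (hodd : Odd p) (h3 : p % 3 = 2) {m : ℕ}
    {u v : ℤ} (hnorm : u ^ 2 + u * v + v ^ 2 = (p : ℤ) ^ (2 * m))
    (htrace : 2 * u + v ≡ 4 [ZMOD 6]) : 2 * u + v = -2 * (-p : ℤ) ^ m := by
  have hsign : (-p : ℤ) ^ m ∣ p ^ m := pow_dvd_pow_of_dvd (neg_dvd.2 dvd_rfl) m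
  obtain ⟨hu, hv⟩ := prime_pow_dvd_and_dvd_of_dvd_sq_add_mul_add_sq hp h3 m hnorm.symm.dvd
  obtain ⟨a, rfl⟩ := hsign.trans hu
  obtain ⟨b, rfl⟩ := hsign.trans hv
  have hone : (-p : ℤ) ^ m ≡ 1 [ZMOD 6] := by
    have hp6 : (-p : ℤ) ≡ 1 [ZMOD 6] := by
      obtain ⟨k, rfl⟩ := hodd
      rw [Int.ModEq]
      omega
    simpa only [one_pow] using hp6.pow m
  have hp0 : ((-p : ℤ) ^ m) ^ 2 ≠ 0 :=
    pow_ne_zero 2 (pow_ne_zero m (neg_ne_zero.2 (Nat.cast_ne_zero.2 hp.ne_zero)))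
  have hunit : a ^ 2 + a * b + b ^ 2 = 1 := mul_left_cancel₀ hp0 <| by
    have hsq : ((-p : ℤ) ^ m) ^ 2 = (p : ℤ) ^ (2 * m) := by
      rw [← pow_mul, mul_comm, (even_two_mul m).neg_pow]
    linear_combination hnorm - hsq
  have htrace_unit : 2 * a + b ≡ 4 [ZMOD 6] := by
    calc 2 * a + b = 1 * (2 * a + b) := (one_mul _).symm
      _ ≡ (-p : ℤ) ^ m * (2 * a + b) [ZMOD 6] := hone.symm.mul_right _
      _ = 2 * ((-p : ℤ) ^ m * a) + (-p : ℤ) ^ m * b := by ring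
      _ ≡ 4 [ZMOD 6] := htrace
  linear_combination (-p : ℤ) ^ m * two_mul_add_eq_neg_two hunit htrace_unit

end InertPrimes

section Curve

variable {F : Type*} [Field F]

lemma card_curve_eq_card_add_jacobiSum [Fintype F] {ψ χ : MulChar F ℂ} (hψ : orderOf ψ = 3)
    (hχ : orderOf χ = 2) :
    (Nat.card {v : F × F // v.2 ^ 2 = v.1 ^ 3 + 1} : ℂ) =
      Fintype.card F + (jacobiSum ψ χ + jacobiSum ψ⁻¹ χ⁻¹) := by
  have hψ_inv : ψ ^ 2 = ψ⁻¹ := by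
    rw [eq_inv_iff_mul_eq_one, ← pow_succ]
    simpa only [hψ] using pow_orderOf_eq_one ψ
  have hχ_inv : χ⁻¹ = χ := by
    rw [inv_eq_iff_mul_eq_one, ← sq]
    simpa only [hχ] using pow_orderOf_eq_one χ
  have hequiv : {v : F × F // v.2 ^ 2 = v.1 ^ 3 + 1} ≃
      {v : F × F // v.1 ^ orderOf ψ + v.2 ^ orderOf χ = 1} :=
    ((Equiv.neg F).prodCongr (Equiv.refl F)).subtypeEquiv fun v => by
      simp only [hψ, hχ, Equiv.prodCongr_apply, Prod.map, Equiv.neg_apply, Equiv.refl_apply,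
        (Nat.odd_iff.2 rfl : Odd 3).neg_pow, neg_add_eq_iff_eq_add]
  rw [Nat.card_congr hequiv, card_pow_add_pow_eq_one_eq_sum_jacobiSum, hψ, hχ]
  simp [sum_Ico_succ_top, hψ_inv, hχ_inv]

theorem exists_norm_eq_card_and_card_curve_eq_card_add_trace [Finite F]
    (h6 : 6 ∣ Nat.card F - 1) :
    ∃ u v : ℤ, u ^ 2 + u * v + v ^ 2 = Nat.card F ∧
      (Nat.card {v : F × F // v.2 ^ 2 = v.1 ^ 3 + 1} : ℤ) = Nat.card F + (2 * u + v) := by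
  cases nonempty_fintype F
  rw [Nat.card_eq_fintype_card] at h6
  rw [Nat.card_eq_fintype_card (α := F)]
  have hμ : IsPrimitiveRoot _ 6 := Complex.isPrimitiveRoot_exp 6 (by norm_num)
  obtain ⟨ψ, hψ⟩ := MulChar.exists_mulChar_orderOf F ((by norm_num : 3 ∣ 6).trans h6)
    (hμ.pow (by norm_num) (by norm_num : 6 = 2 * 3))
  obtain ⟨χ, hχ⟩ := MulChar.exists_mulChar_orderOf F ((by norm_num : 2 ∣ 6).trans h6)
    (hμ.pow (by norm_num) (by norm_num : 6 = 3 * 2))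
  have hψχ : ψ * χ ≠ 1 := fun h => by
    rw [mul_eq_one_iff_eq_inv] at h
    rw [h, orderOf_inv, hχ] at hψ
    norm_num at hψ
  have hmem := jacobiSum_mem_algebraAdjoin_of_pow_eq_one
    (orderOf_dvd_iff_pow_eq_one.1 (hψ.dvd.trans (by norm_num : 3 ∣ 6)))
    (orderOf_dvd_iff_pow_eq_one.1 (hχ.dvd.trans (by norm_num : 2 ∣ 6))) hμ
  have hnorm := jacobiSum_mul_jacobiSum_inv (F' := ℂ)
    (by rw [ringChar.eq_zero]; exact (CharP.ringChar_ne_zero_of_finite F).symm)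
    (fun h => by simp [h] at hψ) (fun h => by simp [h] at hχ) hψχ
  have hcard := card_curve_eq_card_add_jacobiSum hψ hχ
  obtain ⟨u, v, htrace_eq, hnorm_eq⟩ := exists_trace_norm_of_mem_adjoin hμ hmem
  rw [jacobiSum_inv_inv_eq_conj, hnorm_eq] at hnorm
  rw [jacobiSum_inv_inv_eq_conj, htrace_eq] at hcard
  exact ⟨u, v, by exact_mod_cast hnorm, by exact_mod_cast hcard⟩

lemma card_curve_modEq_five [Finite F] (h6 : 6 ∣ Nat.card F - 1) :
    Nat.card {v : F × F // v.2 ^ 2 = v.1 ^ 3 + 1} ≡ 5 [MOD 6] := by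
  obtain ⟨ζ, hζ⟩ := exists_isPrimitiveRoot_of_dvd_card_sub_one h6
  have hζ3 := hζ.pow (by norm_num) (by norm_num : 6 = 2 * 3)
  have hζ2 := hζ.pow (by norm_num) (by norm_num : 6 = 3 * 2)
  have htwo : Nat.card {v : F × F // v.2 ^ 2 = v.1 ^ 3 + 1} ≡ 3 [MOD 2] := by
    have hzeros : Nat.card {x : F // x ^ 3 + 1 = 0} = 3 := by
      simpa [(Nat.odd_iff.2 rfl : Odd 3).neg_pow, ← eq_neg_iff_add_eq_zero] using
        card_pow_eq_pow_of_isPrimitiveRoot hζ3 (neg_ne_zero.2 one_ne_zero)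
    calc Nat.card {v : F × F // v.2 ^ 2 = v.1 ^ 3 + 1}
      _ ≡ Nat.card {x : F // x ^ 3 + 1 = 0} [MOD 2] :=
        card_pow_eq_apply_modEq_card_zeros hζ2 fun x : F => x ^ 3 + 1
      _ = 3 := hzeros
  have hthree : Nat.card {v : F × F // v.2 ^ 2 = v.1 ^ 3 + 1} ≡ 2 [MOD 3] := by
    have hzeros : Nat.card {y : F // y ^ 2 - 1 = 0} = 2 := by
      simpa [sub_eq_zero] using card_pow_eq_pow_of_isPrimitiveRoot hζ2 one_ne_zero
    have hswap : {v : F × F // v.2 ^ 2 = v.1 ^ 3 + 1} ≃ {v : F × F // v.2 ^ 3 = v.1 ^ 2 - 1} :=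
      (Equiv.prodComm F F).subtypeEquiv fun v => by
        rw [eq_comm, ← eq_sub_iff_add_eq]
        rfl
    calc Nat.card {v : F × F // v.2 ^ 2 = v.1 ^ 3 + 1}
      _ = Nat.card {v : F × F // v.2 ^ 3 = v.1 ^ 2 - 1} := Nat.card_congr hswap
      _ ≡ Nat.card {y : F // y ^ 2 - 1 = 0} [MOD 3] :=
        card_pow_eq_apply_modEq_card_zeros hζ3 fun y : F => y ^ 2 - 1
      _ = 2 := hzeros
  rw [Nat.ModEq] at htwo hthree ⊢
  omega

end Curve

theorem stmt_3_general {p m : ℕ} {F : Type*} [Field F] (hp : p.Prime) (hodd : Odd p)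
    (h3 : p % 3 = 2) (hF : Nat.card F = p ^ (2 * m)) :
    (Nat.card {v : F × F // v.2 ^ 2 = v.1 ^ 3 + 1} : ℤ) =
      (p : ℤ) ^ (2 * m) - 2 * (-p : ℤ) ^ m := by
  have : Finite F := Nat.finite_of_card_ne_zero (hF ▸ pow_ne_zero _ hp.ne_zero)
  have hq : p ^ (2 * m) ≡ 1 [MOD 6] := by
    have hsq : p ^ 2 ≡ 1 [MOD 6] := by
      have hp6 : p ≡ 5 [MOD 6] := by
        obtain ⟨k, rfl⟩ := hodd
        rw [Nat.ModEq]
        omega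
      exact hp6.pow 2
    simpa only [pow_mul, one_pow] using hsq.pow m
  have h6 : 6 ∣ Nat.card F - 1 := by
    rw [hF]
    exact (Nat.modEq_iff_dvd' (Nat.one_le_pow _ _ hp.pos)).1 hq.symm
  obtain ⟨u, v, hnorm, hcard⟩ := exists_norm_eq_card_and_card_curve_eq_card_add_trace h6
  have hpoints := Int.natCast_modEq_iff.2 (card_curve_modEq_five h6)
  have htrace : 2 * u + v ≡ 4 [ZMOD 6] := by
    rw [hcard, hF] at hpoints
    exact Int.ModEq.add_left_cancel (Int.natCast_modEq_iff.2 hq) hpoints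
  rw [hF, Nat.cast_pow] at hnorm hcard
  rw [hcard, two_mul_add_eq_neg_two_mul_neg_pow hp hodd h3 hnorm htrace]
  ring

/-- For an odd prime `p ≡ 2 (mod 3)` and `e ≡ 0 (mod 4)`, `e > 0`, the affine curve
`y² = x³ + 1` has exactly `p^e - 2·p^(e/2)` points over the field with `p^e` elements. -/
theorem stmt_3 (p e : ℕ) [Fact p.Prime] (hodd : Odd p) (h3 : p % 3 = 2)
    (he : 0 < e) (he4 : e % 4 = 0) :
    (Nat.card {v : GaloisField p e × GaloisField p e // v.2 ^ 2 = v.1 ^ 3 + 1} : ℤ) =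
      (p : ℤ) ^ e - 2 * (p : ℤ) ^ (e / 2) := by
  have hhalf : e = 2 * (e / 2) := by omega
  have heven : Even (e / 2) := Nat.even_iff.2 (by omega)
  have hcard : Nat.card (GaloisField p e) = p ^ (2 * (e / 2)) := by
    rw [← hhalf, GaloisField.card p e he.ne']
  rw [stmt_3_general Fact.out hodd h3 hcard, ← hhalf, heven.neg_pow]
end
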